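/- arXiv:1812.04372 — 4 statements merged into one kernel-verified Lean document; each statement's English description precedes it below -/
import Mathlib

section
/- Let 𝔽 be a finite field and let K be a global function field over 𝔽, i.e., K is a field equipped with an 𝔽-algebra structure making K a finite-degree field extension of the rational function field 𝔽(T). Let R be a finitely generated subring of K whose field of fractions is K (every element of K can be written as r/s with r, s ∈ R, s ≠ 0). Then R has a universal definition in K: there exist n ∈ ℕ and a polynomial F ∈ K[X, Y₁, …, Yₙ] such that R = { x ∈ K : for all y₁, …, yₙ ∈ K, F(x, y₁, …, yₙ) ≠ 0 }. -/
/-!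
It suffices to show that the complement of `R` is Diophantine: systems of equations reduce to single
equations through the form `Fᵖ - t Gᵖ`, which has no nontrivial zero if `t` is not a `p`-th power.

Let `K` be finite separable over `𝔽_p(t)` and let `A` be the integral closure of `𝔽_p[t]`. Elements
of the trace dual of `A` have trace with zero residue at infinity, and so do the differences
`f - C(f)`, where `C` is the Cartier operator `∑ σᵢᵖ tⁱ ↦ σ_{p-1}`. Finitely many elements of the
trace dual, translated by these differences, form a Diophantine set `D` containing the trace dual.
If the trace of `e` has nonzero residue, then elements congruent to `e` modulo `D` have a common
pole at a prime of `A`, so a suitable rational expression in their inverses vanishes at a pole of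
`e`. Conversely, if `A` has a unit of infinite order and `v` is the only pole of `e`, such
expressions give every element with enough zeros at `v`. Therefore `x ∉ A` if and only if a fixed
power of `x⁻¹` is such an expression for some `e`, where `e` need only range over a Diophantine set.

With respect to `tᵖ + t⁻¹` instead of `t`, the element `t` becomes a unit of infinite order, and
integrality over `𝔽_p[t]` is integrality over `𝔽_p[tᵖ + t⁻¹]` and at the finitely many zeros of `t`.
Choosing `t` with `A` the integral closure of `R`, the ring `R` contains a nonzero ideal of `A`, so
that membership in `R` is a condition on finitely many residue classes.
-/

namespace UniversalDefinition

section Diophantine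

open MvPolynomial

variable {R : Type*} [CommRing R] {ι κ : Type}

/-- A polynomial function on the points of affine space over `R`. -/
def IsPolynomialFun (g : (ι → R) → R) : Prop :=
  ∃ q : MvPolynomial ι R, ∀ x, g x = eval x q

/-- A Diophantine predicate: the projection of the zero set of a finite system of polynomial
equations. Systems, rather than single equations, make conjunction unproblematic; over the fields
of interest they reduce to one equation by `exists_eval_eq_zero_iff_forall`. -/
def IsDiophantine (P : (ι → R) → Prop) : Prop :=
  ∃ (μ : Type) (_ : Finite μ) (S : Finset (MvPolynomial (ι ⊕ μ) R)),
    ∀ x, P x ↔ ∃ y : μ → R, ∀ F ∈ S, eval (Sum.elim x y) F = 0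

/-- A Diophantine subset of `R`. -/
def IsDiophantineSet (A : Set R) : Prop :=
  IsDiophantine fun x : Unit → R => x () ∈ A

namespace IsPolynomialFun

variable {f g : (ι → R) → R}

lemma coord (i : ι) : IsPolynomialFun fun x : ι → R => x i :=
  ⟨X i, fun _ => (eval_X i).symm⟩

lemma const (c : R) : IsPolynomialFun fun _ : ι → R => c :=
  ⟨C c, fun _ => (eval_C c).symm⟩

lemma add (hf : IsPolynomialFun f) (hg : IsPolynomialFun g) :
    IsPolynomialFun fun x => f x + g x := by
  obtain ⟨a, ha⟩ := hf
  obtain ⟨b, hb⟩ := hg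
  exact ⟨a + b, fun x => by simp only [ha, hb, map_add]⟩

lemma sub (hf : IsPolynomialFun f) (hg : IsPolynomialFun g) :
    IsPolynomialFun fun x => f x - g x := by
  obtain ⟨a, ha⟩ := hf
  obtain ⟨b, hb⟩ := hg
  exact ⟨a - b, fun x => by simp only [ha, hb, map_sub]⟩

lemma mul (hf : IsPolynomialFun f) (hg : IsPolynomialFun g) :
    IsPolynomialFun fun x => f x * g x := by
  obtain ⟨a, ha⟩ := hf
  obtain ⟨b, hb⟩ := hg
  exact ⟨a * b, fun x => by simp only [ha, hb, map_mul]⟩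

lemma pow (hf : IsPolynomialFun f) (n : ℕ) : IsPolynomialFun fun x => f x ^ n := by
  obtain ⟨a, ha⟩ := hf
  exact ⟨a ^ n, fun x => by simp only [ha, map_pow]⟩

lemma sum {α : Type*} (s : Finset α) {f : α → (ι → R) → R} (hf : ∀ i, IsPolynomialFun (f i)) :
    IsPolynomialFun fun x => ∑ i ∈ s, f i x := by
  choose a ha using hf
  exact ⟨∑ i ∈ s, a i, fun x => by simp only [ha, map_sum]⟩

end IsPolynomialFun

namespace IsDiophantine

variable {P Q : (ι → R) → Prop}

lemma of_iff (hP : IsDiophantine P) (h : ∀ x, Q x ↔ P x) : IsDiophantine Q := by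
  rwa [funext fun x => propext (h x)]

lemma eq {f g : (ι → R) → R} (hf : IsPolynomialFun f) (hg : IsPolynomialFun g) :
    IsDiophantine fun x => f x = g x := by
  obtain ⟨q, hq⟩ := hf.sub hg
  refine ⟨Empty, inferInstance, {rename Sum.inl q}, fun x => ?_⟩
  simp [eval_rename, ← hq, sub_eq_zero]

lemma false [Nontrivial R] : IsDiophantine fun _ : ι → R => False :=
  (eq (.const (1 : R)) (.const 0)).of_iff fun _ => by simp

lemma true : IsDiophantine fun _ : ι → R => True :=
  (eq (.const (0 : R)) (.const 0)).of_iff fun _ => by simp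

lemma comp {P : (κ → R) → Prop} (hP : IsDiophantine P) {g : κ → (ι → R) → R}
    (hg : ∀ j, IsPolynomialFun (g j)) : IsDiophantine fun x => P fun j => g j x := by
  classical
  obtain ⟨μ, hμ, S, hS⟩ := hP
  choose q hq using hg
  let φ : κ ⊕ μ → MvPolynomial (ι ⊕ μ) R := Sum.elim (rename Sum.inl ∘ q) (X ∘ Sum.inr)
  have eval_bind (x : ι → R) (y : μ → R) (F : MvPolynomial (κ ⊕ μ) R) :
      eval (Sum.elim x y) (bind₁ φ F) = eval (Sum.elim (fun j => g j x) y) F := by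
    rw [eval, eval₂Hom_bind₁]
    congr 2
    funext i
    rcases i with i | i
    · exact (eval_rename _ _ _).trans (hq i x).symm
    · exact eval_X _
  refine ⟨μ, hμ, S.image (bind₁ φ), fun x => (hS _).trans ?_⟩
  simp only [Finset.forall_mem_image, eval_bind]

lemma mem {A : Set R} (hA : IsDiophantineSet A) {g : (ι → R) → R} (hg : IsPolynomialFun g) :
    IsDiophantine fun x => g x ∈ A :=
  comp (κ := Unit) hA (g := fun _ => g) fun _ => hg

lemma exists_fun {ν : Type} [Finite ν] {P : (ι → R) → (ν → R) → Prop}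
    (h : IsDiophantine fun z : ι ⊕ ν → R => P (z ∘ Sum.inl) (z ∘ Sum.inr)) :
    IsDiophantine fun x => ∃ y, P x y := by
  classical
  obtain ⟨μ, hμ, S, hS⟩ := h
  refine ⟨ν ⊕ μ, inferInstance, S.image (rename (Equiv.sumAssoc ι ν μ)), fun x => ?_⟩
  have assoc (y : ν → R) (z : μ → R) :
      Sum.elim x (Sum.elim y z) ∘ Equiv.sumAssoc ι ν μ = Sum.elim (Sum.elim x y) z := by
    funext i
    rcases i with (i | i) | i <;> rfl
  have hP (y : ν → R) : P x y ↔ ∃ z, ∀ F ∈ S, eval (Sum.elim (Sum.elim x y) z) F = 0 :=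
    hS (Sum.elim x y)
  simp only [hP, Finset.forall_mem_image, eval_rename]
  constructor
  · rintro ⟨y, z, hz⟩
    exact ⟨Sum.elim y z, by rwa [assoc]⟩
  · rintro ⟨w, hw⟩
    refine ⟨w ∘ Sum.inl, w ∘ Sum.inr, ?_⟩
    rwa [← assoc, Sum.elim_comp_inl_inr]

lemma exists_elem {P : (ι → R) → R → Prop}
    (h : IsDiophantine fun z : ι ⊕ Unit → R => P (z ∘ Sum.inl) (z (Sum.inr ()))) :
    IsDiophantine fun x => ∃ y, P x y :=
  (exists_fun (P := fun x y => P x (y ())) h).of_iff fun _ =>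
    ⟨fun ⟨y, hy⟩ => ⟨fun _ => y, hy⟩, fun ⟨y, hy⟩ => ⟨y (), hy⟩⟩

lemma exists_common_witnesses (hP : IsDiophantine P) (hQ : IsDiophantine Q) :
    ∃ (μ : Type) (_ : Finite μ) (S T : Finset (MvPolynomial (ι ⊕ μ) R)),
      (∀ x, P x ↔ ∃ y, ∀ F ∈ S, eval (Sum.elim x y) F = 0) ∧
      (∀ x, Q x ↔ ∃ y, ∀ F ∈ T, eval (Sum.elim x y) F = 0) ∧
      ∀ x, P x ∧ Q x ↔
        ∃ y, (∀ F ∈ S, eval (Sum.elim x y) F = 0) ∧ ∀ F ∈ T, eval (Sum.elim x y) F = 0 := by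
  classical
  obtain ⟨μ, hμ, S, hS⟩ := hP
  obtain ⟨ν, hν, T, hT⟩ := hQ
  refine ⟨μ ⊕ ν, inferInstance, S.image (rename (Sum.map id Sum.inl)),
    T.image (rename (Sum.map id Sum.inr)), ?_⟩
  simp only [hS, hT, Finset.forall_mem_image, eval_rename, Sum.elim_comp_map, Function.comp_id]
  refine ⟨fun x => ⟨?_, ?_⟩, fun x => ⟨?_, ?_⟩, fun x => ⟨?_, ?_⟩⟩
  · exact fun ⟨y, hy⟩ => ⟨Sum.elim y 0, by simpa using hy⟩
  · exact fun ⟨y, hy⟩ => ⟨_, hy⟩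
  · exact fun ⟨z, hz⟩ => ⟨Sum.elim 0 z, by simpa using hz⟩
  · exact fun ⟨z, hz⟩ => ⟨_, hz⟩
  · exact fun ⟨⟨y, hy⟩, z, hz⟩ => ⟨Sum.elim y z, by simpa using hy, by simpa using hz⟩
  · exact fun ⟨w, hy, hz⟩ => ⟨⟨_, hy⟩, _, hz⟩

lemma and (hP : IsDiophantine P) (hQ : IsDiophantine Q) : IsDiophantine fun x => P x ∧ Q x := by
  classical
  obtain ⟨μ, hμ, S, T, -, -, hST⟩ := hP.exists_common_witnesses hQ
  exact ⟨μ, hμ, S ∪ T, by simpa only [Finset.forall_mem_union] using hST⟩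

lemma or [IsDomain R] (hP : IsDiophantine P) (hQ : IsDiophantine Q) :
    IsDiophantine fun x => P x ∨ Q x := by
  classical
  obtain ⟨μ, hμ, S, T, hS, hT, -⟩ := hP.exists_common_witnesses hQ
  refine ⟨μ, hμ, Finset.image₂ (· * ·) S T, fun x => ?_⟩
  simp only [hS, hT, Finset.forall_mem_image₂, map_mul, mul_eq_zero, ← exists_or]
  refine exists_congr fun y => ⟨?_, fun h => ?_⟩
  · rintro (h | h) F hF G hG
    exacts [.inl (h F hF), .inr (h G hG)]
  · by_contra! ⟨⟨F, hF, hF0⟩, G, hG, hG0⟩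
    exact (h F hF G hG).elim hF0 hG0

lemma exists_finset [IsDomain R] {α : Type*} (s : Finset α) {P : α → (ι → R) → Prop}
    (hP : ∀ i ∈ s, IsDiophantine (P i)) : IsDiophantine fun x => ∃ i ∈ s, P i x := by
  classical
  induction s using Finset.induction_on with
  | empty => exact false.of_iff fun x => by simp
  | insert a s _ ih =>
    rw [Finset.forall_mem_insert] at hP
    exact (hP.1.or (ih hP.2)).of_iff fun x => by simp

lemma forall_finset {α : Type*} (s : Finset α) {P : α → (ι → R) → Prop}
    (hP : ∀ i ∈ s, IsDiophantine (P i)) : IsDiophantine fun x => ∀ i ∈ s, P i x := by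
  classical
  induction s using Finset.induction_on with
  | empty => exact true.of_iff fun x => by simp
  | insert a s _ ih =>
    rw [Finset.forall_mem_insert] at hP
    exact (hP.1.and (ih hP.2)).of_iff fun x => by simp

end IsDiophantine

section OneEquation

variable {K : Type*} [Field K] {n : ℕ} {t : K}

-- The form `F ^ n - t * G ^ n` has no nontrivial zero when `t` is not an `n`-th power.
lemma exists_eval_eq_zero_iff_forall (hn : n ≠ 0) (ht : ∀ x : K, x ^ n ≠ t)
    (S : Finset (MvPolynomial ι K)) :
    ∃ F : MvPolynomial ι K, ∀ x, eval x F = 0 ↔ ∀ G ∈ S, eval x G = 0 := by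
  classical
  induction S using Finset.induction_on with
  | empty => exact ⟨0, fun x => by simp⟩
  | insert F S _ ih =>
    obtain ⟨G, hG⟩ := ih
    refine ⟨F ^ n - C t * G ^ n, fun x => ?_⟩
    rw [Finset.forall_mem_insert, ← hG, map_sub, map_mul, map_pow, map_pow, eval_C, sub_eq_zero]
    constructor
    · intro h
      have hG0 : eval x G = 0 := by
        by_contra hG0
        exact ht (eval x F / eval x G) (by rw [div_pow, h, mul_div_cancel_right₀ _ (by positivity)])
      rw [hG0, zero_pow hn, mul_zero] at h
      exact ⟨eq_zero_of_pow_eq_zero h, hG0⟩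
    · rintro ⟨hF, hG⟩
      rw [hF, hG, zero_pow hn, mul_zero]

theorem exists_universal_definition_of_compl (hn : n ≠ 0) (ht : ∀ x : K, x ^ n ≠ t) {A : Set K}
    (hA : IsDiophantineSet Aᶜ) : ∃ (m : ℕ) (F : MvPolynomial (Fin (m + 1)) K),
      A = {x | ∀ y : Fin m → K, eval (Fin.cons x y) F ≠ 0} := by
  obtain ⟨μ, hμ, S, hS⟩ := hA
  obtain ⟨m, ⟨e⟩⟩ := Finite.exists_equiv_fin μ
  obtain ⟨F, hF⟩ := exists_eval_eq_zero_iff_forall hn ht S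
  let φ : Unit ⊕ μ → Fin (m + 1) := Sum.elim (fun _ => 0) (Fin.succ ∘ e)
  refine ⟨m, rename φ F, Set.ext fun x => not_iff_not.1 ((hS fun _ => x).trans ?_)⟩
  have cons_comp (y : Fin m → K) :
      (Fin.cons x y : Fin (m + 1) → K) ∘ φ = Sum.elim (fun _ => x) (y ∘ e) := by
    funext i
    rcases i with i | i <;> rfl
  simp only [← hF, Set.mem_ofPred_eq, eval_rename, cons_comp, not_forall, not_not]
  exact (e.arrowCongr (Equiv.refl K)).exists_congr_left.trans <| exists_congr fun y => by rfl

end OneEquation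

end Diophantine

section Infinity

open Polynomial WithZero

lemma lt_one_iff_le_exp (x : ℤᵐ⁰) : x < 1 ↔ x ≤ exp (-1) := by
  rcases eq_or_ne x 0 with rfl | hx
  · simp
  · rw [← exp_log hx, ← exp_zero, exp_lt_exp, exp_le_exp]
    omega

lemma pow_le_exp_mul {x : ℤᵐ⁰} {n : ℤ} (h : x ≤ exp n) (m : ℕ) : x ^ m ≤ exp (m * n) := by
  calc x ^ m ≤ exp n ^ m := by gcongr
    _ = exp (m * n) := by rw [← exp_nsmul, nsmul_eq_mul]

section Field

variable {k : Type*} [Field k]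

open Classical in
/-- The valuation at infinity of `k(X)`: Mathlib's `RatFunc.inftyValuation` with the classical
choice of decidable equality. -/
noncomputable def inftyVal (k : Type*) [Field k] : Valuation (RatFunc k) ℤᵐ⁰ :=
  RatFunc.inftyValuation k

lemma inftyVal_X : inftyVal k RatFunc.X = exp 1 := by
  classical
  unfold inftyVal
  convert RatFunc.inftyValuation.X k

lemma inftyVal_algebraMap {q : k[X]} (hq : q ≠ 0) :
    inftyVal k (algebraMap k[X] (RatFunc k) q) = exp (q.natDegree : ℤ) := by
  classical
  exact RatFunc.inftyValuation.polynomial k hq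

lemma eq_zero_of_inftyVal_lt_one {q : k[X]}
    (hq : inftyVal k (algebraMap k[X] (RatFunc k) q) < 1) : q = 0 := by
  by_contra h
  rw [inftyVal_algebraMap h, ← exp_zero, exp_lt_exp] at hq
  omega

lemma exists_polynomial_near (c : RatFunc k) :
    ∃ q : k[X], inftyVal k (c - algebraMap k[X] (RatFunc k) q) ≤ exp (-1) := by
  refine ⟨c.num / c.denom, ?_⟩
  have hd : algebraMap k[X] (RatFunc k) c.denom ≠ 0 := by simpa using c.denom_ne_zero
  have sub_eq : c - algebraMap k[X] (RatFunc k) (c.num / c.denom) =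
      algebraMap k[X] (RatFunc k) (c.num % c.denom) / algebraMap k[X] (RatFunc k) c.denom := by
    nth_rewrite 1 [← c.num_div_denom]
    rw [div_sub' hd, ← map_mul, ← map_sub, EuclideanDomain.mod_eq_sub_mul_div]
  rw [sub_eq, map_div₀, ← lt_one_iff_le_exp]
  by_cases h0 : c.num % c.denom = 0
  · simp [h0]
  · have := natDegree_lt_natDegree h0 (EuclideanDomain.mod_lt c.num c.denom_ne_zero)
    rw [inftyVal_algebraMap h0, inftyVal_algebraMap c.denom_ne_zero, ← exp_sub, ← exp_zero,
      exp_lt_exp]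
    omega

lemma exists_polynomial_mul_inv_X_pow_near (N : ℕ) (c : RatFunc k) :
    ∃ q : k[X], inftyVal k (c - algebraMap k[X] (RatFunc k) q * (RatFunc.X ^ N)⁻¹) ≤
      exp (-1 - N : ℤ) := by
  obtain ⟨q, hq⟩ := exists_polynomial_near (c * RatFunc.X ^ N)
  have hX : (RatFunc.X : RatFunc k) ^ N ≠ 0 := pow_ne_zero _ RatFunc.X_ne_zero
  have scale : c - algebraMap k[X] (RatFunc k) q * (RatFunc.X ^ N)⁻¹ =
      (c * RatFunc.X ^ N - algebraMap k[X] (RatFunc k) q) * (RatFunc.X ^ N)⁻¹ := by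
    field_simp
  refine ⟨q, ?_⟩
  rw [scale, map_mul, map_inv₀, map_pow, inftyVal_X, ← exp_nsmul, ← exp_neg, nsmul_one,
    sub_eq_add_neg (-1 : ℤ), exp_add]
  gcongr

/-- The rational functions with zero residue at infinity, that is, with no `X⁻¹` term in their
Laurent expansion in `X⁻¹`. -/
noncomputable def residueZero (k : Type*) [Field k] : AddSubgroup (RatFunc k) where
  carrier := {f | ∃ q : k[X], inftyVal k (f - algebraMap k[X] (RatFunc k) q) ≤ exp (-2)}
  zero_mem' := ⟨0, by simp⟩
  add_mem' := by
    rintro f g ⟨q, hq⟩ ⟨r, hr⟩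
    refine ⟨q + r, ?_⟩
    rw [map_add, add_sub_add_comm]
    exact Valuation.map_add_le _ hq hr
  neg_mem' := by
    rintro f ⟨q, hq⟩
    refine ⟨-q, ?_⟩
    rwa [map_neg, ← neg_sub', Valuation.map_neg]

lemma algebraMap_mem_residueZero (q : k[X]) : algebraMap k[X] (RatFunc k) q ∈ residueZero k :=
  ⟨q, by simp⟩

lemma mem_residueZero_of_inftyVal_le {f : RatFunc k} (hf : inftyVal k f ≤ exp (-2)) :
    f ∈ residueZero k :=
  ⟨0, by simpa using hf⟩

lemma notMem_residueZero_of_inftyVal_eq {f : RatFunc k} (hf : inftyVal k f = exp (-1)) :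
    f ∉ residueZero k := by
  rintro ⟨q, hq⟩
  have hq1 : inftyVal k (algebraMap k[X] (RatFunc k) q) < 1 := by
    rw [lt_one_iff_le_exp, ← sub_sub_cancel f (algebraMap k[X] (RatFunc k) q)]
    exact Valuation.map_sub_le _ hf.le (hq.trans (exp_le_exp.2 (by norm_num)))
  rw [eq_zero_of_inftyVal_lt_one hq1, map_zero, sub_zero, hf, exp_le_exp] at hq
  omega

lemma exists_polynomial_of_X_pow_mul_mem_residueZero {g : RatFunc k}
    (hg : ∀ j : ℕ, RatFunc.X ^ j * g ∈ residueZero k) :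
    ∃ q : k[X], algebraMap k[X] (RatFunc k) q = g := by
  obtain ⟨q, hq⟩ := exists_polynomial_near g
  refine ⟨q, ?_⟩
  by_contra hne
  set r := g - algebraMap k[X] (RatFunc k) q with hr
  have hr0 : inftyVal k r ≠ 0 := (Valuation.ne_zero_iff _).2 (sub_ne_zero.2 (Ne.symm hne))
  rw [← exp_log hr0, exp_le_exp] at hq
  obtain ⟨j, hj⟩ := Int.eq_ofNat_of_zero_le (sub_nonneg.2 hq)
  refine notMem_residueZero_of_inftyVal_eq (f := RatFunc.X ^ j * r) ?_ ?_
  · rw [map_mul, map_pow, inftyVal_X, ← exp_log hr0, ← exp_nsmul, ← exp_add, nsmul_one]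
    congr 1
    omega
  · rw [hr, mul_sub]
    refine sub_mem (hg j) ?_
    rw [← RatFunc.algebraMap_X, ← map_pow, ← map_mul]
    exact algebraMap_mem_residueZero _

lemma exists_residue_decomposition (c : RatFunc k) :
    ∃ (q : k[X]) (a : k) (r : RatFunc k),
      c = algebraMap k[X] (RatFunc k) q + RatFunc.C a * RatFunc.X⁻¹ + r ∧
        inftyVal k r ≤ exp (-2) := by
  obtain ⟨q, hq⟩ := exists_polynomial_mul_inv_X_pow_near 1 c
  refine ⟨q.divX, q.coeff 0, _, ?_, hq⟩
  have hX : (RatFunc.X : RatFunc k) ≠ 0 := RatFunc.X_ne_zero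
  have hdiv := congrArg (algebraMap k[X] (RatFunc k)) q.divX_mul_X_add
  simp only [map_add, map_mul, RatFunc.algebraMap_X, RatFunc.algebraMap_C] at hdiv
  rw [← hdiv]
  field_simp
  ring

end Field

section CharP

variable {k : Type*} [Field k] {p : ℕ} [CharP k p]

instance : CharP (RatFunc k) p :=
  charP_of_injective_algebraMap (algebraMap k (RatFunc k)).injective p

lemma inftyVal_pow_mul_X_pow_le {r : RatFunc k} {n : ℤ} (hr : inftyVal k r ≤ exp n) (m i : ℕ) :
    inftyVal k (r ^ m * RatFunc.X ^ i) ≤ exp (m * n + i) := by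
  rw [map_mul, map_pow, map_pow, inftyVal_X, exp_add, ← exp_nsmul, nsmul_one]
  gcongr
  exact pow_le_exp_mul hr m

variable [hp : Fact p.Prime]

lemma pow_mul_X_pow_mem_residueZero (c : RatFunc k) {i : ℕ} (hi : i + 1 < p) :
    c ^ p * RatFunc.X ^ i ∈ residueZero k := by
  obtain ⟨q, hq⟩ := exists_polynomial_near c
  have split : c ^ p * RatFunc.X ^ i = algebraMap k[X] (RatFunc k) (q ^ p * X ^ i) +
      (c - algebraMap k[X] (RatFunc k) q) ^ p * RatFunc.X ^ i := by
    rw [sub_pow_char, map_mul, map_pow, map_pow, RatFunc.algebraMap_X]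
    ring
  rw [split]
  refine add_mem (algebraMap_mem_residueZero _) (mem_residueZero_of_inftyVal_le ?_)
  exact (inftyVal_pow_mul_X_pow_le hq p i).trans (exp_le_exp.2 (by omega))

omit [CharP k p] in
-- The `p` summands have valuations in distinct classes modulo `p`, so none of them cancels.
lemma inftyVal_le_inftyVal_sum_pow_mul_X_pow (c : Fin p → RatFunc k) (i : Fin p) :
    inftyVal k (c i ^ p * RatFunc.X ^ (i : ℕ)) ≤
      inftyVal k (∑ j, c j ^ p * RatFunc.X ^ (j : ℕ)) := by
  classical
  let f (j : Fin p) : RatFunc k := c j ^ p * RatFunc.X ^ (j : ℕ)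
  obtain ⟨m, -, hm⟩ := Finset.exists_max_image Finset.univ (fun j => inftyVal k (f j))
    ⟨i, Finset.mem_univ _⟩
  refine (hm i (Finset.mem_univ _)).trans ?_
  rcases eq_or_ne (inftyVal k (f m)) 0 with h0 | h0
  · exact h0.trans_le zero_le
  have val_eq (l : Fin p) (hl : inftyVal k (f l) ≠ 0) :
      ∃ n : ℤ, inftyVal k (f l) = exp (l + p * n : ℤ) := by
    have hc : inftyVal k (c l) ≠ 0 := by
      intro h
      simp [f, h, hp.out.ne_zero] at hl
    refine ⟨log (inftyVal k (c l)), ?_⟩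
    simp only [f, map_mul, map_pow, inftyVal_X]
    nth_rewrite 1 [← exp_log hc]
    rw [← exp_nsmul, ← exp_nsmul, ← exp_add, nsmul_eq_mul, nsmul_one, add_comm]
  have lt_of_ne (j : Fin p) (hj : j ≠ m) : inftyVal k (f j) < inftyVal k (f m) := by
    refine lt_of_le_of_ne (hm j (Finset.mem_univ _)) fun h => hj ?_
    obtain ⟨a, ha⟩ := val_eq j (h ▸ h0)
    obtain ⟨b, hb⟩ := val_eq m h0
    rw [ha, hb, exp_inj] at h
    have hmod := congrArg (· % (p : ℤ)) h
    simp only [Int.add_mul_emod_self_left] at hmod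
    rw [Int.emod_eq_of_lt (by omega) (by omega), Int.emod_eq_of_lt (by omega) (by omega)] at hmod
    exact Fin.ext (by exact_mod_cast hmod)
  have sum_eq : inftyVal k (∑ j, f j) = inftyVal k (f m) := by
    rw [← Finset.add_sum_erase _ _ (Finset.mem_univ m)]
    exact Valuation.map_add_eq_of_lt_left _
      (Valuation.map_sum_lt _ h0 fun j hj => lt_of_ne j (Finset.ne_of_mem_erase hj))
  exact sum_eq.ge

lemma exists_polynomial_of_sum_pow_mul_X_pow (c : Fin p → RatFunc k) (q : k[X])
    (h : ∑ j, c j ^ p * RatFunc.X ^ (j : ℕ) = algebraMap k[X] (RatFunc k) q) (i : Fin p) :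
    ∃ r : k[X], algebraMap k[X] (RatFunc k) r = c i := by
  choose r hr using fun j => exists_polynomial_near (c j)
  let d (j : Fin p) : RatFunc k := c j - algebraMap k[X] (RatFunc k) (r j)
  have sum_d : ∑ j, d j ^ p * RatFunc.X ^ (j : ℕ) =
      algebraMap k[X] (RatFunc k) (q - ∑ j, r j ^ p * X ^ (j : ℕ)) := by
    simp only [d, sub_pow_char, sub_mul, Finset.sum_sub_distrib, h, map_sub, map_sum, map_mul,
      map_pow, RatFunc.algebraMap_X]
  have sum_lt : inftyVal k (∑ j, d j ^ p * RatFunc.X ^ (j : ℕ)) < 1 := by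
    refine Valuation.map_sum_lt _ one_ne_zero fun j _ => (lt_one_iff_le_exp _).2 ?_
    exact (inftyVal_pow_mul_X_pow_le (hr j) p j).trans (exp_le_exp.2 (by omega))
  have sum_zero : ∑ j, d j ^ p * RatFunc.X ^ (j : ℕ) = 0 := by
    rw [sum_d] at sum_lt ⊢
    rw [eq_zero_of_inftyVal_lt_one sum_lt, map_zero]
  have hdi := inftyVal_le_inftyVal_sum_pow_mul_X_pow d i
  rw [sum_zero, map_zero, le_zero_iff, Valuation.zero_iff, mul_eq_zero] at hdi
  have hdi0 : d i = 0 :=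
    eq_zero_of_pow_eq_zero (hdi.resolve_right (pow_ne_zero _ RatFunc.X_ne_zero))
  exact ⟨r i, (sub_eq_zero.1 hdi0).symm⟩

end CharP

section PrimeField

variable {p : ℕ} [hp : Fact p.Prime]

-- On `a * X⁻¹` the map is zero because `a ^ p = a` in the prime field.
lemma pow_mul_X_pow_sub_self_mem_residueZero (c : RatFunc (ZMod p)) :
    c ^ p * RatFunc.X ^ (p - 1) - c ∈ residueZero (ZMod p) := by
  obtain ⟨q, a, r, hc, hr⟩ := exists_residue_decomposition c
  have hX : (RatFunc.X : RatFunc (ZMod p)) ≠ 0 := RatFunc.X_ne_zero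
  have hp2 := hp.out.two_le
  have residue_fixed : (RatFunc.C a * RatFunc.X⁻¹ : RatFunc (ZMod p)) ^ p * RatFunc.X ^ (p - 1) =
      RatFunc.C a * RatFunc.X⁻¹ := by
    rw [mul_pow, ← map_pow, ZMod.pow_card, mul_assoc, inv_pow, pow_sub₀ _ hX hp.out.one_le,
      inv_mul_cancel_left₀ (pow_ne_zero _ hX), pow_one]
  have split : c ^ p * RatFunc.X ^ (p - 1) - c =
      algebraMap (ZMod p)[X] (RatFunc (ZMod p)) (q ^ p * X ^ (p - 1) - q) +
        (r ^ p * RatFunc.X ^ (p - 1) - r) := by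
    rw [hc, add_pow_char, add_pow_char, add_mul, add_mul, residue_fixed, map_sub, map_mul, map_pow,
      map_pow, RatFunc.algebraMap_X]
    ring
  rw [split]
  refine add_mem (algebraMap_mem_residueZero _) (mem_residueZero_of_inftyVal_le ?_)
  refine Valuation.map_sub_le _ ?_ hr
  exact (inftyVal_pow_mul_X_pow_le hr p (p - 1)).trans (exp_le_exp.2 (by omega))

end PrimeField

section FiniteField

variable {k : Type*} [Field k] [Finite k]

lemma finite_setOf_natDegree_le (n : ℕ) : {q : k[X] | q.natDegree ≤ n}.Finite := by
  have : Finite (degreeLT k (n + 1)) := Finite.of_equiv _ (degreeLTEquiv k (n + 1)).symm.toEquiv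
  refine (Set.toFinite (degreeLT k (n + 1) : Set k[X])).subset fun q hq => ?_
  rw [SetLike.mem_coe, mem_degreeLT]
  exact degree_le_natDegree.trans_lt (by exact_mod_cast Nat.lt_succ_of_le hq)

lemma finite_setOf_inftyVal_algebraMap_le (n : ℤ) :
    {q : k[X] | inftyVal k (algebraMap k[X] (RatFunc k) q) ≤ exp n}.Finite := by
  refine (finite_setOf_natDegree_le n.toNat).subset fun q hq => ?_
  rcases eq_or_ne q 0 with rfl | h
  · simp
  · rw [Set.mem_ofPred_eq, inftyVal_algebraMap h, exp_le_exp] at hq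
    rw [Set.mem_ofPred_eq]
    omega

end FiniteField

end Infinity

section TraceDual

open Polynomial WithZero
open scoped RatFunc

lemma exists_forall_le_exp {ι : Type*} (s : Finset ι) (f : ι → ℤᵐ⁰) :
    ∃ N : ℕ, ∀ i ∈ s, f i ≤ exp (N : ℤ) := by
  have le_exp_toNat (x : ℤᵐ⁰) : x ≤ exp ((log x).toNat : ℤ) := by
    rcases eq_or_ne x 0 with rfl | hx
    · exact zero_le
    · rw [← log_le_iff_le_exp hx]
      exact Int.self_le_toNat _
  refine ⟨s.sup fun i => (log (f i)).toNat, fun i hi => (le_exp_toNat _).trans ?_⟩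
  rw [exp_le_exp]
  exact_mod_cast Finset.le_sup (f := fun i => (log (f i)).toNat) hi

section Perfect

variable {k : Type*} [Field k] {p : ℕ} [hp : Fact p.Prime] [CharP k p] [PerfectRing k p]

lemma exists_polynomial_eq_sum_pow_mul_X_pow (q : k[X]) :
    ∃ r : Fin p → k[X], q = ∑ i, r i ^ p * X ^ (i : ℕ) := by
  induction q using Polynomial.induction_on' with
  | add a b ha hb =>
    obtain ⟨r, hr⟩ := ha
    obtain ⟨t, ht⟩ := hb
    refine ⟨fun i => r i + t i, ?_⟩
    simp only [add_pow_char, add_mul, Finset.sum_add_distrib]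
    rw [← hr, ← ht]
  | monomial n a =>
    obtain ⟨b, rfl⟩ := surjective_frobenius k p a
    let residue : Fin p := ⟨n % p, Nat.mod_lt _ hp.out.pos⟩
    refine ⟨Pi.single residue (monomial (n / p) b), ?_⟩
    rw [Finset.sum_eq_single residue]
    · rw [Pi.single_eq_same, monomial_pow, monomial_mul_X_pow, mul_comm, Nat.div_add_mod,
        frobenius_def]
    · intro j _ hj
      rw [Pi.single_eq_of_ne hj, zero_pow hp.out.ne_zero, zero_mul]
    · simp

lemma exists_ratFunc_eq_sum_pow_mul_X_pow (c : RatFunc k) :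
    ∃ d : Fin p → RatFunc k, c = ∑ i, d i ^ p * RatFunc.X ^ (i : ℕ) := by
  obtain ⟨r, hr⟩ := exists_polynomial_eq_sum_pow_mul_X_pow (p := p) (c.num * c.denom ^ (p - 1))
  have denom_ne : algebraMap k[X] (RatFunc k) c.denom ≠ 0 := by simpa using c.denom_ne_zero
  have hr' := congrArg (algebraMap k[X] (RatFunc k)) hr
  simp only [map_mul, map_pow, map_sum, RatFunc.algebraMap_X] at hr'
  refine ⟨fun i => algebraMap k[X] (RatFunc k) (r i) / algebraMap k[X] (RatFunc k) c.denom, ?_⟩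
  simp only [div_pow, div_mul_eq_mul_div]
  rw [← Finset.sum_div, ← hr', eq_div_iff (pow_ne_zero _ denom_ne)]
  nth_rewrite 1 [← c.num_div_denom]
  rw [← mul_pow_sub_one hp.out.ne_zero (algebraMap k[X] (RatFunc k) c.denom)]
  field_simp

end Perfect

variable {p : ℕ} [hp : Fact p.Prime]

lemma inftyVal_le_of_pow_mul_X_pow_le {k : Type*} [Field k] {r : RatFunc k} {N m : ℕ}
    (h : inftyVal k (r ^ p * RatFunc.X ^ (p - 1)) ≤ exp (N + (N + m + 1) : ℤ)) :
    inftyVal k r ≤ exp (N + m : ℤ) := by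
  rcases eq_or_ne (inftyVal k r) 0 with h0 | h0
  · exact h0.trans_le zero_le
  rw [map_mul, map_pow, map_pow, inftyVal_X] at h
  rw [← exp_log h0] at h ⊢
  rw [← exp_nsmul, ← exp_nsmul, ← exp_add, exp_le_exp, nsmul_eq_mul, nsmul_one,
    Nat.cast_sub hp.out.one_le, Nat.cast_one] at h
  rw [exp_le_exp]
  have hp2 : (2 : ℤ) ≤ p := by exact_mod_cast hp.out.two_le
  by_contra! hlt
  nlinarith

variable {K : Type*} [Field K] [Algebra (ZMod p)[X] K]

variable (p K) in
/-- The image of `X` in the function field `K`: the coordinate with respect to which `K` is a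
finite extension of `𝔽_p(X)`. -/
noncomputable def coord : K := algebraMap (ZMod p)[X] K X

lemma isIntegral_coord : IsIntegral (ZMod p)[X] (coord p K) := isIntegral_algebraMap

variable (p) in
/-- The largest element `p - 1` of `Fin p`. -/
def lastIndex : Fin p := ⟨p - 1, Nat.sub_lt hp.out.pos one_pos⟩

/-- The element `f - C(f)`, where `f = ∑ σᵢᵖ tⁱ` for the coordinate `t` and `C` is the Cartier
operator `∑ σᵢᵖ tⁱ ↦ σ_{p-1}`. -/
noncomputable def cartierDefect (σ : Fin p → K) : K :=
  ∑ i, σ i ^ p * coord p K ^ (i : ℕ) - σ (lastIndex p)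

section CharP

variable [CharP K p]

lemma cartierDefect_add (σ τ : Fin p → K) :
    cartierDefect (σ + τ) = cartierDefect σ + cartierDefect τ := by
  simp only [cartierDefect, Pi.add_apply, add_pow_char, add_mul, Finset.sum_add_distrib]
  ring

end CharP

variable [Algebra (ZMod p)⟮X⟯ K]

variable (p K) in
/-- The elements of `K` whose trace has zero residue at infinity. -/
noncomputable def traceResidueZero : AddSubgroup K :=
  (residueZero (ZMod p)).comap (Algebra.trace (ZMod p)⟮X⟯ K).toAddMonoidHom

omit [Algebra (ZMod p)[X] K] in
lemma mem_traceResidueZero {f : K} :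
    f ∈ traceResidueZero p K ↔ Algebra.trace (ZMod p)⟮X⟯ K f ∈ residueZero (ZMod p) := Iff.rfl

variable [IsScalarTower (ZMod p)[X] (ZMod p)⟮X⟯ K]

lemma coord_eq_algebraMap : coord p K = algebraMap (ZMod p)⟮X⟯ K RatFunc.X := by
  rw [coord, IsScalarTower.algebraMap_apply (ZMod p)[X] (ZMod p)⟮X⟯ K, RatFunc.algebraMap_X]

lemma trace_mul_coord_pow (x : K) (i : ℕ) :
    Algebra.trace (ZMod p)⟮X⟯ K (x * coord p K ^ i) =
      RatFunc.X ^ i * Algebra.trace (ZMod p)⟮X⟯ K x := by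
  rw [coord_eq_algebraMap, ← map_pow, mul_comm, ← Algebra.smul_def, map_smul, smul_eq_mul]

variable (p K) in
/-- The trace dual of the ring of integers of `K`, i.e. the inverse of the different. -/
noncomputable def integralDual : Submodule (FunctionField.ringOfIntegers (ZMod p) K) K :=
  Submodule.traceDual (ZMod p)[X] (ZMod p)⟮X⟯ 1

lemma mem_integralDual {f : K} :
    f ∈ integralDual p K ↔ ∀ a : K, IsIntegral (ZMod p)[X] a → ∃ q : (ZMod p)[X],
      algebraMap (ZMod p)[X] (ZMod p)⟮X⟯ q = Algebra.trace (ZMod p)⟮X⟯ K (f * a) := by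
  rw [integralDual, Submodule.mem_traceDual]
  refine forall_congr' fun a => ?_
  rw [IsIntegralClosure.isIntegral_iff (A := FunctionField.ringOfIntegers (ZMod p) K),
    Submodule.mem_one]
  rfl

lemma mem_traceResidueZero_of_mem_integralDual {f : K} (hf : f ∈ integralDual p K) :
    f ∈ traceResidueZero p K := by
  obtain ⟨q, hq⟩ := mem_integralDual.1 hf 1 isIntegral_one
  rw [mul_one] at hq
  rw [mem_traceResidueZero, ← hq]
  exact algebraMap_mem_residueZero q

lemma mem_integralDual_of_forall_mul_mem {f : K}
    (hf : ∀ a : K, IsIntegral (ZMod p)[X] a → f * a ∈ traceResidueZero p K) :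
    f ∈ integralDual p K := by
  refine mem_integralDual.2 fun a ha =>
    exists_polynomial_of_X_pow_mul_mem_residueZero fun j => ?_
  rw [← trace_mul_coord_pow, mul_assoc, ← mem_traceResidueZero]
  exact hf _ (ha.mul (isIntegral_coord.pow j))

variable [FiniteDimensional (ZMod p)⟮X⟯ K]

lemma mem_integralDual_of_isIntegral {f : K} (hf : IsIntegral (ZMod p)[X] f) :
    f ∈ integralDual p K :=
  mem_integralDual.2 fun _ ha =>
    IsIntegrallyClosed.isIntegral_iff.1 (Algebra.isIntegral_trace (hf.mul ha))

variable [Algebra.IsSeparable (ZMod p)⟮X⟯ K]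

omit [Algebra (ZMod p)[X] K] [IsScalarTower (ZMod p)[X] (ZMod p)⟮X⟯ K] in
lemma trace_pow_char (x : K) :
    Algebra.trace (ZMod p)⟮X⟯ K (x ^ p) = Algebra.trace (ZMod p)⟮X⟯ K x ^ p := by
  let E := AlgebraicClosure (ZMod p)⟮X⟯
  have : CharP E p :=
    charP_of_injective_algebraMap (algebraMap (ZMod p)⟮X⟯ E).injective p
  apply (algebraMap (ZMod p)⟮X⟯ E).injective
  rw [RingHom.map_pow, trace_eq_sum_embeddings E, trace_eq_sum_embeddings E, sum_pow_char]
  simp only [map_pow]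

lemma trace_sum_pow_mul_coord_pow (g : Fin p → K) :
    Algebra.trace (ZMod p)⟮X⟯ K (∑ i, g i ^ p * coord p K ^ (i : ℕ)) =
      ∑ i, Algebra.trace (ZMod p)⟮X⟯ K (g i) ^ p * RatFunc.X ^ (i : ℕ) := by
  rw [map_sum]
  exact Finset.sum_congr rfl fun i _ => by rw [trace_mul_coord_pow, trace_pow_char, mul_comm]

lemma trace_sum_mul_pow (g : Fin p → K) (a : K) :
    Algebra.trace (ZMod p)⟮X⟯ K ((∑ i, g i ^ p * coord p K ^ (i : ℕ)) * a ^ p) =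
      ∑ i, Algebra.trace (ZMod p)⟮X⟯ K (g i * a) ^ p * RatFunc.X ^ (i : ℕ) := by
  rw [← trace_sum_pow_mul_coord_pow fun i => g i * a, Finset.sum_mul]
  exact congrArg _ (Finset.sum_congr rfl fun i _ => by ring)

lemma cartierDefect_mem_traceResidueZero (σ : Fin p → K) :
    cartierDefect σ ∈ traceResidueZero p K := by
  rw [mem_traceResidueZero, cartierDefect, map_sub, trace_sum_pow_mul_coord_pow,
    ← Finset.add_sum_erase _ _ (Finset.mem_univ (lastIndex p)), add_sub_right_comm]
  refine add_mem (pow_mul_X_pow_sub_self_mem_residueZero _) (sum_mem fun i hi => ?_)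
  have ne_last : (i : ℕ) ≠ p - 1 := fun h => Finset.ne_of_mem_erase hi (Fin.ext h)
  exact pow_mul_X_pow_mem_residueZero _ (by omega)

lemma mem_integralDual_of_sum_pow_mul_coord_pow_mem {g : Fin p → K}
    (hg : ∑ i, g i ^ p * coord p K ^ (i : ℕ) ∈ integralDual p K) (i : Fin p) :
    g i ∈ integralDual p K := by
  refine mem_integralDual.2 fun a ha => ?_
  obtain ⟨q, hq⟩ := mem_integralDual.1 hg (a ^ p) (ha.pow p)
  exact exists_polynomial_of_sum_pow_mul_X_pow (fun i => Algebra.trace (ZMod p)⟮X⟯ K (g i * a)) q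
    (by rw [hq, trace_sum_mul_pow]) i

lemma exists_eq_sum_pow_mul_coord_pow [CharP K p] (f : K) :
    ∃ g : Fin p → K, f = ∑ i, g i ^ p * coord p K ^ (i : ℕ) := by
  let b := Module.finBasis (ZMod p)⟮X⟯ K
  have span_pow := Field.span_map_pow_expChar_pow_eq_top_of_isSeparable p 1 b.span_eq
  obtain ⟨c, hc⟩ := (Submodule.mem_span_range_iff_exists_fun _).1
    (span_pow ▸ Submodule.mem_top : f ∈ Submodule.span _ (Set.range fun i => b i ^ p ^ 1))
  choose d hd using fun j => exists_ratFunc_eq_sum_pow_mul_X_pow (p := p) (c j)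
  refine ⟨fun i => ∑ j, algebraMap (ZMod p)⟮X⟯ K (d j i) * b j, ?_⟩
  simp only [sum_pow_char, mul_pow, Finset.sum_mul]
  rw [Finset.sum_comm, ← hc]
  refine Finset.sum_congr rfl fun j _ => ?_
  rw [hd j, Algebra.smul_def, map_sum, Finset.sum_mul, pow_one]
  refine Finset.sum_congr rfl fun i _ => ?_
  rw [coord_eq_algebraMap, map_mul, map_pow, map_pow]
  ring

section IntegralBasis

variable {n : ℕ} {e : Module.Basis (Fin n) (ZMod p)⟮X⟯ K}

lemma finite_setOf_mem_integralDual_trace_le (he : ∀ j, IsIntegral (ZMod p)[X] (e j)) (m : ℤ) :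
    {f : K | f ∈ integralDual p K ∧
      ∀ j, inftyVal (ZMod p) (Algebra.trace (ZMod p)⟮X⟯ K (f * e j)) ≤ exp m}.Finite := by
  have finite_coords := Set.Finite.pi' (ι := Fin n) fun _ =>
    finite_setOf_inftyVal_algebraMap_le (k := (ZMod p)) m
  refine (finite_coords.image fun q =>
    ∑ j, algebraMap (ZMod p)[X] (ZMod p)⟮X⟯ (q j) • e.traceDual j).subset ?_
  rintro f ⟨hf, hfm⟩
  choose q hq using fun j => mem_integralDual.1 hf (e j) (he j)
  refine ⟨q, fun j => ?_, ?_⟩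
  · rw [Set.mem_ofPred_eq, hq]
    exact hfm j
  · conv_rhs => rw [← e.traceDual.sum_repr f]
    simp only [hq, Module.Basis.traceDual_repr_apply, Algebra.traceForm_apply]

lemma inftyVal_trace_lastIndex_le {N m : ℕ}
    (hN : ∀ i j, inftyVal (ZMod p) (e.repr (e j ^ p) i) ≤ exp (N : ℤ)) {g : Fin p → K}
    (hg : ∀ j, inftyVal (ZMod p) (Algebra.trace (ZMod p)⟮X⟯ K
      ((∑ i, g i ^ p * coord p K ^ (i : ℕ)) * e j)) ≤ exp (N + m + 1 : ℤ)) (j : Fin n) :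
    inftyVal (ZMod p) (Algebra.trace (ZMod p)⟮X⟯ K (g (lastIndex p) * e j)) ≤ exp (N + m : ℤ) := by
  refine inftyVal_le_of_pow_mul_X_pow_le ((inftyVal_le_inftyVal_sum_pow_mul_X_pow
    (fun i => Algebra.trace (ZMod p)⟮X⟯ K (g i * e j)) (lastIndex p)).trans ?_)
  rw [← trace_sum_mul_pow, ← e.sum_repr (e j ^ p), Finset.mul_sum, map_sum]
  refine Valuation.map_sum_le _ fun i _ => ?_
  rw [mul_smul_comm, map_smul, smul_eq_mul, map_mul, exp_add]
  exact mul_le_mul' (hN i j) (hg i)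

-- `f = ∑ gᵢᵖ tⁱ` is congruent to `g_{p-1}` modulo Cartier defects, and `g_{p-1}` has smaller trace.
lemma exists_trace_le_eq_add_cartierDefect [CharP K p] {N : ℕ}
    (hN : ∀ i j, inftyVal (ZMod p) (e.repr (e j ^ p) i) ≤ exp (N : ℤ)) (m : ℕ) {f : K}
    (hf : f ∈ integralDual p K)
    (hfm : ∀ j, inftyVal (ZMod p) (Algebra.trace (ZMod p)⟮X⟯ K (f * e j)) ≤ exp (N + m : ℤ)) :
    ∃ c ∈ integralDual p K,
      (∀ j, inftyVal (ZMod p) (Algebra.trace (ZMod p)⟮X⟯ K (c * e j)) ≤ exp (N : ℤ)) ∧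
      ∃ σ : Fin p → K, f = c + cartierDefect σ := by
  induction m generalizing f with
  | zero =>
    refine ⟨f, hf, by simpa using hfm, 0, ?_⟩
    simp [cartierDefect, hp.out.ne_zero]
  | succ m ih =>
    obtain ⟨g, rfl⟩ := exists_eq_sum_pow_mul_coord_pow (p := p) f
    rw [Nat.cast_add_one, ← add_assoc] at hfm
    obtain ⟨c, hc, hcN, σ, hσ⟩ := ih (mem_integralDual_of_sum_pow_mul_coord_pow_mem hf _)
      (inftyVal_trace_lastIndex_le hN hfm)
    refine ⟨c, hc, hcN, g + σ, ?_⟩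
    rw [cartierDefect_add, add_left_comm, ← hσ, cartierDefect, sub_add_cancel]

end IntegralBasis

omit [Algebra.IsSeparable (ZMod p)⟮X⟯ K] in
variable (p K) in
lemma exists_integral_basis : ∃ (n : ℕ) (e : Module.Basis (Fin n) (ZMod p)⟮X⟯ K),
    ∀ j, IsIntegral (ZMod p)[X] (e j) := by
  obtain ⟨s, b, hb⟩ := FiniteDimensional.exists_is_basis_integral (ZMod p)[X] (ZMod p)⟮X⟯ K
  exact ⟨_, b.reindex s.equivFin, fun j => by simpa using hb _⟩

variable (p K) in
theorem exists_finite_representatives_integralDual [CharP K p] :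
    ∃ C : Set K, C.Finite ∧ C ⊆ integralDual p K ∧
      ∀ f ∈ integralDual p K, ∃ c ∈ C, ∃ σ : Fin p → K, f = c + cartierDefect σ := by
  obtain ⟨n, e, he⟩ := exists_integral_basis p K
  obtain ⟨N, hN⟩ := exists_forall_le_exp Finset.univ
    fun z : Fin n × Fin n => inftyVal (ZMod p) (e.repr (e z.2 ^ p) z.1)
  refine ⟨_, finite_setOf_mem_integralDual_trace_le he N, fun f hf => hf.1, fun f hf => ?_⟩
  obtain ⟨m, hm⟩ := exists_forall_le_exp Finset.univ
    fun j => inftyVal (ZMod p) (Algebra.trace (ZMod p)⟮X⟯ K (f * e j))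
  obtain ⟨c, hc, hcN, σ, hσ⟩ := exists_trace_le_eq_add_cartierDefect
    (fun i j => hN (i, j) (Finset.mem_univ _)) m hf
    fun j => (hm j (Finset.mem_univ _)).trans (exp_le_exp.2 (by omega))
  exact ⟨c, ⟨hc, hcN⟩, σ, hσ⟩

variable (p K) in
lemma exists_denominator_integralDual :
    ∃ h : K, h ≠ 0 ∧ ∀ f ∈ integralDual p K, IsIntegral (ZMod p)[X] (f * h) := by
  obtain ⟨n, e, he⟩ := exists_integral_basis p K
  refine ⟨algebraMap (ZMod p)⟮X⟯ K (Algebra.discr (ZMod p)⟮X⟯ e), ?_, fun f hf => ?_⟩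
  · simpa using Algebra.discr_not_zero_of_basis (ZMod p)⟮X⟯ e
  · have := isIntegral_discr_mul_of_mem_traceDual
      (1 : Submodule (FunctionField.ringOfIntegers (ZMod p) K) K) he
      (Submodule.one_le.1 le_rfl) hf
    rwa [Algebra.smul_def, mul_one, mul_comm] at this

end TraceDual

section DedekindDomain

open WithZero IsDedekindDomain

lemma exp_neg_natCast_le_one (n : ℕ) : exp (-(n : ℤ)) ≤ 1 := by
  rw [← exp_zero, exp_le_exp]
  omega

variable {A : Type*} [CommRing A] [IsDedekindDomain A] {K : Type*} [Field K] [Algebra A K]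
  [IsFractionRing A K]

lemma valuation_algebraMap_le_exp_iff_mem_pow (w : HeightOneSpectrum A) (a : A) (n : ℕ) :
    w.valuation K (algebraMap A K a) ≤ exp (-(n : ℤ)) ↔ a ∈ w.asIdeal ^ n := by
  rw [w.valuation_of_algebraMap, w.intValuation_le_pow_iff_mem]

lemma finite_setOf_valuation_lt_one {x : K} (hx : x ≠ 0) :
    {w : HeightOneSpectrum A | w.valuation K x < 1}.Finite := by
  refine (HeightOneSpectrum.Support.finite A x⁻¹).subset fun w hw => ?_
  change 1 < w.valuation K x⁻¹
  rw [map_inv₀]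
  exact (one_lt_inv₀ (by simpa [zero_lt_iff] using hx)).2 hw

lemma exists_exp_neg_le_valuation (T : Finset (HeightOneSpectrum A)) {x : K} (hx : x ≠ 0) :
    ∃ N : ℕ, ∀ w ∈ T, exp (-(N : ℤ)) ≤ w.valuation K x := by
  obtain ⟨N, hN⟩ := exists_forall_le_exp T fun w => (w.valuation K x)⁻¹
  refine ⟨N, fun w hw => ?_⟩
  rw [exp_neg]
  exact inv_le_of_inv_le₀ (by simpa [zero_lt_iff] using hx) (hN w hw)

variable (A) in
lemma exists_forall_exp_neg_le_valuation {x : K} (hx : x ≠ 0) :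
    ∃ N : ℕ, ∀ w : HeightOneSpectrum A, exp (-(N : ℤ)) ≤ w.valuation K x := by
  have zeros := finite_setOf_valuation_lt_one (A := A) hx
  obtain ⟨N, hN⟩ := exists_exp_neg_le_valuation zeros.toFinset hx
  refine ⟨N, fun w => ?_⟩
  by_cases hw : w.valuation K x < 1
  · exact hN w (zeros.mem_toFinset.2 hw)
  · exact (exp_neg_natCast_le_one N).trans (not_lt.1 hw)

variable (K) in
lemma exists_valuation_sub_le (T : Finset (HeightOneSpectrum A)) (b : HeightOneSpectrum A → A)
    (n : ℕ) :
    ∃ a : A, ∀ w ∈ T, w.valuation K (algebraMap A K a - algebraMap A K (b w)) ≤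
      exp (-(n : ℤ)) := by
  obtain ⟨a, ha⟩ := exists_forall_sub_mem_ideal (s := T) (fun w => w.asIdeal) (fun _ => n)
    (fun w _ => w.prime) (fun _ _ _ _ ne h => ne (HeightOneSpectrum.ext h)) (fun w => b w)
  refine ⟨a, fun w hw => ?_⟩
  rw [← map_sub, valuation_algebraMap_le_exp_iff_mem_pow]
  exact ha w hw

-- Multiply `f` by a common denominator `c` and approximate in `A`, requiring a zero of high order
-- at the zeros of `c` outside `T`.
theorem strong_approximation (T : Finset (HeightOneSpectrum A)) (f : HeightOneSpectrum A → K)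
    (n : ℕ) :
    ∃ a : K, (∀ w ∈ T, w.valuation K (a - f w) ≤ exp (-(n : ℤ))) ∧
      ∀ w ∉ T, w.valuation K a ≤ 1 := by
  classical
  obtain ⟨⟨c, hc⟩, hcf⟩ := IsLocalization.exist_integer_multiples_of_finset (nonZeroDivisors A)
    (T.image f)
  have hc0 : algebraMap A K c ≠ 0 := by simpa using nonZeroDivisors.ne_zero hc
  have hcpos (w : HeightOneSpectrum A) : 0 < w.valuation K (algebraMap A K c) := by
    simpa [zero_lt_iff] using hc0
  let T' : Finset (HeightOneSpectrum A) := T ∪ (finite_setOf_valuation_lt_one hc0).toFinset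
  obtain ⟨N, hN⟩ := exists_exp_neg_le_valuation T' hc0
  have exists_numerator (w : HeightOneSpectrum A) :
      ∃ b : A, algebraMap A K b = algebraMap A K c * if w ∈ T then f w else 0 := by
    split_ifs with hw
    · obtain ⟨b, hb⟩ := hcf (f w) (Finset.mem_image_of_mem f hw)
      exact ⟨b, by rw [hb, Algebra.smul_def]⟩
    · exact ⟨0, by simp⟩
  choose b hb using exists_numerator
  obtain ⟨a, ha⟩ := exists_valuation_sub_le K T' b (N + n)
  have near (w) (hw : w ∈ T') : w.valuation K
      (algebraMap A K a / algebraMap A K c - if w ∈ T then f w else 0) ≤ exp (-(n : ℤ)) := by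
    rw [div_sub' hc0, ← hb, map_div₀, div_le_iff₀ (hcpos w)]
    calc w.valuation K (algebraMap A K a - algebraMap A K (b w))
        ≤ exp (-(n : ℤ)) * exp (-(N : ℤ)) := by
          rw [← exp_add, ← neg_add, add_comm (n : ℤ)]
          exact_mod_cast ha w hw
      _ ≤ exp (-(n : ℤ)) * w.valuation K (algebraMap A K c) := by
          gcongr
          exact hN w hw
  refine ⟨algebraMap A K a / algebraMap A K c, fun w hw => ?_, fun w hw => ?_⟩
  · simpa only [if_pos hw] using near w (Finset.mem_union_left _ hw)
  · by_cases hw' : w ∈ T'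
    · simpa only [if_neg hw, sub_zero] using (near w hw').trans (exp_neg_natCast_le_one n)
    · have hwc : w.valuation K (algebraMap A K c) = 1 :=
        le_antisymm (w.valuation_le_one c)
          (not_lt.1 fun h => hw' (Finset.mem_union_right _ (by simpa using h)))
      rw [map_div₀, hwc, div_one]
      exact w.valuation_le_one a

variable (K) in
lemma exists_valuation_eq_exp (v : HeightOneSpectrum A) {n : ℕ} (hn : n ≠ 0) :
    ∃ f : K, v.valuation K f = exp (n : ℤ) ∧ ∀ w ≠ v, w.valuation K f ≤ 1 := by
  obtain ⟨ϖ, hϖ⟩ := v.valuation_exists_uniformizer K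
  have inv_pow : v.valuation K (ϖ⁻¹ ^ n) = exp (n : ℤ) := by
    rw [map_pow, map_inv₀, hϖ, ← exp_neg, ← exp_nsmul]
    simp
  obtain ⟨f, hfv, hf⟩ := strong_approximation {v} (fun _ => ϖ⁻¹ ^ n) 0
  refine ⟨f, ?_, fun w hw => hf w (by simpa using hw)⟩
  have sub_lt : v.valuation K (f - ϖ⁻¹ ^ n) < v.valuation K (ϖ⁻¹ ^ n) := by
    refine (hfv v (Finset.mem_singleton_self v)).trans_lt ?_
    rw [inv_pow, exp_lt_exp]
    omega
  rw [Valuation.map_eq_of_sub_lt _ sub_lt, inv_pow]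

theorem strong_approximation_integral (T : Finset (HeightOneSpectrum A))
    (f : HeightOneSpectrum A → K) (n : ℕ) (hf : ∀ w ∈ T, w.valuation K (f w) ≤ 1) :
    ∃ a : A, ∀ w ∈ T, w.valuation K (algebraMap A K a - f w) ≤ exp (-(n : ℤ)) := by
  obtain ⟨a, ha, ha'⟩ := strong_approximation T f n
  have integral (w : HeightOneSpectrum A) : w.valuation K a ≤ 1 := by
    by_cases hw : w ∈ T
    · rw [← sub_add_cancel a (f w)]
      exact Valuation.map_add_le _ ((ha w hw).trans (exp_neg_natCast_le_one n)) (hf w hw)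
    · exact ha' w hw
  obtain ⟨b, rfl⟩ := HeightOneSpectrum.mem_integers_of_valuation_le_one K a integral
  exact ⟨b, ha⟩

-- The denominators `{b | b • g ∈ M}` form an ideal contained in no maximal ideal.
lemma mem_of_forall_exists_valuation_sub_le_one (hA : ¬ IsField A) {M : Submodule A K}
    (hM : 1 ≤ M) {g : K} (hg : ∀ w : HeightOneSpectrum A, ∃ c ∈ M, w.valuation K (g - c) ≤ 1) :
    g ∈ M := by
  have colon_eq_top : M.colon {g} = ⊤ := by
    by_contra ne_top
    obtain ⟨m, hm, le_m⟩ := Ideal.exists_le_maximal _ ne_top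
    obtain ⟨c, hc, hgc⟩ :=
      hg ⟨m, hm.isPrime, Ring.ne_bot_of_isMaximal_of_not_isField hm hA⟩
    obtain ⟨n, ⟨d, hd⟩, hnd⟩ := HeightOneSpectrum.exists_primeCompl_mul_eq_of_integer _ _ hgc
    refine hd (le_m (Submodule.mem_colon_singleton.2 ?_))
    have split : d • g = algebraMap A K n + d • c := by
      rw [← hnd, Algebra.smul_def, Algebra.smul_def]
      ring
    rw [split]
    exact add_mem (hM (Submodule.algebraMap_mem n)) (M.smul_mem d hc)
  have one_mem : (1 : A) ∈ M.colon {g} := colon_eq_top ▸ Submodule.mem_top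
  simpa using Submodule.mem_colon_singleton.1 one_mem

end DedekindDomain

section FiniteQuotients

variable {A : Type*} [CommRing A] [Ring.HasFiniteQuotients A]

lemma exists_unit_pow_sub_one_mem (η : Aˣ) {I : Ideal A} (hI : I ≠ ⊥) :
    ∃ i : ℕ, 0 < i ∧ ((η ^ i : Aˣ) : A) - 1 ∈ I := by
  have := Ring.HasFiniteQuotients.finiteQuotient hI
  let u : (A ⧸ I)ˣ := Units.map (Ideal.Quotient.mk I).toMonoidHom η
  refine ⟨orderOf u, orderOf_pos u, ?_⟩
  have pow_eq_one := congrArg Units.val (pow_orderOf_eq_one u)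
  rw [Units.val_pow_eq_pow_val, Units.val_one] at pow_eq_one
  rw [← Ideal.Quotient.eq_zero_iff_mem, map_sub, map_one, sub_eq_zero, Units.val_pow_eq_pow_val,
    map_pow]
  exact pow_eq_one

lemma exists_recurrent_index (f : ℕ → A) {I : Ideal A} (hI : I ≠ ⊥) :
    ∃ k₀ : ℕ, ∀ m : ℕ, ∃ k ≥ m, f k - f k₀ ∈ I := by
  have := Ring.HasFiniteQuotients.finiteQuotient hI
  obtain ⟨y, hy⟩ := Finite.exists_infinite_fiber fun k => Ideal.Quotient.mk I (f k)
  obtain ⟨k₀, hk₀⟩ := (Set.infinite_coe_iff.1 hy).nonempty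
  refine ⟨k₀, fun m => ?_⟩
  obtain ⟨k, hk, hmk⟩ := (Set.infinite_coe_iff.1 hy).exists_gt m
  exact ⟨k, hmk.le, Ideal.Quotient.eq.1 (hk.trans hk₀.symm)⟩

variable {p : ℕ} [hp : Fact p.Prime] [CharP A p]

omit [Ring.HasFiniteQuotients A] in
lemma natCast_pow_sub_one_eq_one {j : ℕ} (hj : ¬ p ∣ j) : ((j ^ (p - 1) : ℕ) : A) = 1 := by
  have fermat : ((j ^ (p - 1) : ℕ) : ZMod p) = ((1 : ℕ) : ZMod p) := by
    rw [Nat.cast_pow, Nat.cast_one]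
    exact ZMod.pow_card_sub_one_eq_one (by rwa [Ne, ZMod.natCast_eq_zero_iff])
  simpa using (CharP.natCast_eq_natCast A p).2 ((ZMod.natCast_eq_natCast_iff _ _ _).1 fermat)

-- The cofactor is the geometric sum, which modulo `1 - x` is the exponent.
omit [Ring.HasFiniteQuotients A] hp [CharP A p] in
lemma exists_one_sub_pow_eq_mul (x : A) {j : ℕ} (hj : (j : A) = 1) :
    ∃ g : A, 1 - x ^ j = (1 - x) * g ∧ 1 - x ∣ g - 1 := by
  refine ⟨∑ i ∈ Finset.range j, x ^ i, (mul_neg_geom_sum x j).symm, ?_⟩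
  have sub_one_eq : ∑ i ∈ Finset.range j, x ^ i - 1 = ∑ i ∈ Finset.range j, (x ^ i - 1) := by
    rw [Finset.sum_sub_distrib]
    simp [hj]
  rw [sub_one_eq, ← neg_sub x 1, neg_dvd]
  exact Finset.dvd_sum fun i _ => sub_one_dvd_pow_sub_one x i

theorem exists_one_sub_unit_pow_eq_mul (η : Aˣ) {c : A} (hV : 1 + (1 - (η : A)) * c ≠ 0)
    {S : ℕ → Prop} (hS : ∀ m, ∃ k ≥ m, S k) :
    ∃ (k n : ℕ) (g : A), S k ∧ 1 - ((η ^ n : Aˣ) : A) =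
      (1 - (η : A)) ^ p ^ k * (1 + (1 - (η : A)) * c) * (1 + (1 - (η : A)) * g) := by
  set U : A := 1 - (η : A)
  set V : A := 1 + U * c
  obtain ⟨J, hJ, hVJ⟩ := exists_unit_pow_sub_one_mem η (I := Ideal.span {V}) (by simpa using hV)
  rw [Ideal.mem_span_singleton, Units.val_pow_eq_pow_val] at hVJ
  obtain ⟨a, j, hj, rfl⟩ := Nat.exists_eq_pow_mul_and_not_dvd hJ.ne' p hp.out.ne_one
  obtain ⟨k, hak, hk⟩ := hS a
  obtain ⟨g, hg, hg1⟩ :=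
    exists_one_sub_pow_eq_mul (η : A) (natCast_pow_sub_one_eq_one (A := A) hj)
  have one_sub_pow : 1 - (η : A) ^ (j ^ (p - 1) * p ^ k) = U ^ p ^ k * g ^ p ^ k := by
    rw [← mul_pow, ← hg, sub_pow_char_pow, one_pow, ← pow_mul]
  have V_dvd : V ∣ U ^ p ^ k * g ^ p ^ k := by
    have dvd_exponent : p ^ a * j ∣ j ^ (p - 1) * p ^ k := by
      rw [mul_comm (p ^ a)]
      exact mul_dvd_mul (dvd_pow_self _ (Nat.sub_ne_zero_of_lt hp.out.one_lt))
        (pow_dvd_pow _ hak)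
    obtain ⟨l, hl⟩ := dvd_exponent
    rw [← one_sub_pow, hl, ← neg_sub, dvd_neg, pow_mul]
    exact hVJ.trans (sub_one_dvd_pow_sub_one _ _)
  have coprime : IsCoprime V U := ⟨1, -c, by simp only [V]; ring⟩
  obtain ⟨G, hG⟩ := coprime.pow_right.dvd_of_dvd_mul_left V_dvd
  have U_dvd : U ∣ G - 1 := by
    have G_sub_one : G - 1 = (g ^ p ^ k - 1) - U * (c * G) := by
      rw [hG]
      simp only [V]
      ring
    rw [G_sub_one]
    exact dvd_sub (hg1.trans (sub_one_dvd_pow_sub_one _ _)) (dvd_mul_right _ _)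
  obtain ⟨g', hg'⟩ := U_dvd
  refine ⟨k, j ^ (p - 1) * p ^ k, g', hk, ?_⟩
  rw [Units.val_pow_eq_pow_val, one_sub_pow, hG, ← hg']
  ring

lemma exists_one_add_mul_mul_eq_one (η : Aˣ) {c : A} (hV : 1 + (1 - (η : A)) * c ≠ 0)
    {S : ℕ → Prop} (hS : ∀ m, ∃ k ≥ m, S k) :
    ∃ (k : ℕ) (b g : A), S k ∧ (1 + (1 - (η : A)) * b) * (1 - (1 - (η : A)) ^ p ^ k *
      (1 + (1 - (η : A)) * c) * (1 + (1 - (η : A)) * g)) = 1 := by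
  obtain ⟨k, n, g, hk, hg⟩ := exists_one_sub_unit_pow_eq_mul (p := p) η hV hS
  have inv_mul : (((η ^ n)⁻¹ : Aˣ) : A) * ((η ^ n : Aˣ) : A) = 1 := Units.inv_mul _
  have pow_succ := mul_pow_sub_one (pow_ne_zero k hp.out.ne_zero) (1 - (η : A))
  let b : A := ((η ^ n)⁻¹ : Aˣ) *
    ((1 - (η : A)) ^ (p ^ k - 1) * (1 + (1 - (η : A)) * c) * (1 + (1 - (η : A)) * g))
  have inv_eq : (((η ^ n)⁻¹ : Aˣ) : A) = 1 + (1 - (η : A)) * b := by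
    linear_combination ((η ^ n)⁻¹ : Aˣ) * hg + inv_mul -
      ((η ^ n)⁻¹ : Aˣ) * (1 + (1 - (η : A)) * c) * (1 + (1 - (η : A)) * g) * pow_succ
  refine ⟨k, b, g, hk, ?_⟩
  rw [← inv_eq, ← hg, sub_sub_cancel, inv_mul]

end FiniteQuotients

/-- `y = 1/τ₀ - 1/τ₁ + (1/τ₂) (1/τ₀ - 1/τ₃)` for nonzero elements `τᵢ` congruent to `e` modulo `S`;
the inverses are carried as separate witnesses `b i`. When `S` consists of elements integral away
from infinity, this certifies that `y` has a zero at some pole of `e`. -/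
def HasCertificate {K : Type*} [Field K] (S : Set K) (e y : K) : Prop :=
  ∃ τ b : Fin 4 → K, (∀ i, b i * τ i = 1) ∧ (∀ i, τ i - e ∈ S) ∧
    y = b 0 - b 1 + b 2 * (b 0 - b 3)

lemma HasCertificate.mono {K : Type*} [Field K] {S S' : Set K} {e e' y : K}
    (h : HasCertificate S e y) (hS : ∀ x, x - e ∈ S → x - e' ∈ S') :
    HasCertificate S' e' y := by
  obtain ⟨τ, b, hbτ, hτ, hy⟩ := h
  exact ⟨τ, b, hbτ, fun i => hS _ (hτ i), hy⟩

lemma eq_inv_sub_inv_add {K : Type*} [Field K] {τ σ g α φ y : K} (hτ : τ ≠ 0) (hσ : σ ≠ 0)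
    (hg : g ≠ 0) (hα : α⁻¹ = 1 - φ * g) (h : τ * (1 + y * σ) = σ + φ) :
    y = τ⁻¹ - σ⁻¹ + (g * σ)⁻¹ * (τ⁻¹ - (α * τ)⁻¹) := by
  rw [mul_inv α, hα]
  field_simp
  linear_combination g * h

section Completeness

open WithZero IsDedekindDomain

variable {Γ : Type*} [LinearOrderedCommGroupWithZero Γ] {K : Type*} [Field K]

lemma valuation_eq_of_sub_le_one (w : Valuation K Γ) {x y : K} (h : w (x - y) ≤ 1)
    (hy : 1 < w y) : w x = w y :=
  Valuation.map_eq_of_sub_lt w (h.trans_lt hy)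

lemma exists_residue_one_le_valuation_one_add_mul (w : Valuation K Γ) {e : K} (he : w e ≤ 1)
    (y : K) : ∃ r, w r ≤ 1 ∧ ∀ x, w (x - r) < 1 → 1 ≤ w (1 + y * (e + x)) := by
  by_cases hy : w y ≤ 1
  · refine ⟨-e, by rwa [Valuation.map_neg], fun x hx => ?_⟩
    have lt_one : w (y * (e + x)) < 1 := by
      rw [map_mul, add_comm e, ← sub_neg_eq_add]
      exact (mul_le_of_le_one_left' hy).trans_lt hx
    rw [Valuation.map_add_eq_of_lt_left _ (by rwa [map_one]), map_one]
  · refine ⟨1 - e, Valuation.map_sub_le _ (by rw [map_one]) he, fun x hx => ?_⟩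
    have eq_one : w (e + x) = 1 := by
      rw [show e + x = 1 + (x - (1 - e)) by ring,
        Valuation.map_add_eq_of_lt_left _ (by rwa [map_one]), map_one]
    have one_lt : 1 < w (y * (e + x)) := by
      rw [map_mul, eq_one, mul_one]
      exact not_le.1 hy
    rw [Valuation.map_add_eq_of_lt_right _ (by rwa [map_one])]
    exact one_lt.le

variable {A : Type*} [CommRing A] [IsDedekindDomain A] [Algebra A K] [IsFractionRing A K]

lemma mem_range_algebraMap_of_valuation_le_one {x : K}
    (h : ∀ w : HeightOneSpectrum A, w.valuation K x ≤ 1) : x ∈ (algebraMap A K).range :=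
  HeightOneSpectrum.mem_integers_of_valuation_le_one K x h

lemma exists_one_le_valuation_one_add_mul (T : Finset (HeightOneSpectrum A)) {e : K}
    (he : ∀ w ∈ T, w.valuation K e ≤ 1) (y : K) :
    ∃ β : A, ∀ w ∈ T, 1 ≤ w.valuation K (1 + y * (e + algebraMap A K β)) := by
  choose! r hr hr' using fun w hw =>
    exists_residue_one_le_valuation_one_add_mul (w.valuation K) (he w hw) y
  obtain ⟨β, hβ⟩ := strong_approximation_integral T r 1 hr
  refine ⟨β, fun w hw => hr' w hw _ ((hβ w hw).trans_lt ?_)⟩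
  rw [← exp_zero, exp_lt_exp]
  omega

-- Choose `c` so that the numerator vanishes to high order at the zeros of `D` for one `k₀`; by
-- finiteness of the residue rings the powers of `U` recur.
lemma exists_valuation_add_pow_mul_le [Ring.HasFiniteQuotients A] {U : A} {D τ : K} (hD : D ≠ 0)
    (hU : ∀ w : HeightOneSpectrum A, w.valuation K D < 1 → w.valuation K (algebraMap A K U) = 1)
    (hτ : ∀ w : HeightOneSpectrum A, w.valuation K D < 1 → w.valuation K τ ≤ 1) (f : ℕ → ℕ) :
    ∃ c : A, ∀ m, ∃ k ≥ m, ∀ w : HeightOneSpectrum A, w.valuation K D < 1 →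
      w.valuation K (τ + algebraMap A K (U ^ f k * (1 + U * c))) ≤ w.valuation K D := by
  classical
  let T := (finite_setOf_valuation_lt_one (A := A) hD).toFinset
  have mem_T {w : HeightOneSpectrum A} : w ∈ T ↔ w.valuation K D < 1 := by simp [T]
  obtain ⟨N, hN⟩ := exists_exp_neg_le_valuation T hD
  let I : Ideal A := ∏ w ∈ T, w.asIdeal ^ N
  obtain ⟨k₀, hk₀⟩ := exists_recurrent_index (fun k => U ^ f k)
    (I := I) (Finset.prod_ne_zero_iff.2 fun w _ => pow_ne_zero _ w.ne_bot)
  let u : K := algebraMap A K U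
  obtain ⟨c, hc⟩ := strong_approximation_integral T (fun _ => (-τ / u ^ f k₀ - 1) / u) N
    fun w hw => by
      simp only [u, map_div₀, hU w (mem_T.1 hw), div_one]
      refine Valuation.map_sub_le _ ?_ (by rw [map_one])
      simpa [hU w (mem_T.1 hw)] using hτ w (mem_T.1 hw)
  refine ⟨c, fun m => ?_⟩
  obtain ⟨k, hmk, hk⟩ := hk₀ m
  refine ⟨k, hmk, fun w hwD => (?_ : _ ≤ exp (-(N : ℤ))).trans (hN w (mem_T.2 hwD))⟩
  have hu : u ≠ 0 := fun h => by simpa [u, h] using hU w hwD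
  have split : τ + algebraMap A K (U ^ f k * (1 + U * c)) =
      u ^ (f k₀ + 1) * (algebraMap A K c - (-τ / u ^ f k₀ - 1) / u) +
        algebraMap A K ((U ^ f k - U ^ f k₀) * (1 + U * c)) := by
    simp only [map_sub, map_mul, map_pow, map_add, map_one, u] at hu ⊢
    field_simp
    ring
  rw [split]
  refine Valuation.map_add_le _ ?_ ?_
  · rw [map_mul, map_pow, hU w hwD, one_pow, one_mul]
    exact hc w (mem_T.2 hwD)
  · rw [valuation_algebraMap_le_exp_iff_mem_pow]
    have I_le : I ≤ w.asIdeal ^ N := Ideal.le_of_dvd (Finset.dvd_prod_of_mem _ (mem_T.2 hwD))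
    exact Ideal.mul_mem_right _ _ (I_le hk)

omit [IsDedekindDomain A] [IsFractionRing A K] in
lemma mul_sub_mem_range_algebraMap {U : A} {e x : K}
    (hUe : algebraMap A K U * e ∈ (algebraMap A K).range) (hx : x - e ∈ (algebraMap A K).range)
    (b : A) : algebraMap A K (1 + U * b) * x - e ∈ (algebraMap A K).range := by
  have split : algebraMap A K (1 + U * b) * x - e = algebraMap A K (1 + U * b) * (x - e) +
      algebraMap A K b * (algebraMap A K U * e) := by
    rw [map_add, map_mul, map_one]
    ring
  rw [split]
  exact add_mem (mul_mem ⟨_, rfl⟩ hx) (mul_mem ⟨_, rfl⟩ hUe)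

variable {v : HeightOneSpectrum A} {e : K}

lemma ne_zero_of_sub_mem_range_algebraMap (he : 1 < v.valuation K e) {τ : K}
    (hτ : τ - e ∈ (algebraMap A K).range) : τ ≠ 0 := by
  rintro rfl
  obtain ⟨a, ha⟩ := hτ
  have le_one : v.valuation K (algebraMap A K a) ≤ 1 := v.valuation_le_one a
  rw [ha, zero_sub, Valuation.map_neg] at le_one
  exact he.not_ge le_one

lemma exists_unit_one_sub_mul_mem_range_algebraMap [Ring.HasFiniteQuotients A] {ε : Aˣ}
    (hε : ∀ n : ℕ, 0 < n → ε ^ n ≠ 1)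
    (he : ∀ w : HeightOneSpectrum A, w ≠ v → w.valuation K e ≤ 1) :
    ∃ η : Aˣ, (1 - (η : A)) ≠ 0 ∧ algebraMap A K (1 - (η : A)) * e ∈ (algebraMap A K).range := by
  obtain ⟨d, hd⟩ := exists_forall_le_exp {v} fun w => w.valuation K e
  obtain ⟨i, hi, hiv⟩ :=
    exists_unit_pow_sub_one_mem ε (I := v.asIdeal ^ d) (pow_ne_zero _ v.ne_bot)
  refine ⟨ε ^ i, fun h => hε i hi (Units.ext (sub_eq_zero.1 h).symm),
    mem_range_algebraMap_of_valuation_le_one fun w => ?_⟩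
  rw [map_mul]
  by_cases hw : w = v
  · rw [← neg_sub, map_neg, Valuation.map_neg, hw]
    calc v.valuation K (algebraMap A K ((ε ^ i : Aˣ) - 1)) * v.valuation K e
        ≤ exp (-(d : ℤ)) * exp (d : ℤ) :=
          mul_le_mul' ((valuation_algebraMap_le_exp_iff_mem_pow v _ d).2 hiv) (hd v (by simp))
      _ = 1 := by rw [← exp_add, neg_add_cancel, exp_zero]
  · exact mul_le_one' (w.valuation_le_one _) (he w hw)

lemma valuation_one_add_mul_eq_one {y τ : K} (he : 1 < v.valuation K e)
    (hy : v.valuation K (y * e ^ 2) ≤ 1) (hτ : v.valuation K (τ - e) ≤ 1) :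
    v.valuation K (1 + y * τ) = 1 := by
  have lt_one : v.valuation K (y * τ) < 1 := by
    rw [map_mul, valuation_eq_of_sub_le_one _ hτ he]
    rw [map_mul, map_pow, sq, ← mul_assoc] at hy
    by_contra! one_le
    exact hy.not_gt (he.trans_le (le_mul_of_one_le_left' one_le))
  rw [Valuation.map_add_eq_of_lt_left _ (by rwa [map_one]), map_one]

-- At `v` the difference is `(τ - e + φ - e * (y * τ)) / (1 + y * τ)`, with denominator a unit.
lemma div_sub_mem_range_algebraMap (he : ∀ w : HeightOneSpectrum A, w ≠ v → w.valuation K e ≤ 1)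
    (hev : 1 < v.valuation K e) {y τ : K} (hy : v.valuation K (y * e ^ 2) ≤ 1)
    (hτ : τ - e ∈ (algebraMap A K).range) (φ : A)
    (hφ : ∀ w : HeightOneSpectrum A, w.valuation K (1 + y * τ) < 1 →
      w.valuation K (τ + algebraMap A K φ) ≤ w.valuation K (1 + y * τ)) :
    (τ + algebraMap A K φ) / (1 + y * τ) - e ∈ (algebraMap A K).range := by
  have hτe (w : HeightOneSpectrum A) : w.valuation K (τ - e) ≤ 1 := by
    obtain ⟨a, ha⟩ := hτ
    exact ha ▸ w.valuation_le_one a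
  have hDv := valuation_one_add_mul_eq_one hev hy (hτe v)
  have hD : 1 + y * τ ≠ 0 := fun h => by simp [h] at hDv
  refine mem_range_algebraMap_of_valuation_le_one fun w => ?_
  by_cases hw : w = v
  · have at_pole : (τ + algebraMap A K φ) / (1 + y * τ) - e =
        (τ - e + algebraMap A K φ - e * (y * τ)) / (1 + y * τ) := by
      rw [eq_div_iff hD, sub_mul, div_mul_cancel₀ _ hD]
      ring
    rw [hw, at_pole, map_div₀, hDv, div_one]
    refine Valuation.map_sub_le _ (Valuation.map_add_le _ (hτe v) (v.valuation_le_one φ)) ?_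
    rwa [map_mul, map_mul, valuation_eq_of_sub_le_one _ (hτe v) hev, mul_left_comm, ← sq, ← map_pow,
      ← map_mul]
  · refine Valuation.map_sub_le _ ?_ (he w hw)
    rw [map_div₀, div_le_iff₀ (by simpa [zero_lt_iff] using hD), one_mul]
    by_cases hwD : w.valuation K (1 + y * τ) < 1
    · exact hφ w hwD
    · refine le_trans (Valuation.map_add_le _ ?_ (w.valuation_le_one φ)) (not_lt.1 hwD)
      rw [← sub_add_cancel τ e]
      exact Valuation.map_add_le _ (hτe w) (he w hw)

lemma exists_sub_mem_range_algebraMap_one_le_valuation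
    (he : ∀ w : HeightOneSpectrum A, w ≠ v → w.valuation K e ≤ 1) (hev : 1 < v.valuation K e)
    {y : K} (hy : v.valuation K (y * e ^ 2) ≤ 1) {U : A} (hU : U ≠ 0) :
    ∃ τ : K, τ - e ∈ (algebraMap A K).range ∧ ∀ w : HeightOneSpectrum A,
      w.valuation K (algebraMap A K U) < 1 → 1 ≤ w.valuation K (1 + y * τ) := by
  classical
  have hUK : algebraMap A K U ≠ 0 := by simpa using hU
  let T := (finite_setOf_valuation_lt_one (A := A) hUK).toFinset.erase v
  obtain ⟨β, hβ⟩ := exists_one_le_valuation_one_add_mul T (e := e)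
    (fun w hw => he w (Finset.ne_of_mem_erase hw)) y
  refine ⟨e + algebraMap A K β, ⟨β, by ring⟩, fun w hw => ?_⟩
  by_cases hwv : w = v
  · rw [hwv, valuation_one_add_mul_eq_one hev hy]
    simpa using v.valuation_le_one β
  · exact hβ w (Finset.mem_erase.2 ⟨hwv, by simpa using hw⟩)

lemma hasCertificate_of_mul_eq_one (hev : 1 < v.valuation K e) {y τ : K} {U b g φ : A}
    (hUe : algebraMap A K U * e ∈ (algebraMap A K).range)
    (hτ : τ - e ∈ (algebraMap A K).range) (hD : 1 + y * τ ≠ 0)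
    (hτ₀ : (τ + algebraMap A K φ) / (1 + y * τ) - e ∈ (algebraMap A K).range)
    (h : (1 + U * b) * (1 - φ * (1 + U * g)) = 1) :
    HasCertificate ((algebraMap A K).range : Set K) e y := by
  set τ₀ : K := (τ + algebraMap A K φ) / (1 + y * τ)
  have hτ₂ := mul_sub_mem_range_algebraMap hUe hτ g
  have hτ₃ := mul_sub_mem_range_algebraMap hUe hτ₀ b
  have ne_zero {x : K} := ne_zero_of_sub_mem_range_algebraMap (τ := x) hev
  have inv_eq : (algebraMap A K (1 + U * b))⁻¹ =
      1 - algebraMap A K φ * algebraMap A K (1 + U * g) := by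
    apply inv_eq_of_mul_eq_one_right
    rw [← map_mul, ← map_one (algebraMap A K), ← map_sub, ← map_mul, h]
  let σ : Fin 4 → K := ![τ₀, τ, algebraMap A K (1 + U * g) * τ, algebraMap A K (1 + U * b) * τ₀]
  have hσ (i) : σ i - e ∈ (algebraMap A K).range := by
    fin_cases i
    exacts [hτ₀, hτ, hτ₂, hτ₃]
  exact ⟨σ, fun i => (σ i)⁻¹, fun i => inv_mul_cancel₀ (ne_zero (hσ i)), hσ,
    eq_inv_sub_inv_add (ne_zero hτ₀) (ne_zero hτ) (left_ne_zero_of_mul (ne_zero hτ₂)) inv_eq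
      (div_mul_cancel₀ _ hD)⟩

-- With `U = 1 - η` and `V = 1 + U c`, the four elements are `(τ + U ^ p ^ k V) / (1 + y τ)`, `τ`,
-- `G τ` and `η⁻ⁿ (τ + U ^ p ^ k V) / (1 + y τ)`, where `1 - η ^ n = U ^ p ^ k V G`. They are
-- congruent to `e` because `U e` is integral.
theorem hasCertificate_of_valuation_le_one [Ring.HasFiniteQuotients A] (p : ℕ) [Fact p.Prime]
    [CharP A p] {ε : Aˣ} (hε : ∀ n : ℕ, 0 < n → ε ^ n ≠ 1)
    (he : ∀ w : HeightOneSpectrum A, w ≠ v → w.valuation K e ≤ 1) (hev : 1 < v.valuation K e)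
    {y : K} (hy : v.valuation K (y * e ^ 2) ≤ 1) :
    HasCertificate ((algebraMap A K).range : Set K) e y := by
  obtain ⟨η, hU, hUe⟩ := exists_unit_one_sub_mul_mem_range_algebraMap hε he
  obtain ⟨τ, hτ, hUD⟩ := exists_sub_mem_range_algebraMap_one_le_valuation he hev hy hU
  have hτe (w : HeightOneSpectrum A) : w.valuation K (τ - e) ≤ 1 := by
    obtain ⟨a, ha⟩ := hτ
    exact ha ▸ w.valuation_le_one a
  have hDv : v.valuation K (1 + y * τ) = 1 := valuation_one_add_mul_eq_one hev hy (hτe v)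
  have hD : 1 + y * τ ≠ 0 := fun h => by simp [h] at hDv
  have hUw (w : HeightOneSpectrum A) (hw : w.valuation K (1 + y * τ) < 1) :
      w.valuation K (algebraMap A K (1 - (η : A))) = 1 :=
    le_antisymm (w.valuation_le_one _) (not_lt.1 fun h => (hUD w h).not_gt hw)
  have hτw (w : HeightOneSpectrum A) (hw : w.valuation K (1 + y * τ) < 1) :
      w.valuation K τ ≤ 1 := by
    rw [← sub_add_cancel τ e]
    refine Valuation.map_add_le _ (hτe w) (he w ?_)
    rintro rfl
    exact hw.ne hDv
  obtain ⟨c, hc⟩ := exists_valuation_add_pow_mul_le hD hUw hτw (p ^ ·)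
  have hV : 1 + (1 - (η : A)) * c ≠ 0 := fun h =>
    ne_zero_of_sub_mem_range_algebraMap hev
      (mul_sub_mem_range_algebraMap (x := e) hUe (by simp) c) (by rw [h, map_zero, zero_mul])
  obtain ⟨k, b, g, hk, hbg⟩ := exists_one_add_mul_mul_eq_one (p := p) η hV hc
  exact hasCertificate_of_mul_eq_one hev hUe hτ hD
    (div_sub_mem_range_algebraMap he hev hy hτ _ hk) hbg

end Completeness

section RingOfIntegers

open Polynomial IsDedekindDomain FunctionField
open scoped RatFunc

instance hasFiniteQuotients_polynomial {k : Type*} [Field k] [Finite k] :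
    Ring.HasFiniteQuotients k[X] where
  finiteQuotient {I} hI := by
    obtain ⟨q, hqI, hq⟩ := Submodule.exists_mem_ne_zero_of_ne_bot hI
    have := (finite_setOf_natDegree_le (k := k) q.natDegree).to_subtype
    refine Finite.of_surjective
      (fun r : {r : k[X] | r.natDegree ≤ q.natDegree} => Ideal.Quotient.mk I r.1) fun x => ?_
    obtain ⟨r, rfl⟩ := Ideal.Quotient.mk_surjective x
    refine ⟨⟨r % q, natDegree_le_natDegree (EuclideanDomain.mod_lt r hq).le⟩, ?_⟩
    have sub_eq : r % q - r = -(q * (r / q)) := by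
      rw [EuclideanDomain.mod_eq_sub_mul_div, sub_sub_cancel_left]
    simpa only [Ideal.Quotient.eq, sub_eq] using I.neg_mem (I.mul_mem_right _ hqI)

variable {p : ℕ} [hp : Fact p.Prime] {K : Type*} [Field K] [Algebra (ZMod p)[X] K]
  [Algebra (ZMod p)⟮X⟯ K] [IsScalarTower (ZMod p)[X] (ZMod p)⟮X⟯ K]
  [FiniteDimensional (ZMod p)⟮X⟯ K] [Algebra.IsSeparable (ZMod p)⟮X⟯ K]

instance hasFiniteQuotients_ringOfIntegers :
    Ring.HasFiniteQuotients (ringOfIntegers (ZMod p) K) :=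
  .of_module_finite (ZMod p)[X] _

lemma isIntegral_iff_forall_valuation_le_one {x : K} : IsIntegral (ZMod p)[X] x ↔
    ∀ w : HeightOneSpectrum (ringOfIntegers (ZMod p) K), w.valuation K x ≤ 1 := by
  refine ⟨fun hx w => w.valuation_le_one (⟨x, hx⟩ : ringOfIntegers (ZMod p) K), fun hx => ?_⟩
  obtain ⟨a, rfl⟩ := HeightOneSpectrum.mem_integers_of_valuation_le_one K x hx
  exact a.2

end RingOfIntegers

section Certificates

open Polynomial WithZero IsDedekindDomain FunctionField
open scoped RatFunc

lemma IsDiophantine.hasCertificate {K : Type*} [Field K] {S : Set K} (hS : IsDiophantineSet S)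
    {ι : Type} {e y : (ι → K) → K} (he : IsPolynomialFun e) (hy : IsPolynomialFun y) :
    IsDiophantine fun x => HasCertificate S (e x) (y x) := by
  have base : IsDiophantine fun x : Fin 2 → K => HasCertificate S (x 0) (x 1) := by
    refine exists_fun (exists_fun (.and ?_ (.and ?_ ?_)))
    · exact (forall_finset Finset.univ fun i _ =>
        .eq (.mul (.coord (Sum.inr i)) (.coord (Sum.inl (Sum.inr i)))) (.const 1)).of_iff
          fun x => by simp
    · exact (forall_finset Finset.univ fun i _ =>
        .mem hS (.sub (.coord (Sum.inl (Sum.inr i))) (.coord (Sum.inl (Sum.inl 0))))).of_iff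
          fun x => by simp
    · exact .eq (.coord _) (.add (.sub (.coord _) (.coord _))
        (.mul (.coord _) (.sub (.coord _) (.coord _))))
  exact base.comp (g := ![e, y]) (Fin.forall_fin_two.2 ⟨he, hy⟩)

variable {p : ℕ} [hp : Fact p.Prime] {K : Type*} [Field K] [CharP K p] [Algebra (ZMod p)[X] K]
  [Algebra (ZMod p)⟮X⟯ K] [IsScalarTower (ZMod p)[X] (ZMod p)⟮X⟯ K]
  [FiniteDimensional (ZMod p)⟮X⟯ K] [Algebra.IsSeparable (ZMod p)⟮X⟯ K]

variable (p K) in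
/-- A chosen finite set of representatives of `integralDual p K` modulo Cartier defects. -/
noncomputable def dualRepresentatives : Set K :=
  (exists_finite_representatives_integralDual p K).choose

variable (p K) in
/-- A Diophantine set containing `integralDual p K` that is still small enough for
`integralDual p K` to be recovered from it prime by prime. -/
def diophantineDual : Set K :=
  {f | ∃ c ∈ dualRepresentatives p K, ∃ σ : Fin p → K, f = c + cartierDefect σ}

lemma finite_dualRepresentatives : (dualRepresentatives p K).Finite :=
  (exists_finite_representatives_integralDual p K).choose_spec.1

lemma dualRepresentatives_subset : dualRepresentatives p K ⊆ integralDual p K :=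
  (exists_finite_representatives_integralDual p K).choose_spec.2.1

lemma integralDual_subset_diophantineDual :
    (integralDual p K : Set K) ⊆ diophantineDual p K :=
  (exists_finite_representatives_integralDual p K).choose_spec.2.2

variable (p K) in
lemma isDiophantineSet_diophantineDual : IsDiophantineSet (diophantineDual p K) := by
  refine (IsDiophantine.exists_finset finite_dualRepresentatives.toFinset fun c _ =>
    IsDiophantine.exists_fun (P := fun (x : Unit → K) (σ : Fin p → K) =>
      x () = c + cartierDefect σ) ?_).of_iff fun x => by simp [diophantineDual]
  exact .eq (.coord _) (.add (.const c) (.sub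
    (.sum _ fun i => .mul (.pow (.coord (Sum.inr i)) p) (.const _)) (.coord _)))

omit [CharP K p] in
lemma valuation_cartierDefect_le_one (w : HeightOneSpectrum (ringOfIntegers (ZMod p) K))
    {σ : Fin p → K} (hσ : ∀ i, w.valuation K (σ i) ≤ 1) :
    w.valuation K (cartierDefect σ) ≤ 1 := by
  have coord_le := isIntegral_iff_forall_valuation_le_one.1 (isIntegral_coord (p := p) (K := K)) w
  refine Valuation.map_sub_le _ (Valuation.map_sum_le _ fun i _ => ?_) (hσ _)
  rw [map_mul, map_pow, map_pow]
  exact mul_le_one' (pow_le_one' (hσ i) _) (pow_le_one' coord_le _)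

-- Otherwise every prime `w` has some `f i`, hence some `c + cartierDefect σ` close to `-f₀`,
-- without a pole at `w`; gluing the `σ` by strong approximation puts `f₀` in
-- `integralDual p K` up to a Cartier defect, and both have trace with zero residue.
theorem exists_common_pole {ι : Type*} {f : ι → K} {f₀ : K}
    (hf : ∀ i, f i - f₀ ∈ diophantineDual p K) (hf₀ : f₀ ∉ traceResidueZero p K) :
    ∃ w : HeightOneSpectrum (ringOfIntegers (ZMod p) K), ∀ i, 1 < w.valuation K (f i) := by
  by_contra! no_pole
  choose i hi using no_pole
  choose c hc σ hσ using fun w => hf (i w)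
  have poles := HeightOneSpectrum.Support.finite (ringOfIntegers (ZMod p) K) f₀
  choose ρ hρ hρ' using fun j => strong_approximation poles.toFinset (fun w => -σ w j) 0
  suffices f₀ - cartierDefect ρ ∈ integralDual p K by
    refine hf₀ ?_
    simpa using add_mem (mem_traceResidueZero_of_mem_integralDual this)
      (cartierDefect_mem_traceResidueZero ρ)
  refine mem_of_forall_exists_valuation_sub_le_one (ringOfIntegers.not_isField (ZMod p) K)
    (Submodule.one_le.2 (mem_integralDual_of_isIntegral isIntegral_one)) fun w => ?_
  by_cases hw : w ∈ poles.toFinset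
  · refine ⟨-c w, neg_mem (dualRepresentatives_subset (hc w)), ?_⟩
    have eq_sub : f₀ - cartierDefect ρ - -c w = f (i w) - cartierDefect (ρ + σ w) := by
      rw [cartierDefect_add]
      linear_combination -hσ w
    rw [eq_sub]
    exact Valuation.map_sub_le _ (hi w) (valuation_cartierDefect_le_one w fun j => by
      simpa using hρ j w hw)
  · refine ⟨0, zero_mem _, ?_⟩
    rw [sub_zero]
    exact Valuation.map_sub_le _ (by simpa [HeightOneSpectrum.Support] using hw)
      (valuation_cartierDefect_le_one w fun j => hρ' j w hw)

theorem HasCertificate.exists_pole_and_zero {e y : K} (h : HasCertificate (diophantineDual p K) e y)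
    (he : e ∉ traceResidueZero p K) : ∃ w : HeightOneSpectrum (ringOfIntegers (ZMod p) K),
      1 < w.valuation K e ∧ w.valuation K y < 1 := by
  obtain ⟨τ, b, hb, hτ, rfl⟩ := h
  obtain ⟨w, hw⟩ := exists_common_pole (f := fun i : Option (Fin 4) => i.elim e τ)
    (Option.forall.2 ⟨by simpa using integralDual_subset_diophantineDual (zero_mem _), hτ⟩) he
  have b_lt (i : Fin 4) : w.valuation K (b i) < 1 := by
    rw [eq_inv_of_mul_eq_one_left (hb i), map_inv₀]
    exact inv_lt_one_of_one_lt₀ (hw (some i))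
  refine ⟨w, hw none, Valuation.map_add_lt _ (Valuation.map_sub_lt _ (b_lt 0) (b_lt 1)) ?_⟩
  rw [map_mul]
  exact mul_lt_one_of_nonneg_of_lt_one_left zero_le (b_lt 2)
    (Valuation.map_sub_lt _ (b_lt 0) (b_lt 3)).le

theorem hasCertificate_diophantineDual {ε : (ringOfIntegers (ZMod p) K)ˣ}
    (hε : ∀ n, 0 < n → ε ^ n ≠ 1) {v : HeightOneSpectrum (ringOfIntegers (ZMod p) K)} {e y : K}
    (he : ∀ w ≠ v, w.valuation K e ≤ 1) (hev : 1 < v.valuation K e)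
    (hy : v.valuation K (y * e ^ 2) ≤ 1) {e' : K} (he' : IsIntegral (ZMod p)[X] (e - e')) :
    HasCertificate (diophantineDual p K) e' y := by
  have : CharP (ringOfIntegers (ZMod p) K) p :=
    (RingHom.charP_iff _ (IsFractionRing.injective _ K) p).2 inferInstance
  refine (hasCertificate_of_valuation_le_one p hε he hev hy).mono ?_
  rintro x ⟨a, ha⟩
  refine integralDual_subset_diophantineDual (mem_integralDual_of_isIntegral ?_)
  have eq_add : x - e' = algebraMap _ K a + (e - e') := by
    rw [ha]
    ring
  exact eq_add ▸ a.2.add he'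

omit [CharP K p] in
variable (p K) in
theorem exists_unique_pole_notMem_traceResidueZero : ∃ d : ℕ,
    ∀ v : HeightOneSpectrum (ringOfIntegers (ZMod p) K), ∃ e ∉ traceResidueZero p K,
      (∀ w ≠ v, w.valuation K e ≤ 1) ∧ 1 < v.valuation K e ∧ v.valuation K e ≤ exp (d : ℤ) := by
  obtain ⟨h, h_ne, h_mul⟩ := exists_denominator_integralDual p K
  obtain ⟨N, hN⟩ := exists_forall_exp_neg_le_valuation (ringOfIntegers (ZMod p) K) h_ne
  refine ⟨N + 1, fun v => ?_⟩
  obtain ⟨f, hfv, hf⟩ := exists_valuation_eq_exp K v N.succ_ne_zero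
  have notMem_dual : f ∉ integralDual p K := fun hmem => by
    have mul_le := isIntegral_iff_forall_valuation_le_one.1 (h_mul f hmem) v
    rw [map_mul, hfv] at mul_le
    have := (mul_le_mul_right (hN v) _).trans mul_le
    rw [← exp_add, ← exp_zero, exp_le_exp] at this
    omega
  obtain ⟨a, ha, hfa⟩ : ∃ a, IsIntegral (ZMod p)[X] a ∧ f * a ∉ traceResidueZero p K := by
    contrapose! notMem_dual
    exact mem_integralDual_of_forall_mul_mem notMem_dual
  have a_le := isIntegral_iff_forall_valuation_le_one.1 ha
  have mul_le (w) (hw : w ≠ v) : w.valuation K (f * a) ≤ 1 := by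
    rw [map_mul]
    exact mul_le_one' (hf w hw) (a_le w)
  refine ⟨f * a, hfa, mul_le, ?_, ?_⟩
  · contrapose! hfa
    exact mem_traceResidueZero_of_mem_integralDual (mem_integralDual_of_isIntegral
      (isIntegral_iff_forall_valuation_le_one.2 fun w => (eq_or_ne w v).elim (· ▸ hfa) (mul_le w)))
  · rw [map_mul, hfv]
    exact mul_le_of_le_one_right' (a_le v)

lemma valuation_mul_sq_le_one {L : Type*} [Field L] (v : Valuation L ℤᵐ⁰) {d : ℕ} {e y : L}
    (he : v e ≤ exp (d : ℤ)) (hy : v y ≤ exp (-(2 * d : ℕ) : ℤ)) : v (y * e ^ 2) ≤ 1 := by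
  rw [map_mul, map_pow]
  refine (mul_le_mul' hy (pow_le_pow_left' he 2)).trans_eq ?_
  rw [← exp_nsmul, ← exp_add, ← exp_zero]
  push_cast
  simp

theorem exists_isDiophantineSet_neighborhood {ε : (ringOfIntegers (ZMod p) K)ˣ}
    (hε : ∀ n, 0 < n → ε ^ n ≠ 1) (v : HeightOneSpectrum (ringOfIntegers (ZMod p) K)) :
    ∃ (W : Set K) (d : ℕ), IsDiophantineSet W ∧
      (∀ y, v.valuation K y ≤ exp (-(d : ℤ)) → y ∈ W) ∧ ∀ y ∈ W, v.valuation K y < 1 := by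
  obtain ⟨d, hd⟩ := exists_unique_pole_notMem_traceResidueZero p K
  obtain ⟨e, he, he_le, hev, hevd⟩ := hd v
  refine ⟨{y | HasCertificate (diophantineDual p K) e y}, 2 * d,
    .hasCertificate (isDiophantineSet_diophantineDual p K) (.const e) (.coord ()),
    fun y hy => hasCertificate_diophantineDual hε he_le hev (valuation_mul_sq_le_one _ hevd hy)
      (by simpa using isIntegral_zero), fun y hy => ?_⟩
  obtain ⟨w, hwe, hwy⟩ := HasCertificate.exists_pole_and_zero hy he
  rcases eq_or_ne w v with rfl | hw
  · exact hwy
  · exact absurd hwe (he_le w hw).not_gt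

end Certificates

section Separable

open Polynomial
open scoped RatFunc

variable {p : ℕ} [hp : Fact p.Prime] {K : Type*} [Field K] [CharP K p] {t : K}

lemma minpoly_frobenius_fieldRange (ht : ∀ x, x ^ p ≠ t) :
    minpoly (frobenius K p).fieldRange t =
      X ^ p - C (⟨t ^ p, t, rfl⟩ : (frobenius K p).fieldRange) := by
  refine (minpoly.eq_of_irreducible_of_monic (X_pow_sub_C_irreducible_of_prime hp.out ?_) ?_
    (monic_X_pow_sub_C _ hp.out.ne_zero)).symm
  · rintro ⟨_, z, rfl⟩ hz
    exact ht z (frobenius_inj K p (congrArg Subtype.val hz))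
  · simp only [map_sub, map_pow, aeval_X, aeval_C]
    exact sub_self _

lemma linearIndependent_frobenius_fieldRange_pow (ht : ∀ x, x ^ p ≠ t) :
    LinearIndependent (frobenius K p).fieldRange fun i : Fin p => t ^ (i : ℕ) := by
  have natDegree_eq : (minpoly (frobenius K p).fieldRange t).natDegree = p := by
    rw [minpoly_frobenius_fieldRange ht, natDegree_X_pow_sub_C]
  exact (linearIndependent_equiv (finCongr natDegree_eq)).1 (linearIndependent_pow t)

lemma mem_range_of_pow_eq_sum (ht : ∀ x, x ^ p ≠ t) {x : K} {g : Fin p → K}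
    (h : x ^ p = ∑ i, g i ^ p * t ^ (i : ℕ)) : x ∈ Set.range g := by
  let toRange (z : K) : (frobenius K p).fieldRange := ⟨z ^ p, z, rfl⟩
  let zero : Fin p := ⟨0, hp.out.pos⟩
  have sum_eq : ∑ i, Pi.single (M := fun _ => (frobenius K p).fieldRange) zero (toRange x) i •
      t ^ (i : ℕ) = ∑ i, toRange (g i) • t ^ (i : ℕ) := by
    rw [Finset.sum_eq_single zero, Pi.single_eq_same]
    · simpa [Subfield.smul_def, toRange, zero] using h
    · intro j _ hj
      rw [Pi.single_eq_of_ne hj, zero_smul]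
    · simp
  have eq_zero := Fintype.linearIndependent_iffₛ.1
    (linearIndependent_frobenius_fieldRange_pow ht) _ _ sum_eq zero
  rw [Pi.single_eq_same] at eq_zero
  exact ⟨zero, frobenius_inj K p (congrArg Subtype.val eq_zero).symm⟩

variable [Algebra (ZMod p)[X] K] [Algebra (ZMod p)⟮X⟯ K]
  [IsScalarTower (ZMod p)[X] (ZMod p)⟮X⟯ K] [FiniteDimensional (ZMod p)⟮X⟯ K]

-- `1, t, …, t ^ (p - 1)` generate the separable closure over its `p`-th powers and remain linearly
-- independent over the `p`-th powers of `K`.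
lemma mem_separableClosure_of_pow_mem (hK : ∀ x : K, x ^ p ≠ coord p K) {x : K}
    (hx : x ^ p ∈ separableClosure (ZMod p)⟮X⟯ K) : x ∈ separableClosure (ZMod p)⟮X⟯ K := by
  let L := separableClosure (ZMod p)⟮X⟯ K
  have : CharP L p := (RingHom.charP_iff _ (algebraMap L K).injective p).2 inferInstance
  let : Algebra (ZMod p)[X] L :=
    ((algebraMap (ZMod p)⟮X⟯ L).comp (algebraMap (ZMod p)[X] (ZMod p)⟮X⟯)).toAlgebra
  have : IsScalarTower (ZMod p)[X] (ZMod p)⟮X⟯ L := .of_algebraMap_eq fun _ => rfl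
  have coord_eq : algebraMap L K (coord p L) = coord p K := by
    rw [coord_eq_algebraMap, coord_eq_algebraMap]
    rfl
  obtain ⟨g, hg⟩ := exists_eq_sum_pow_mul_coord_pow (⟨x ^ p, hx⟩ : L)
  have hg' := congrArg (algebraMap L K) hg
  simp only [map_sum, map_mul, map_pow, coord_eq] at hg'
  obtain ⟨i, rfl⟩ := mem_range_of_pow_eq_sum hK hg'
  exact (g i).2

lemma isSeparable_of_forall_pow_ne_coord (hK : ∀ x : K, x ^ p ≠ coord p K) :
    Algebra.IsSeparable (ZMod p)⟮X⟯ K := by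
  let L := separableClosure (ZMod p)⟮X⟯ K
  have : ExpChar (ZMod p)⟮X⟯ p := .prime hp.out
  have : ExpChar L p := expChar_of_injective_algebraMap (algebraMap (ZMod p)⟮X⟯ L).injective p
  have := separableClosure.isPurelyInseparable (ZMod p)⟮X⟯ K
  have mem_of_pow_mem (n : ℕ) (x : K) (hx : x ^ p ^ n ∈ L) : x ∈ L := by
    induction n with
    | zero => simpa using hx
    | succ n ih =>
      refine ih (mem_separableClosure_of_pow_mem hK ?_)
      rwa [← pow_mul, ← pow_succ]
  refine (separableClosure.eq_top_iff ..).1 (eq_top_iff.2 fun x _ => ?_)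
  obtain ⟨n, y, hy⟩ := IsPurelyInseparable.pow_mem L p x
  exact mem_of_pow_mem n x (hy ▸ y.2)

end Separable

section SeparatingElements

open Polynomial
open scoped RatFunc

variable {p : ℕ} [hp : Fact p.Prime] {K : Type*} [Field K] [Algebra (ZMod p) K]

/-- An element `t` of a function field over `𝔽_p` is separating if it is transcendental and not a
`p`-th power; equivalently, the field is a finite separable extension of `𝔽_p(t)`. -/
structure IsSeparatingElement (p : ℕ) {K : Type*} [Field K] [Algebra (ZMod p) K] (t : K) :
    Prop where
  transcendental : Transcendental (ZMod p) t
  pow_ne : ∀ x, x ^ p ≠ t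

/-- `K` is a function field in one variable over its prime field `𝔽_p`. The coordinate is not part
of the data, because the argument changes it. -/
structure IsGlobalFunctionField (p : ℕ) [Fact p.Prime] (K : Type*) [Field K] [Algebra (ZMod p) K] :
    Prop where
  essFiniteType : Algebra.EssFiniteType (ZMod p) K
  trdeg_eq_one : Algebra.trdeg (ZMod p) K = 1

lemma isTranscendenceBasis_of_transcendental {k A : Type*} [CommRing k] [Nontrivial k] [CommRing A]
    [NoZeroDivisors A] [Algebra k A] (htrdeg : Algebra.trdeg k A = 1) {s : A}
    (hs : Transcendental k s) : IsTranscendenceBasis k fun _ : Unit => s :=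
  (algebraicIndependent_unique_type_iff.2 hs).isTranscendenceBasis_of_lift_trdeg_le_of_finite
    (by simp [htrdeg])

lemma IsGlobalFunctionField.finiteDimensional (hK : IsGlobalFunctionField p K) {s : K}
    (hs : Transcendental (ZMod p) s) :
    FiniteDimensional (IntermediateField.adjoin (ZMod p) {s}) K := by
  have := hK.essFiniteType
  have : Algebra.EssFiniteType (IntermediateField.adjoin (ZMod p) {s}) K := .of_comp (ZMod p) _ _
  have range_eq : Set.range (fun _ : Unit => s) = {s} := Set.range_const
  have : Algebra.IsAlgebraic (IntermediateField.adjoin (ZMod p) {s}) K :=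
    range_eq ▸ (isTranscendenceBasis_of_transcendental hK.trdeg_eq_one hs).isAlgebraic_field
  exact Algebra.finite_of_essFiniteType_of_isAlgebraic

theorem exists_algebra_coord_eq [CharP K p] (hK : IsGlobalFunctionField p K) {t : K}
    (ht : IsSeparatingElement p t) :
    ∃ (_ : Algebra (ZMod p)[X] K) (_ : Algebra (ZMod p)⟮X⟯ K)
      (_ : IsScalarTower (ZMod p)[X] (ZMod p)⟮X⟯ K) (_ : FiniteDimensional (ZMod p)⟮X⟯ K)
      (_ : Algebra.IsSeparable (ZMod p)⟮X⟯ K), coord p K = t := by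
  let e := RatFunc.algEquivOfTranscendental t ht.transcendental
  let polyAlgebra : Algebra (ZMod p)[X] K := (aeval t).toRingHom.toAlgebra
  let ratFuncAlgebra : Algebra (ZMod p)⟮X⟯ K :=
    ((algebraMap (IntermediateField.adjoin (ZMod p) {t}) K).comp e.toRingEquiv.toRingHom).toAlgebra
  have tower : IsScalarTower (ZMod p)[X] (ZMod p)⟮X⟯ K := by
    refine .of_algebraMap_eq fun q => ?_
    change aeval t q = algebraMap (IntermediateField.adjoin (ZMod p) {t}) K (e (algebraMap _ _ q))
    rw [RatFunc.algEquivOfTranscendental_algebraMap, ← aeval_algebraMap_apply]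
    rfl
  have finite : FiniteDimensional (ZMod p)⟮X⟯ K :=
    (RingHom.finite_algebraMap.2 (hK.finiteDimensional ht.transcendental)).comp
      (RingHom.Finite.of_surjective e.toRingEquiv.toRingHom e.surjective)
  have coord_eq : coord p K = t := aeval_X t
  exact ⟨polyAlgebra, ratFuncAlgebra, tower, finite,
    isSeparable_of_forall_pow_ne_coord fun x => coord_eq ▸ ht.pow_ne x, coord_eq⟩

lemma algebraMap_polynomial_eq_aeval_coord [Algebra (ZMod p)[X] K] :
    algebraMap (ZMod p)[X] K = (aeval (coord p K)).toRingHom :=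
  ringHom_ext' (Subsingleton.elim _ _) (aeval_X _).symm

lemma isIntegral_polynomial_iff [Algebra (ZMod p)[X] K] {x : K} :
    IsIntegral (ZMod p)[X] x ↔ IsIntegral (Algebra.adjoin (ZMod p) {coord p K}) x := by
  let A := Algebra.adjoin (ZMod p) {coord p K}
  let evalCoord : (ZMod p)[X] →ₐ[ZMod p] A :=
    aeval ⟨coord p K, Algebra.self_mem_adjoin_singleton _ _⟩
  let : Algebra (ZMod p)[X] A := evalCoord.toRingHom.toAlgebra
  have coe_evalCoord (q : (ZMod p)[X]) : (evalCoord q : K) = aeval (coord p K) q :=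
    (aeval_algebraMap_apply K (⟨coord p K, _⟩ : A) q).symm
  have : IsScalarTower (ZMod p)[X] A K :=
    .of_algebraMap_eq fun q =>
      (RingHom.congr_fun algebraMap_polynomial_eq_aeval_coord q).trans (coe_evalCoord q).symm
  have evalCoord_surjective : Function.Surjective evalCoord := by
    rintro ⟨y, hy⟩
    obtain ⟨q, rfl⟩ := (Algebra.adjoin_singleton_eq_range_aeval (ZMod p) (coord p K)).le hy
    exact ⟨q, Subtype.ext (coe_evalCoord q)⟩
  have : Algebra.IsIntegral (ZMod p)[X] A := .of_surjective (Algebra.ofId _ _) evalCoord_surjective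
  exact ⟨IsIntegral.tower_top, isIntegral_trans x⟩

end SeparatingElements

section Center

open IsDedekindDomain

variable {A K Γ₀ : Type*} [CommRing A] [IsDedekindDomain A] [Field K] [Algebra A K]
  [IsFractionRing A K] [LinearOrderedCommGroupWithZero Γ₀]

omit [IsDedekindDomain A] in
lemma exists_valuation_algebraMap_lt_one {w : Valuation K Γ₀} [w.IsNontrivial]
    (hw : ∀ a, w (algebraMap A K a) ≤ 1) : ∃ a : A, a ≠ 0 ∧ w (algebraMap A K a) < 1 := by
  by_contra! one_le
  obtain ⟨π, π_ne, hπ⟩ := Valuation.IsNontrivial.exists_lt_one (v := w)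
  obtain ⟨a, b, -, rfl⟩ := IsFractionRing.div_surjective (A := A) π
  have ne_zero {c : A} (hc : algebraMap A K c ≠ 0) : c ≠ 0 := fun h => hc (h ▸ map_zero _)
  obtain ⟨a_ne, b_ne⟩ := div_ne_zero_iff.1 π_ne
  rw [map_div₀, (hw a).antisymm (one_le a (ne_zero a_ne)),
    (hw b).antisymm (one_le b (ne_zero b_ne)), div_one] at hπ
  exact hπ.false

omit [IsDedekindDomain A] in
lemma exists_mem_asIdeal_iff_valuation_lt_one {w : Valuation K Γ₀} [w.IsNontrivial]
    (hw : ∀ a, w (algebraMap A K a) ≤ 1) :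
    ∃ v : HeightOneSpectrum A, ∀ a, a ∈ v.asIdeal ↔ w (algebraMap A K a) < 1 := by
  let center : Ideal A :=
    { carrier := {a | w (algebraMap A K a) < 1}
      zero_mem' := by simp
      add_mem' := fun ha hb => by
        simpa only [Set.mem_ofPred_eq, map_add] using w.map_add_lt ha hb
      smul_mem' := fun a b hb => by
        simpa only [Set.mem_ofPred_eq, smul_eq_mul, map_mul] using
          (mul_le_of_le_one_left' (hw a)).trans_lt hb }
  have mem_center (a : A) : a ∈ center ↔ w (algebraMap A K a) < 1 := Iff.rfl
  have center_prime : center.IsPrime := by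
    refine ⟨(Ideal.ne_top_iff_one _).2 (by simp [mem_center]), fun {a b} hab => ?_⟩
    contrapose! hab
    simp only [mem_center, not_lt, map_mul] at hab ⊢
    exact one_le_mul hab.1 hab.2
  obtain ⟨a, a_ne, ha⟩ := exists_valuation_algebraMap_lt_one hw
  exact ⟨⟨center, center_prime, (Submodule.ne_bot_iff _).2 ⟨a, ha, a_ne⟩⟩, mem_center⟩

theorem exists_isEquiv_valuation {w : Valuation K Γ₀} [w.IsNontrivial]
    (hw : ∀ a, w (algebraMap A K a) ≤ 1) :
    ∃ v : HeightOneSpectrum A, (v.valuation K).IsEquiv w := by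
  obtain ⟨v, hv⟩ := exists_mem_asIdeal_iff_valuation_lt_one hw
  have exists_eq {x : K} (hx : v.valuation K x ≤ 1) : ∃ a b : A,
      x * algebraMap A K b = algebraMap A K a ∧ w x = w (algebraMap A K a) := by
    obtain ⟨a, b, hab⟩ := v.exists_primeCompl_mul_eq_of_integer x hx
    have b_eq_one : w (algebraMap A K b) = 1 := (hw b).antisymm (not_lt.1 (mt (hv b).2 b.2))
    exact ⟨a, b, hab, by rw [← hab, map_mul, b_eq_one, mul_one]⟩
  refine ⟨v, Valuation.isEquiv_of_val_le_one fun x => ⟨fun hx => ?_, fun hx => ?_⟩⟩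
  · obtain ⟨a, b, -, hwx⟩ := exists_eq hx
    exact hwx ▸ hw a
  · by_contra! hvx
    have inv_lt : v.valuation K x⁻¹ < 1 := by
      rw [map_inv₀]
      exact inv_lt_one_of_one_lt₀ hvx
    obtain ⟨a, b, hab, hwx⟩ := exists_eq inv_lt.le
    have ha : v.valuation K (algebraMap A K a) < 1 := by
      rw [← hab, map_mul]
      exact (mul_le_of_le_one_right' (v.valuation_le_one b)).trans_lt inv_lt
    rw [v.valuation_lt_one_iff_mem, hv, ← hwx, map_inv₀,
      inv_lt_one₀ (zero_lt_iff.2 (w.ne_zero_iff.2 fun h => by simp [h] at hvx))] at ha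
    exact hx.not_gt ha

end Center

section Integrality

open Polynomial

variable {p : ℕ} {K : Type*} [Field K] [Algebra (ZMod p) K]

lemma IsSeparatingElement.inv {t : K} (ht : IsSeparatingElement p t) :
    IsSeparatingElement p t⁻¹ :=
  ⟨fun h => ht.transcendental (by simpa using h.inv),
    fun x hx => ht.pow_ne x⁻¹ (by rw [inv_pow, hx, inv_inv])⟩

variable [hp : Fact p.Prime]

lemma IsSeparatingElement.ne_zero {t : K} (ht : IsSeparatingElement p t) : t ≠ 0 :=
  fun h => ht.transcendental (h ▸ isAlgebraic_zero)

lemma algebraMap_zmod_mem (R : Subring K) (c : ZMod p) : algebraMap (ZMod p) K c ∈ R := by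
  rw [← ZMod.natCast_zmod_val c, map_natCast]
  exact natCast_mem R _

lemma toSubring_adjoin_zmod (s : Set K) :
    (Algebra.adjoin (ZMod p) s).toSubring = Subring.closure s := by
  let S : Subalgebra (ZMod p) K :=
    { Subring.closure s with algebraMap_mem' := algebraMap_zmod_mem _ }
  exact le_antisymm (Algebra.adjoin_le (S := S) Subring.subset_closure)
    (Subring.closure_le.2 Algebra.subset_adjoin)

lemma adjoin_zmod_le {R : Subring K} {s : K} (hs : s ∈ R) :
    (Algebra.adjoin (ZMod p) {s}).toSubring ≤ R := by
  rw [toSubring_adjoin_zmod]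
  exact Subring.closure_le.2 (Set.singleton_subset_iff.2 hs)

lemma isIntegral_of_isIntegral_adjoin {R : Subring K} {s x : K} (hs : s ∈ R)
    (hx : IsIntegral (Algebra.adjoin (ZMod p) {s}) x) : IsIntegral R x := by
  let : Algebra (Algebra.adjoin (ZMod p) {s}) R := (Subring.inclusion (adjoin_zmod_le hs)).toAlgebra
  have : IsScalarTower (Algebra.adjoin (ZMod p) {s}) R K := .of_algebraMap_eq fun _ => rfl
  exact hx.tower_top

lemma isIntegral_trans_adjoin {A : Type*} [CommRing A] [Algebra A K] {s x : K} (hs : IsIntegral A s)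
    (hx : IsIntegral (Algebra.adjoin (ZMod p) {s}) x) : IsIntegral A x :=
  isIntegral_trans (A := integralClosure A K) x
    (isIntegral_of_isIntegral_adjoin (R := (integralClosure A K).toSubring) hs hx)

lemma valuation_le_one_of_isIntegral_adjoin {Γ₀ : Type*} [LinearOrderedCommGroupWithZero Γ₀]
    {w : Valuation K Γ₀} {s x : K} (hs : w s ≤ 1)
    (hx : IsIntegral (Algebra.adjoin (ZMod p) {s}) x) : w x ≤ 1 :=
  (Valuation.integer.integers w).mem_of_integral (isIntegral_of_isIntegral_adjoin hs hx)

lemma isIntegral_adjoin_self {k A : Type*} [CommRing k] [CommRing A] [Algebra k A] (s : A) :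
    IsIntegral (Algebra.adjoin k {s}) s :=
  isIntegral_algebraMap (x := (⟨s, Algebra.self_mem_adjoin_singleton _ _⟩ : Algebra.adjoin k {s}))

lemma isIntegral_adjoin_pow_add_inv {k : Type*} [CommRing k] [Algebra k K] {t : K} (ht : t ≠ 0)
    {n : ℕ} (hn : n ≠ 0) : IsIntegral (Algebra.adjoin k {t ^ n + t⁻¹}) t := by
  let s : Algebra.adjoin k {t ^ n + t⁻¹} :=
    ⟨t ^ n + t⁻¹, Algebra.self_mem_adjoin_singleton _ _⟩
  refine ⟨X ^ (n + 1) + (C (-s) * X + C 1), monic_X_pow_add ?_, ?_⟩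
  · exact degree_linear_le.trans_lt (by exact_mod_cast Nat.lt_add_of_pos_left hn.bot_lt)
  · have algebraMap_s : algebraMap _ K s = t ^ n + t⁻¹ := rfl
    rw [eval₂_add, eval₂_X_pow, eval₂_add, eval₂_mul, eval₂_C, eval₂_C, eval₂_X, map_neg, map_one,
      algebraMap_s]
    field_simp
    ring

lemma isIntegral_adjoin_pow_add_inv_inv {k : Type*} [CommRing k] [Algebra k K] {t : K} (ht : t ≠ 0)
    {n : ℕ} (hn : n ≠ 0) : IsIntegral (Algebra.adjoin k {t ^ n + t⁻¹}) t⁻¹ := by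
  simpa using (isIntegral_adjoin_self _).sub ((isIntegral_adjoin_pow_add_inv ht hn).pow n)

lemma IsSeparatingElement.one_add [CharP K p] {t : K} (ht : IsSeparatingElement p t) :
    IsSeparatingElement p (1 + t) :=
  ⟨fun h => ht.transcendental (by simpa using h.sub (isAlgebraic_one (R := ZMod p))),
    fun x hx => ht.pow_ne (x - 1) (by rw [sub_pow_char, hx, one_pow, add_sub_cancel_left])⟩

lemma IsSeparatingElement.pow_add_inv [CharP K p] {t : K} (ht : IsSeparatingElement p t) :
    IsSeparatingElement p (t ^ p + t⁻¹) := by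
  refine ⟨fun h => ht.transcendental ?_, fun x hx => ht.inv.pow_ne (x - t) ?_⟩
  · have : Algebra.IsIntegral (ZMod p) (Algebra.adjoin (ZMod p) {t ^ p + t⁻¹}) :=
      .adjoin (by simpa using h.isIntegral)
    exact (isIntegral_trans (A := Algebra.adjoin (ZMod p) {t ^ p + t⁻¹}) t
      (isIntegral_adjoin_pow_add_inv ht.ne_zero hp.out.ne_zero)).isAlgebraic
  · rw [sub_pow_char, hx, add_sub_cancel_left]

lemma exists_isSeparatingElement_valuation_eq_one [CharP K p] {Γ₀ : Type*}
    [LinearOrderedCommGroupWithZero Γ₀] (w : Valuation K Γ₀) {t : K}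
    (ht : IsSeparatingElement p t) : ∃ t', IsSeparatingElement p t' ∧ w t' = 1 := by
  have valuation_one_add {x : K} (hx : w x < 1) : w (1 + x) = 1 := by
    rw [w.map_add_eq_of_lt_left (by rwa [map_one]), map_one]
  rcases lt_trichotomy (w t) 1 with lt | eq | gt
  · exact ⟨1 + t, ht.one_add, valuation_one_add lt⟩
  · exact ⟨t, ht, eq⟩
  · refine ⟨1 + t⁻¹, ht.inv.one_add, valuation_one_add ?_⟩
    rw [map_inv₀]
    exact inv_lt_one_of_one_lt₀ gt

end Integrality

section Local

open Polynomial WithZero IsDedekindDomain FunctionField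
open scoped RatFunc

variable {p : ℕ} [hp : Fact p.Prime] {K : Type*} [Field K] [Algebra (ZMod p) K]

lemma exists_unit_pow_ne_one [Algebra (ZMod p)[X] K] {t : K} (ht : IsSeparatingElement p t)
    (hint : IsIntegral (ZMod p)[X] t) (hint' : IsIntegral (ZMod p)[X] t⁻¹) :
    ∃ ε : (ringOfIntegers (ZMod p) K)ˣ, ∀ n, 0 < n → ε ^ n ≠ 1 := by
  have mul_inv : (⟨t, hint⟩ * ⟨t⁻¹, hint'⟩ : ringOfIntegers (ZMod p) K) = 1 :=
    Subtype.ext (mul_inv_cancel₀ ht.ne_zero)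
  refine ⟨.mkOfMulEqOne _ _ mul_inv, fun n hn h =>
    ht.transcendental ⟨X ^ n - C 1, X_pow_sub_C_ne_zero hn 1, ?_⟩⟩
  have pow_eq : t ^ n = 1 := congrArg (fun ε : (ringOfIntegers (ZMod p) K)ˣ => (ε.1 : K)) h
  simp [pow_eq]

variable [CharP K p]

-- With respect to the coordinate `tᵖ + t⁻¹`, the element `t` is a unit of the ring of integers.
theorem exists_algebra_coord_eq_pow_add_inv (hK : IsGlobalFunctionField p K) {t : K}
    (ht : IsSeparatingElement p t) :
    ∃ (_ : Algebra (ZMod p)[X] K) (_ : Algebra (ZMod p)⟮X⟯ K)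
      (_ : IsScalarTower (ZMod p)[X] (ZMod p)⟮X⟯ K) (_ : FiniteDimensional (ZMod p)⟮X⟯ K)
      (_ : Algebra.IsSeparable (ZMod p)⟮X⟯ K) (ε : (ringOfIntegers (ZMod p) K)ˣ),
      coord p K = t ^ p + t⁻¹ ∧ ∀ n, 0 < n → ε ^ n ≠ 1 := by
  obtain ⟨polyAlgebra, ratFuncAlgebra, tower, finite, separable, hcoord⟩ :=
    exists_algebra_coord_eq hK ht.pow_add_inv
  obtain ⟨ε, hε⟩ := exists_unit_pow_ne_one ht
    (isIntegral_polynomial_iff.2 (hcoord ▸ isIntegral_adjoin_pow_add_inv ht.ne_zero hp.out.ne_zero))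
    (isIntegral_polynomial_iff.2
      (hcoord ▸ isIntegral_adjoin_pow_add_inv_inv ht.ne_zero hp.out.ne_zero))
  exact ⟨polyAlgebra, ratFuncAlgebra, tower, finite, separable, ε, hcoord, hε⟩

theorem isIntegral_adjoin_iff_forall_valuation_le_one (hK : IsGlobalFunctionField p K) {s x : K}
    (hs : IsSeparatingElement p s) : IsIntegral (Algebra.adjoin (ZMod p) {s}) x ↔
      ∀ w : Valuation K ℤᵐ⁰, w s ≤ 1 → w x ≤ 1 := by
  refine ⟨fun hx w hw => valuation_le_one_of_isIntegral_adjoin hw hx, fun hx => ?_⟩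
  obtain ⟨_, _, _, _, _, rfl⟩ := exists_algebra_coord_eq hK hs
  exact isIntegral_polynomial_iff.1 (isIntegral_iff_forall_valuation_le_one.2 fun w =>
    hx _ (isIntegral_iff_forall_valuation_le_one.1 isIntegral_coord w))

theorem exists_isDiophantineSet_valuation_neighborhood (hK : IsGlobalFunctionField p K) {t : K}
    (ht : IsSeparatingElement p t) (w : Valuation K ℤᵐ⁰) [w.IsNontrivial] :
    ∃ (W : Set K) (d : ℕ), IsDiophantineSet W ∧ (∀ y, w y ≤ exp (-(d : ℤ)) → y ∈ W) ∧
      ∀ y ∈ W, w y < 1 := by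
  obtain ⟨t', ht', hwt'⟩ := exists_isSeparatingElement_valuation_eq_one w ht
  obtain ⟨_, _, _, _, _, ε, hcoord, hε⟩ := exists_algebra_coord_eq_pow_add_inv hK ht'
  have hws : w (coord p K) ≤ 1 := by
    rw [hcoord]
    exact w.map_add_le (by rw [map_pow, hwt', one_pow]) (by rw [map_inv₀, hwt', inv_one])
  obtain ⟨v, hv⟩ := exists_isEquiv_valuation (A := ringOfIntegers (ZMod p) K) (w := w) fun a =>
    valuation_le_one_of_isIntegral_adjoin hws
      (isIntegral_polynomial_iff.1 (show IsIntegral _ a.1 from a.2))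
  obtain ⟨W, d, hW, mem_W, lt_of_mem_W⟩ := exists_isDiophantineSet_neighborhood hε v
  obtain ⟨π, π_ne, hπ⟩ := Valuation.IsNontrivial.exists_lt_one (v := v.valuation K)
  obtain ⟨N, hN⟩ := exists_forall_le_exp {π⁻¹ ^ d} w
  refine ⟨W, N, hW, fun y hy => mem_W y ?_, fun y hy => hv.lt_one_iff_lt_one.1 (lt_of_mem_W y hy)⟩
  have hwy : w y ≤ w (π ^ d) := by
    refine hy.trans ?_
    rw [exp_neg, ← inv_inv π, inv_pow, map_inv₀]
    exact inv_anti₀ (by simp [zero_lt_iff, π_ne]) (hN _ (Finset.mem_singleton_self _))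
  calc v.valuation K y ≤ v.valuation K (π ^ d) := (hv _ _).2 hwy
    _ = v.valuation K π ^ d := map_pow ..
    _ ≤ exp (d * -1 : ℤ) := pow_le_exp_mul ((lt_one_iff_le_exp _).1 hπ) d
    _ = exp (-(d : ℤ)) := by rw [mul_neg_one]

theorem isDiophantineSet_one_lt_valuation (hK : IsGlobalFunctionField p K) {t : K}
    (ht : IsSeparatingElement p t) (w : Valuation K ℤᵐ⁰) [w.IsNontrivial] :
    IsDiophantineSet {x | 1 < w x} := by
  obtain ⟨W, d, hW, mem_W, lt_of_mem_W⟩ :=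
    exists_isDiophantineSet_valuation_neighborhood hK ht w
  have dioph : IsDiophantine fun x : Unit → K => ∃ y, x () ^ d * y = 1 ∧ y ∈ W :=
    .exists_elem (.and (.eq (.mul (.pow (.coord (Sum.inl ())) d) (.coord (Sum.inr ()))) (.const 1))
      (.mem hW (.coord (Sum.inr ()))))
  refine dioph.of_iff fun x => ⟨fun (hx : 1 < w (x ())) => ?_, fun ⟨y, hxy, hy⟩ => ?_⟩
  · have x_ne : x () ≠ 0 := fun h => by simp [h] at hx
    refine ⟨(x ())⁻¹ ^ d, by rw [← mul_pow, mul_inv_cancel₀ x_ne, one_pow], mem_W _ ?_⟩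
    have inv_le : w (x ())⁻¹ ≤ exp (-1) := by
      rw [← lt_one_iff_le_exp, map_inv₀]
      exact inv_lt_one_of_one_lt₀ hx
    simpa using pow_le_exp_mul inv_le d
  · by_contra hx
    have lt_one := mul_lt_one_of_nonneg_of_lt_one_right (pow_le_one' (not_lt.1 hx) d) zero_le
      (lt_of_mem_W y hy)
    rw [← map_pow, ← map_mul, hxy, map_one] at lt_one
    exact lt_one.false

end Local

section PlacesAtInfinity

open Polynomial WithZero IsDedekindDomain FunctionField
open scoped RatFunc

section RatFunc

variable {k : Type*} [Field k] [Finite k]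

lemma exists_finite_representatives_modulo_polynomials (N : ℕ) :
    ∃ E : Set (RatFunc k), E.Finite ∧ ∀ c, ∃ e ∈ E, ∃ q : k[X],
      inftyVal k (c - (e + algebraMap k[X] (RatFunc k) q)) ≤ exp (-(N : ℤ)) := by
  refine ⟨(fun r => algebraMap k[X] (RatFunc k) r * (RatFunc.X ^ N)⁻¹) ''
    {r : k[X] | r.natDegree ≤ N}, (finite_setOf_natDegree_le N).image _, fun c => ?_⟩
  obtain ⟨q, hq⟩ := exists_polynomial_mul_inv_X_pow_near N c
  have natDegree_le : (q %ₘ X ^ N).natDegree ≤ N := by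
    simpa using natDegree_modByMonic_le q (monic_X_pow N)
  have X_ne : (RatFunc.X : RatFunc k) ^ N ≠ 0 := pow_ne_zero _ RatFunc.X_ne_zero
  have division : algebraMap k[X] (RatFunc k) q * (RatFunc.X ^ N)⁻¹ =
      algebraMap _ _ (q %ₘ X ^ N) * (RatFunc.X ^ N)⁻¹ + algebraMap _ _ (q /ₘ X ^ N) := by
    conv_lhs => rw [← modByMonic_add_div q (X ^ N), map_add, map_mul, map_pow, RatFunc.algebraMap_X]
    field_simp
  refine ⟨_, ⟨_, natDegree_le, rfl⟩, q /ₘ X ^ N, ?_⟩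
  rw [← division]
  exact hq.trans (exp_le_exp.2 (by omega))

end RatFunc

variable {p : ℕ} [hp : Fact p.Prime] {K : Type*} [Field K]

section Poles

variable [Algebra (ZMod p) K] [CharP K p]

lemma exists_finset_poles (hK : IsGlobalFunctionField p K) {s : K}
    (hs : IsSeparatingElement p s) :
    ∃ T : Finset (Valuation K ℤᵐ⁰), (∀ w ∈ T, w.IsNontrivial ∧ 1 < w s) ∧
      ∀ w : Valuation K ℤᵐ⁰, 1 < w s → ∃ w' ∈ T, w'.IsEquiv w := by
  classical
  obtain ⟨_, _, _, _, _, hcoord⟩ := exists_algebra_coord_eq hK hs.inv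
  have zeros := finite_setOf_valuation_lt_one (A := ringOfIntegers (ZMod p) K) hs.inv.ne_zero
  have inv_lt_iff (w : Valuation K ℤᵐ⁰) : w s⁻¹ < 1 ↔ 1 < w s := by
    rw [map_inv₀, inv_lt_one₀ (zero_lt_iff.2 (w.ne_zero_iff.2 hs.ne_zero))]
  refine ⟨zeros.toFinset.image fun v => v.valuation K, fun w hw => ?_, fun w hw => ?_⟩
  · obtain ⟨v, hv, rfl⟩ := Finset.mem_image.1 hw
    exact ⟨inferInstance, (inv_lt_iff _).1 (zeros.mem_toFinset.1 hv)⟩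
  · have inv_lt := (inv_lt_iff w).2 hw
    have : w.IsNontrivial := ⟨⟨s, w.ne_zero_iff.2 hs.ne_zero, hw.ne'⟩⟩
    obtain ⟨v, hv⟩ := exists_isEquiv_valuation (A := ringOfIntegers (ZMod p) K) (w := w) fun a =>
      valuation_le_one_of_isIntegral_adjoin inv_lt.le
        (hcoord ▸ isIntegral_polynomial_iff.1 (show IsIntegral _ a.1 from a.2))
    exact ⟨_, Finset.mem_image_of_mem _ (zeros.mem_toFinset.2 (hv.lt_one_iff_lt_one.2 inv_lt)), hv⟩

end Poles

variable [Algebra (ZMod p)[X] K] [Algebra (ZMod p)⟮X⟯ K]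

omit [Algebra (ZMod p)[X] K] in
lemma inftyVal_trace_le_one [FiniteDimensional (ZMod p)⟮X⟯ K] {x : K}
    (hx : IsIntegral (inftyVal (ZMod p)).integer x) :
    inftyVal (ZMod p) (Algebra.trace (ZMod p)⟮X⟯ K x) ≤ 1 :=
  (Valuation.integer.integers _).mem_of_integral (Algebra.isIntegral_trace hx)

variable [IsScalarTower (ZMod p)[X] (ZMod p)⟮X⟯ K]

lemma isEquiv_comap_inftyVal {w : Valuation K ℤᵐ⁰} (hw : 1 < w (coord p K)) :
    (w.comap (algebraMap (ZMod p)⟮X⟯ K)).IsEquiv (inftyVal (ZMod p)) := by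
  classical
  rw [coord_eq_algebraMap] at hw
  unfold inftyVal
  convert RatFunc.valuation_isEquiv_inftyValuation_of_one_lt_valuation_X
    (v := w.comap (algebraMap (ZMod p)⟮X⟯ K)) hw

lemma valuation_algebraMap_le_exp_neg {w : Valuation K ℤᵐ⁰} (hw : 1 < w (coord p K))
    {a : (ZMod p)⟮X⟯} {N : ℕ} (ha : inftyVal (ZMod p) a ≤ exp (-(N : ℤ))) :
    w (algebraMap (ZMod p)⟮X⟯ K a) ≤ exp (-(N : ℤ)) := by
  have coord_ne : coord p K ≠ 0 := fun h => by simp [h] at hw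
  have mul_X_pow_le : inftyVal (ZMod p) (a * RatFunc.X ^ N) ≤ 1 := by
    rw [map_mul, map_pow, inftyVal_X]
    calc _ ≤ exp (-(N : ℤ)) * exp 1 ^ N := by gcongr
      _ = 1 := by rw [← exp_nsmul, ← exp_add]; simp
  have mul_coord_pow_le := (isEquiv_comap_inftyVal hw).le_one_iff_le_one.2 mul_X_pow_le
  rw [Valuation.comap_apply, map_mul, map_pow, ← coord_eq_algebraMap] at mul_coord_pow_le
  have inv_coord_le : w (coord p K)⁻¹ ≤ exp (-1) := by
    rw [← lt_one_iff_le_exp, map_inv₀]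
    exact inv_lt_one_of_one_lt₀ hw
  calc w (algebraMap (ZMod p)⟮X⟯ K a)
      = w (algebraMap (ZMod p)⟮X⟯ K a * coord p K ^ N) * w (coord p K)⁻¹ ^ N := by
        rw [← map_pow, ← map_mul, inv_pow, mul_inv_cancel_right₀ (pow_ne_zero N coord_ne)]
    _ ≤ 1 * exp (N * -1 : ℤ) := mul_le_mul' mul_coord_pow_le (pow_le_exp_mul inv_coord_le N)
    _ = exp (-(N : ℤ)) := by rw [one_mul, mul_neg_one]

lemma exists_finset_representatives_modulo_integral {n : ℕ}
    {b : Module.Basis (Fin n) (ZMod p)⟮X⟯ K} (hb : ∀ j, IsIntegral (ZMod p)[X] (b j)) (N : ℕ) :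
    ∃ E : Finset K, ∀ f, ∃ e ∈ E, ∃ r : Fin n → (ZMod p)⟮X⟯,
      (∀ j, inftyVal (ZMod p) (r j) ≤ exp (-(N : ℤ))) ∧
        IsIntegral (ZMod p)[X] (f - (e + ∑ j, r j • b j)) := by
  classical
  obtain ⟨E, hE, exists_near⟩ := exists_finite_representatives_modulo_polynomials (k := ZMod p) N
  have finite : {c : Fin n → (ZMod p)⟮X⟯ | ∀ j, c j ∈ E}.Finite := Set.Finite.pi' fun _ => hE
  refine ⟨finite.toFinset.image fun c => ∑ j, c j • b j, fun f => ?_⟩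
  choose c hc q hq using fun j => exists_near (b.repr f j)
  refine ⟨_, Finset.mem_image_of_mem _ (finite.mem_toFinset.2 hc), _, hq, ?_⟩
  have sub_eq : f - (∑ j, c j • b j + ∑ j, (b.repr f j - (c j + algebraMap _ _ (q j))) • b j) =
      ∑ j, algebraMap (ZMod p)[X] K (q j) * b j := by
    nth_rw 1 [← b.sum_repr f]
    rw [← Finset.sum_add_distrib, ← Finset.sum_sub_distrib]
    refine Finset.sum_congr rfl fun j _ => ?_
    rw [← add_smul, ← sub_smul, Algebra.smul_def,
      IsScalarTower.algebraMap_apply (ZMod p)[X] (ZMod p)⟮X⟯ K]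
    ring_nf
  rw [sub_eq]
  exact IsIntegral.sum _ fun j _ => isIntegral_algebraMap.mul (hb j)

variable [FiniteDimensional (ZMod p)⟮X⟯ K]

lemma exists_inftyVal_eq_one_mul_coord_pow (x : K) :
    ∃ (c : (ZMod p)⟮X⟯) (m : ℕ), inftyVal (ZMod p) c = 1 ∧
      IsIntegral (ZMod p)[X] (coord p K ^ m * algebraMap (ZMod p)⟮X⟯ K c * x) := by
  have : Algebra.IsAlgebraic (ZMod p)[X] K :=
    (IsFractionRing.comap_isAlgebraic_iff (K := (ZMod p)⟮X⟯)).2 inferInstance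
  obtain ⟨q, q_ne, hq⟩ :=
    (Algebra.IsAlgebraic.isAlgebraic (R := (ZMod p)[X]) x).exists_integral_multiple
  refine ⟨algebraMap _ _ q / RatFunc.X ^ q.natDegree, q.natDegree, ?_, ?_⟩
  · rw [map_div₀, map_pow, inftyVal_X, inftyVal_algebraMap q_ne, ← exp_nsmul]
    simp
  · rw [coord_eq_algebraMap, ← map_pow, ← map_mul,
      mul_div_cancel₀ _ (pow_ne_zero _ RatFunc.X_ne_zero), ← IsScalarTower.algebraMap_apply]
    rwa [Algebra.smul_def] at hq

omit [FiniteDimensional (ZMod p)⟮X⟯ K] in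
lemma isIntegral_integer_inv_coord : IsIntegral (inftyVal (ZMod p)).integer (coord p K)⁻¹ := by
  have X_inv_mem : (RatFunc.X : (ZMod p)⟮X⟯)⁻¹ ∈ (inftyVal (ZMod p)).integer := by
    rw [Valuation.mem_integer_iff, map_inv₀, inftyVal_X, ← exp_neg, ← exp_zero]
    exact exp_le_exp.2 (by norm_num)
  have algebraMap_X_inv : algebraMap (ZMod p)⟮X⟯ K RatFunc.X⁻¹ = (coord p K)⁻¹ := by
    rw [map_inv₀, coord_eq_algebraMap]
  exact algebraMap_X_inv ▸
    isIntegral_algebraMap (x := (⟨_, X_inv_mem⟩ : (inftyVal (ZMod p)).integer))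

variable [Algebra (ZMod p) K] [CharP K p]

theorem isIntegral_integer_of_forall_valuation_le_one (hK : IsGlobalFunctionField p K)
    (hcoord : IsSeparatingElement p (coord p K)) {x : K}
    (hx : ∀ w : Valuation K ℤᵐ⁰, 1 < w (coord p K) → w x ≤ 1) :
    IsIntegral (inftyVal (ZMod p)).integer x := by
  obtain ⟨c, m, hc, hcx⟩ := exists_inftyVal_eq_one_mul_coord_pow (p := p) x
  have c_ne : c ≠ 0 := fun h => by simp [h] at hc
  have integral_adjoin : IsIntegral (Algebra.adjoin (ZMod p) {(coord p K)⁻¹})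
      (algebraMap (ZMod p)⟮X⟯ K c * x) := by
    refine (isIntegral_adjoin_iff_forall_valuation_le_one hK hcoord.inv).2 fun w hw => ?_
    rcases lt_or_ge 1 (w (coord p K)) with one_lt | le_one
    · rw [map_mul]
      exact mul_le_one' ((isEquiv_comap_inftyVal one_lt).le_one_iff_le_one.2 hc.le) (hx w one_lt)
    · have mul_le := mul_le_one' (pow_le_one' hw m)
        (valuation_le_one_of_isIntegral_adjoin le_one (isIntegral_polynomial_iff.1 hcx))
      rwa [← map_pow, ← map_mul, mul_assoc, inv_pow,
        inv_mul_cancel_left₀ (pow_ne_zero m hcoord.ne_zero)] at mul_le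
  have integral_mul : IsIntegral (inftyVal (ZMod p)).integer (algebraMap (ZMod p)⟮X⟯ K c * x) :=
    isIntegral_trans_adjoin isIntegral_integer_inv_coord integral_adjoin
  have integral_inv : IsIntegral (inftyVal (ZMod p)).integer (algebraMap (ZMod p)⟮X⟯ K c⁻¹) :=
    isIntegral_algebraMap (x := (⟨c⁻¹, by simp [Valuation.mem_integer_iff, hc]⟩ :
      (inftyVal (ZMod p)).integer))
  simpa [c_ne] using integral_inv.mul integral_mul

lemma mem_traceResidueZero_of_forall_valuation_le_one (hK : IsGlobalFunctionField p K)
    (hcoord : IsSeparatingElement p (coord p K)) {f : K}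
    (hf : ∀ w : Valuation K ℤᵐ⁰, 1 < w (coord p K) → w (f * coord p K ^ 2) ≤ 1) :
    f ∈ traceResidueZero p K := by
  have trace_le := inftyVal_trace_le_one
    (isIntegral_integer_of_forall_valuation_le_one hK hcoord hf)
  refine mem_traceResidueZero.2 (mem_residueZero_of_inftyVal_le ?_)
  rw [trace_mul_coord_pow, map_mul, map_pow, inftyVal_X, ← exp_nsmul] at trace_le
  rw [exp_neg, ← one_div, le_div_iff₀ exp_pos, mul_comm]
  simpa using trace_le

theorem exists_isDiophantineSet_subset_traceResidueZero (hK : IsGlobalFunctionField p K)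
    (hcoord : IsSeparatingElement p (coord p K)) {n : ℕ} (b : Fin n → K) :
    ∃ (W : Set K) (N : ℕ), IsDiophantineSet W ∧ W ⊆ traceResidueZero p K ∧
      ∀ r : Fin n → (ZMod p)⟮X⟯, (∀ j, inftyVal (ZMod p) (r j) ≤ exp (-(N : ℤ))) →
        ∑ j, r j • b j ∈ W := by
  obtain ⟨T, hT, exists_isEquiv⟩ := exists_finset_poles hK hcoord
  have exists_neighborhood (w : Valuation K ℤᵐ⁰) (hw : w ∈ T) :=
    have := (hT w hw).1
    exists_isDiophantineSet_valuation_neighborhood hK hcoord w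
  choose! W d hW mem_W lt_of_mem_W using exists_neighborhood
  obtain ⟨M, hM⟩ := exists_forall_le_exp (T ×ˢ Finset.univ) fun z => z.1 (b z.2 * coord p K ^ 2)
  refine ⟨{f | ∀ w ∈ T, f * coord p K ^ 2 ∈ W w}, T.sup d + M, ?_, fun f hf => ?_,
    fun r hr w hw => mem_W w hw _ ?_⟩
  · exact .forall_finset T fun w hw => .mem (hW w hw) (.mul (.coord ()) (.const _))
  · refine mem_traceResidueZero_of_forall_valuation_le_one hK hcoord fun w hw => ?_
    obtain ⟨w', hw', equiv⟩ := exists_isEquiv w hw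
    exact equiv.le_one_iff_le_one.1 (lt_of_mem_W w' hw' _ (hf w' hw')).le
  · rw [Finset.sum_mul]
    refine w.map_sum_le fun j _ => ?_
    rw [Algebra.smul_def, mul_assoc, map_mul]
    have d_le : d w ≤ T.sup d := Finset.le_sup hw
    calc _ ≤ exp (-(T.sup d + M : ℕ) : ℤ) * exp (M : ℤ) :=
          mul_le_mul' (valuation_algebraMap_le_exp_neg (hT w hw).2 (hr j))
            (hM (w, j) (by simp [hw]))
      _ ≤ exp (-(d w : ℤ)) := by
        rw [← exp_add, exp_le_exp]
        push_cast
        omega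

theorem exists_isDiophantineSet_representatives (hK : IsGlobalFunctionField p K)
    (hcoord : IsSeparatingElement p (coord p K)) :
    ∃ S : Set K, IsDiophantineSet S ∧ (∀ e ∈ S, e ∉ traceResidueZero p K) ∧
      ∀ f ∉ traceResidueZero p K, ∃ e ∈ S, IsIntegral (ZMod p)[X] (f - e) := by
  classical
  obtain ⟨n, b, hb⟩ := exists_integral_basis p K
  obtain ⟨W, N, hW, W_subset, mem_W⟩ :=
    exists_isDiophantineSet_subset_traceResidueZero hK hcoord b
  obtain ⟨E, hE⟩ := exists_finset_representatives_modulo_integral hb N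
  refine ⟨{f | ∃ e ∈ E.filter (· ∉ traceResidueZero p K), f - e ∈ W}, ?_, ?_, fun f hf => ?_⟩
  · exact .exists_finset _ fun e _ => .mem hW (.sub (.coord ()) (.const e))
  · rintro f ⟨e, he, hfe⟩ hf
    exact (Finset.mem_filter.1 he).2 (by simpa using sub_mem hf (W_subset hfe))
  · obtain ⟨e, he, r, hr, integral⟩ := hE f
    refine ⟨e + ∑ j, r j • b j, ⟨e, Finset.mem_filter.2 ⟨he, fun h => hf ?_⟩, ?_⟩, integral⟩
    · simpa using add_mem (mem_traceResidueZero_of_mem_integralDual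
        (mem_integralDual_of_isIntegral integral)) (add_mem h (W_subset (mem_W r hr)))
    · simpa using mem_W r hr

theorem isDiophantineSet_not_isIntegral [Algebra.IsSeparable (ZMod p)⟮X⟯ K]
    (hK : IsGlobalFunctionField p K)
    (hcoord : IsSeparatingElement p (coord p K)) {ε : (ringOfIntegers (ZMod p) K)ˣ}
    (hε : ∀ n, 0 < n → ε ^ n ≠ 1) : IsDiophantineSet {x : K | ¬ IsIntegral (ZMod p)[X] x} := by
  obtain ⟨S, hS, notMem_of_mem, exists_mem⟩ := exists_isDiophantineSet_representatives hK hcoord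
  obtain ⟨d, hd⟩ := exists_unique_pole_notMem_traceResidueZero p K
  have dioph : IsDiophantine fun x : Unit → K =>
      ∃ y, x () ^ (2 * d) * y = 1 ∧ ∃ e, e ∈ S ∧ HasCertificate (diophantineDual p K) e y :=
    .exists_elem (.and (.eq (.mul (.pow (.coord (Sum.inl ())) _) (.coord (Sum.inr ()))) (.const 1))
      (.exists_elem (.and (.mem hS (.coord (Sum.inr ()))) (.hasCertificate
        (isDiophantineSet_diophantineDual p K) (.coord (Sum.inr ()))
          (.coord (Sum.inl (Sum.inr ())))))))
  refine dioph.of_iff fun x => ⟨fun hx => ?_, fun ⟨y, hxy, e, he, hey⟩ hx => ?_⟩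
  · obtain ⟨v, hv⟩ := not_forall.1 (mt isIntegral_iff_forall_valuation_le_one.2 hx)
    rw [not_le] at hv
    have x_ne : x () ≠ 0 := fun h => by simp [h] at hv
    obtain ⟨f, hf, f_le, one_lt_f, f_le_exp⟩ := hd v
    obtain ⟨e, he, integral⟩ := exists_mem f hf
    have inv_le : v.valuation K (x ())⁻¹ ≤ exp (-1) := by
      rw [← lt_one_iff_le_exp, map_inv₀]
      exact inv_lt_one_of_one_lt₀ hv
    refine ⟨(x ())⁻¹ ^ (2 * d), by rw [← mul_pow, mul_inv_cancel₀ x_ne, one_pow], e, he,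
      hasCertificate_diophantineDual hε f_le one_lt_f (valuation_mul_sq_le_one _ f_le_exp ?_)
        integral⟩
    simpa using pow_le_exp_mul inv_le (2 * d)
  · obtain ⟨w, -, hwy⟩ := hey.exists_pole_and_zero (notMem_of_mem e he)
    have lt_one := mul_lt_one_of_nonneg_of_lt_one_right
      (pow_le_one' (isIntegral_iff_forall_valuation_le_one.1 hx w) (2 * d)) zero_le hwy
    rw [← map_pow, ← map_mul, hxy, map_one] at lt_one
    exact lt_one.false

end PlacesAtInfinity

section RingOfIntegers

open Polynomial WithZero

variable {p : ℕ} [hp : Fact p.Prime] {K : Type*} [Field K] [Algebra (ZMod p) K] [CharP K p] {t : K}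

lemma isIntegral_adjoin_iff_pow_add_inv (hK : IsGlobalFunctionField p K)
    (ht : IsSeparatingElement p t) {x : K} : IsIntegral (Algebra.adjoin (ZMod p) {t}) x ↔
      IsIntegral (Algebra.adjoin (ZMod p) {t ^ p + t⁻¹}) x ∧
        ∀ w : Valuation K ℤᵐ⁰, w t < 1 → w x ≤ 1 := by
  refine ⟨fun hx => ⟨?_, fun w hw => valuation_le_one_of_isIntegral_adjoin hw.le hx⟩,
    fun ⟨hx, hx_le⟩ => (isIntegral_adjoin_iff_forall_valuation_le_one hK ht).2 fun w hw => ?_⟩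
  · exact isIntegral_trans_adjoin (isIntegral_adjoin_pow_add_inv ht.ne_zero hp.out.ne_zero) hx
  · rcases hw.lt_or_eq with lt | eq
    · exact hx_le w lt
    · refine valuation_le_one_of_isIntegral_adjoin (w.map_add_le ?_ ?_) hx
      · rw [map_pow, eq, one_pow]
      · rw [map_inv₀, eq, inv_one]

theorem isDiophantineSet_not_isIntegral_adjoin (hK : IsGlobalFunctionField p K)
    (ht : IsSeparatingElement p t) :
    IsDiophantineSet {x : K | ¬ IsIntegral (Algebra.adjoin (ZMod p) {t}) x} := by
  have dioph_pow_add_inv :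
      IsDiophantineSet {x : K | ¬ IsIntegral (Algebra.adjoin (ZMod p) {t ^ p + t⁻¹}) x} := by
    obtain ⟨_, _, _, _, _, ε, hcoord, hε⟩ := exists_algebra_coord_eq_pow_add_inv hK ht
    rw [← hcoord]
    simpa only [isIntegral_polynomial_iff] using
      isDiophantineSet_not_isIntegral hK (hcoord ▸ ht.pow_add_inv) hε
  obtain ⟨T, hT, exists_isEquiv⟩ := exists_finset_poles hK ht.inv
  have one_lt_inv_iff (w : Valuation K ℤᵐ⁰) : 1 < w t⁻¹ ↔ w t < 1 := by
    rw [map_inv₀, one_lt_inv₀ (zero_lt_iff.2 (w.ne_zero_iff.2 ht.ne_zero))]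
  have forall_iff (x : K) :
      (∀ w : Valuation K ℤᵐ⁰, w t < 1 → w x ≤ 1) ↔ ∀ w ∈ T, w x ≤ 1 := by
    refine ⟨fun h w hw => h w ((one_lt_inv_iff w).1 (hT w hw).2), fun h w hw => ?_⟩
    obtain ⟨w', hw', equiv⟩ := exists_isEquiv w ((one_lt_inv_iff w).2 hw)
    exact equiv.le_one_iff_le_one.1 (h w' hw')
  have dioph : IsDiophantine fun x : Unit → K =>
      x () ∈ {x | ¬ IsIntegral (Algebra.adjoin (ZMod p) {t ^ p + t⁻¹}) x} ∨
        ∃ w ∈ T, x () ∈ {x | 1 < w x} := by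
    refine .or (.mem dioph_pow_add_inv (.coord ())) (.exists_finset T fun w hw => ?_)
    have := (hT w hw).1
    exact .mem (isDiophantineSet_one_lt_valuation hK ht w) (.coord ())
  refine dioph.of_iff fun x => ?_
  simp only [Set.mem_ofPred_eq, isIntegral_adjoin_iff_pow_add_inv hK ht, forall_iff, not_and_or,
    not_forall, not_le, exists_prop]

end RingOfIntegers

section FiniteQuotients

open WithZero IsDedekindDomain

variable {A K : Type*} [CommRing A] [IsDedekindDomain A] [Field K] [Algebra A K]
  [IsFractionRing A K]

lemma dvd_of_forall_valuation_le {a h : A}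
    (ha : ∀ v : HeightOneSpectrum A, v.valuation K (algebraMap A K a) ≤
      v.valuation K (algebraMap A K h)) (hh : h ≠ 0) : h ∣ a := by
  have h_ne : algebraMap A K h ≠ 0 := (map_ne_zero_iff _ (IsFractionRing.injective A K)).2 hh
  obtain ⟨b, hb⟩ := HeightOneSpectrum.mem_integers_of_valuation_le_one K
    (algebraMap A K a / algebraMap A K h) fun v => by
      rw [map_div₀]
      exact div_le_one_of_le₀ (ha v) zero_le
  refine ⟨b, IsFractionRing.injective A K ?_⟩
  rw [map_mul, hb, mul_div_cancel₀ _ h_ne]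

theorem exists_isDiophantineSet_between_ideals {h : A} (hh : h ≠ 0)
    (hnhds : ∀ v : HeightOneSpectrum A, ∃ (W : Set K) (d : ℕ), IsDiophantineSet W ∧
      (∀ y, v.valuation K y ≤ exp (-(d : ℤ)) → y ∈ W) ∧ ∀ y ∈ W, v.valuation K y < 1) :
    ∃ (W : Set K) (I : Ideal A), IsDiophantineSet W ∧ I ≠ ⊥ ∧ (∀ a ∈ I, algebraMap A K a ∈ W) ∧
      ∀ a, algebraMap A K a ∈ W → h ∣ a := by
  have h_ne : algebraMap A K h ≠ 0 := (map_ne_zero_iff _ (IsFractionRing.injective A K)).2 hh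
  have zeros := finite_setOf_valuation_lt_one (A := A) h_ne
  choose W d hW mem_W lt_of_mem_W using hnhds
  let D := zeros.toFinset.sup d
  refine ⟨{x | ∀ v ∈ zeros.toFinset, (algebraMap A K h)⁻¹ * x ∈ W v}, Ideal.span {h ^ (D + 1)},
    ?_, ?_, fun a ha v hv => mem_W v _ ?_, fun a ha => dvd_of_forall_valuation_le (K := K)
      (fun v => ?_) hh⟩
  · exact .forall_finset _ fun v _ => .mem (hW v) (.mul (.const _) (.coord ()))
  · simpa using hh
  · obtain ⟨c, rfl⟩ := Ideal.mem_span_singleton'.1 ha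
    have cancel : (algebraMap A K h)⁻¹ * algebraMap A K (c * h ^ (D + 1)) =
        algebraMap A K c * algebraMap A K h ^ D := by
      rw [map_mul, map_pow, pow_succ]
      field_simp
    rw [cancel, map_mul, map_pow]
    have hv_lt : v.valuation K (algebraMap A K h) < 1 := zeros.mem_toFinset.1 hv
    calc _ ≤ 1 * exp (D * -1 : ℤ) :=
          mul_le_mul' (v.valuation_le_one c) (pow_le_exp_mul ((lt_one_iff_le_exp _).1 hv_lt) D)
      _ ≤ exp (-(d v : ℤ)) := by
        have : d v ≤ D := Finset.le_sup hv
        rw [one_mul, exp_le_exp]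
        omega
  · by_cases hv : v.valuation K (algebraMap A K h) < 1
    · have lt_one := lt_of_mem_W v _ (ha v (zeros.mem_toFinset.2 hv))
      rw [map_mul, map_inv₀, inv_mul_lt_one₀ (by simpa [zero_lt_iff] using hh)] at lt_one
      exact lt_one.le
    · exact (v.valuation_le_one a).trans (not_lt.1 hv)

-- Modulo a nonzero ideal `I` with `I ⊆ W ∩ A ⊆ R`, membership in `R` depends only on one of
-- finitely many residue classes.
theorem isDiophantineSet_compl_of_conductor [Ring.HasFiniteQuotients A] {h : A} (hh : h ≠ 0)
    (hnhds : ∀ v : HeightOneSpectrum A, ∃ (W : Set K) (d : ℕ), IsDiophantineSet W ∧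
      (∀ y, v.valuation K y ≤ exp (-(d : ℤ)) → y ∈ W) ∧ ∀ y ∈ W, v.valuation K y < 1)
    (hA : IsDiophantineSet (Set.range (algebraMap A K))ᶜ) {R : AddSubgroup K}
    (hRA : (R : Set K) ⊆ Set.range (algebraMap A K)) (hR : ∀ a, algebraMap A K (h * a) ∈ R) :
    IsDiophantineSet (R : Set K)ᶜ := by
  classical
  obtain ⟨W, I, hW, hI, mem_W, dvd_of_mem_W⟩ := exists_isDiophantineSet_between_ideals hh hnhds
  have := Ring.HasFiniteQuotients.finiteQuotient hI
  have := Fintype.ofFinite (A ⧸ I)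
  let C : Finset A := (Finset.univ : Finset (A ⧸ I)).image Quotient.out |>.filter
    (algebraMap A K · ∉ R)
  have mem_of_mem_W (a : A) (ha : algebraMap A K a ∈ W) : algebraMap A K a ∈ R := by
    obtain ⟨b, rfl⟩ := dvd_of_mem_W a ha
    exact hR b
  have dioph : IsDiophantine fun x : Unit → K =>
      x () ∈ (Set.range (algebraMap A K))ᶜ ∨ ∃ c ∈ C, x () - algebraMap A K c ∈ W :=
    .or (.mem hA (.coord ())) (.exists_finset C fun c _ => .mem hW (.sub (.coord ()) (.const _)))
  refine dioph.of_iff fun x => ⟨fun hx => or_iff_not_imp_left.2 fun hxA => ?_, ?_⟩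
  · obtain ⟨a, ha⟩ := not_not.1 hxA
    have sub_mem_I : a - Quotient.out (Ideal.Quotient.mk I a) ∈ I :=
      Ideal.Quotient.eq.1 (Ideal.Quotient.mk_out _).symm
    have sub_mem_W := mem_W _ sub_mem_I
    refine ⟨_, Finset.mem_filter.2 ⟨Finset.mem_image_of_mem _ (Finset.mem_univ _), fun hc => hx ?_⟩,
      by rwa [map_sub, ha] at sub_mem_W⟩
    simpa [ha] using add_mem (mem_of_mem_W _ sub_mem_W) hc
  · rintro (hxA | ⟨c, hc, hxc⟩) hxR
    · exact hxA (hRA hxR)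
    · obtain ⟨a, ha⟩ := hRA hxR
      rw [← ha, ← map_sub] at hxc
      refine (Finset.mem_filter.1 hc).2 ?_
      simpa [ha] using sub_mem hxR (mem_of_mem_W _ hxc)

end FiniteQuotients

section Subrings

open Polynomial WithZero IsDedekindDomain FunctionField
open scoped RatFunc

variable {p : ℕ} [hp : Fact p.Prime] {K : Type*} [Field K] [Algebra (ZMod p) K]

theorem exists_conductor [Algebra (ZMod p)[X] K] [Algebra (ZMod p)⟮X⟯ K]
    [IsScalarTower (ZMod p)[X] (ZMod p)⟮X⟯ K] [FiniteDimensional (ZMod p)⟮X⟯ K]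
    [Algebra.IsSeparable (ZMod p)⟮X⟯ K] {R : Subring K} [IsFractionRing R K]
    (hcoord : IsIntegral R (coord p K)) :
    ∃ h ∈ R, h ≠ 0 ∧ ∀ x, IsIntegral (ZMod p)[X] x → h * x ∈ R := by
  obtain ⟨S, hS⟩ : (⊤ : Submodule (ZMod p)[X] (ringOfIntegers (ZMod p) K)).FG :=
    Module.Finite.fg_top
  let S' : Set K := insert (coord p K) ((fun a : ringOfIntegers (ZMod p) K => (a : K)) '' S)
  have isIntegral_of_mem : ∀ x ∈ S', IsIntegral R x := by
    rintro _ (rfl | ⟨a, -, rfl⟩)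
    · exact hcoord
    · exact isIntegral_trans_adjoin hcoord
        (isIntegral_polynomial_iff.1 (show IsIntegral _ a.1 from a.2))
  obtain ⟨h, hh, smul_mem⟩ := FractionalIdeal.isFractional_of_fg (S := nonZeroDivisors R)
    (fg_adjoin_of_finite (((S.finite_toSet).image _).insert _) isIntegral_of_mem)
  let B : Subalgebra (ZMod p)[X] K :=
    { (Algebra.adjoin R S').toSubring with
      algebraMap_mem' := fun q => adjoin_zmod_le (p := p)
        (R := (Algebra.adjoin R S').toSubring) (Algebra.subset_adjoin (Set.mem_insert _ _))
        (by rw [algebraMap_polynomial_eq_aeval_coord]; exact aeval_mem_adjoin_singleton _ _) }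
  have mem_B (a : ringOfIntegers (ZMod p) K) : (a : K) ∈ B := by
    have span_le : Submodule.span (ZMod p)[X] (S : Set (ringOfIntegers (ZMod p) K)) ≤
        B.toSubmodule.comap (integralClosure (ZMod p)[X] K).val.toLinearMap :=
      Submodule.span_le.2 fun a ha =>
        Algebra.subset_adjoin (Set.mem_insert_of_mem _ (Set.mem_image_of_mem _ ha))
    exact span_le (hS ▸ Submodule.mem_top)
  refine ⟨h, h.2, by simpa using nonZeroDivisors.ne_zero hh, fun x hx => ?_⟩
  obtain ⟨r, hr⟩ := smul_mem x (mem_B ⟨x, hx⟩)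
  exact (show (r : K) = h * x from hr) ▸ r.2

theorem isDiophantineSet_compl [CharP K p] (hK : IsGlobalFunctionField p K) {t : K}
    (ht : IsSeparatingElement p t) {R : Subring K} [IsFractionRing R K] (htR : IsIntegral R t)
    (hR : ∀ r ∈ R, IsIntegral (Algebra.adjoin (ZMod p) {t}) r) :
    IsDiophantineSet (R : Set K)ᶜ := by
  have dioph := isDiophantineSet_not_isIntegral_adjoin hK ht
  obtain ⟨_, _, _, _, _, rfl⟩ := exists_algebra_coord_eq hK ht
  simp only [← isIntegral_polynomial_iff] at dioph hR
  obtain ⟨h, hhR, h_ne, mul_mem_R⟩ := exists_conductor htR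
  have range_eq : Set.range (algebraMap (ringOfIntegers (ZMod p) K) K) =
      {x | IsIntegral (ZMod p)[X] x} := Subtype.range_coe
  refine isDiophantineSet_compl_of_conductor (A := ringOfIntegers (ZMod p) K) (h := ⟨h, hR h hhR⟩)
    (fun h0 => h_ne (congrArg Subtype.val h0))
    (fun v => exists_isDiophantineSet_valuation_neighborhood hK ht (v.valuation K))
    (by rwa [range_eq]) (R := R.toAddSubgroup) (range_eq ▸ hR) fun a => mul_mem_R _ a.2

end Subrings

section FunctionFields

open Polynomial
open scoped RatFunc

variable {k : Type*} [Field k] {K : Type*} [Field K] [Algebra k K]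

section RatFunc

variable [Algebra k⟮X⟯ K] [IsScalarTower k k⟮X⟯ K]

lemma essFiniteType_of_finite_ratFunc [FiniteDimensional k⟮X⟯ K] : Algebra.EssFiniteType k K := by
  have : Algebra.EssFiniteType k[X] k⟮X⟯ := .of_isLocalization _ (nonZeroDivisors k[X])
  have : Algebra.EssFiniteType k k⟮X⟯ := .comp k k[X] k⟮X⟯
  exact .comp k k⟮X⟯ K

lemma trdeg_eq_one_of_isAlgebraic_ratFunc [Algebra.IsAlgebraic k⟮X⟯ K] : Algebra.trdeg k K = 1 := by
  have : Algebra.IsAlgebraic k[X] k⟮X⟯ := IsLocalization.isAlgebraic _ (nonZeroDivisors k[X])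
  have trdeg_ratFunc : Algebra.trdeg k k⟮X⟯ = 1 := by
    rw [← trdeg_add_eq k k[X], trdeg_of_isDomain, trdeg_eq_zero, add_zero]
  have := lift_trdeg_add_eq k k⟮X⟯ K
  simpa [trdeg_ratFunc, trdeg_eq_zero, eq_comm] using this

end RatFunc

theorem isGlobalFunctionField_of_finite_ratFunc (p : ℕ) [Fact p.Prime] [Finite k] [CharP k p]
    [Algebra k⟮X⟯ K] [IsScalarTower k k⟮X⟯ K] [FiniteDimensional k⟮X⟯ K] [Algebra (ZMod p) K] :
    IsGlobalFunctionField p K := by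
  let : Algebra (ZMod p) k := ZMod.algebra k p
  have : IsScalarTower (ZMod p) k K := .of_algebraMap_eq' (Subsingleton.elim _ _)
  have : Module.Finite (ZMod p) k := .of_finite
  have := essFiniteType_of_finite_ratFunc (k := k) (K := K)
  refine ⟨.comp (ZMod p) k K, ?_⟩
  have := lift_trdeg_add_eq (ZMod p) k K
  simpa [trdeg_eq_one_of_isAlgebraic_ratFunc, trdeg_eq_zero, eq_comm] using this

end FunctionFields

section NoetherNormalization

variable {k R : Type*} [Field k] [CommRing R] [Algebra k R]

lemma isIntegral_adjoin_range {σ : Type*} {g : MvPolynomial σ k →ₐ[k] R} (hg : g.IsIntegral) :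
    Algebra.IsIntegral (Algebra.adjoin k (Set.range fun i => g (MvPolynomial.X i))) R := by
  have mem_adjoin (q : MvPolynomial σ k) :
      g q ∈ Algebra.adjoin k (Set.range fun i => g (MvPolynomial.X i)) := by
    rw [Algebra.adjoin_range_eq_range_aeval]
    exact ⟨q, (DFunLike.congr_fun (MvPolynomial.aeval_unique g) q).symm⟩
  exact ⟨fun x => .of_comp (f := (g.codRestrict _ mem_adjoin).toRingHom) (hg x)⟩

theorem exists_transcendental_isIntegral_adjoin [IsDomain R] [Algebra.FiniteType k R]
    (htrdeg : Algebra.trdeg k R = 1) :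
    ∃ t : R, Transcendental k t ∧ Algebra.IsIntegral (Algebra.adjoin k {t}) R := by
  obtain ⟨n, g, g_injective, g_integral⟩ := exists_integral_inj_algHom_of_fg k R
  have isIntegral := isIntegral_adjoin_range g_integral
  have independent : AlgebraicIndependent k fun i => g (MvPolynomial.X i) :=
    (MvPolynomial.algebraicIndependent_X (Fin n) k).map' g_injective
  have card_eq :=
    (independent.isTranscendenceBasis_iff_isAlgebraic.2 inferInstance).lift_cardinalMk_eq_trdeg
  obtain rfl : n = 1 := by simpa [htrdeg] using card_eq
  refine ⟨g (MvPolynomial.X 0), independent.transcendental 0, ?_⟩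
  rwa [Set.range_unique] at isIntegral

theorem exists_transcendental_mem_isIntegral_adjoin {K : Type*} [Field K] [Algebra k K]
    {R : Subalgebra k K} [IsFractionRing R K] (hR : R.FG) (htrdeg : Algebra.trdeg k K = 1) :
    ∃ t ∈ R, Transcendental k t ∧ ∀ r ∈ R, IsIntegral (Algebra.adjoin k {t}) r := by
  have : Algebra.FiniteType k R := (Subalgebra.fg_iff_finiteType R).1 hR
  have : Algebra.IsAlgebraic R K := IsLocalization.isAlgebraic K (nonZeroDivisors R)
  have trdeg_R : Algebra.trdeg k R = 1 := by
    rw [← htrdeg, ← trdeg_add_eq k R (A := K), trdeg_eq_zero (R := R), add_zero]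
  obtain ⟨t, ht, isIntegral⟩ := exists_transcendental_isIntegral_adjoin trdeg_R
  refine ⟨t, t.2, (transcendental_algebraMap_iff Subtype.val_injective).2 ht, fun r hr => ?_⟩
  have coe_mem_adjoin (q : Algebra.adjoin k {t}) : (q : K) ∈ Algebra.adjoin k {(t : K)} :=
    (AlgHom.map_adjoin_singleton R.val t).le (Set.mem_image_of_mem _ q.2)
  exact .of_comp
    (f := ((R.val.comp (Algebra.adjoin k {t}).val).codRestrict _ coe_mem_adjoin).toRingHom)
    (RingHom.IsIntegralElem.map (isIntegral.isIntegral ⟨r, hr⟩) R.val.toRingHom)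

end NoetherNormalization

section SeparatingElements

open Polynomial

variable {p : ℕ} [hp : Fact p.Prime] {K : Type*} [Field K] [Algebra (ZMod p) K]

lemma notMem_adjoin_pow {x : K} (hx : Transcendental (ZMod p) x) :
    x ∉ IntermediateField.adjoin (ZMod p) {x ^ p} := by
  intro hmem
  obtain ⟨a, b, hab⟩ := (IntermediateField.mem_adjoin_simple_iff (ZMod p) _).1 hmem
  have aeval_b_ne : aeval (x ^ p) b ≠ 0 := fun hb =>
    hx (by rw [hab, hb, div_zero]; exact isAlgebraic_zero)
  have expand_eq : X * expand (ZMod p) p b = expand (ZMod p) p a := by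
    refine (transcendental_iff_injective.1 hx) ?_
    rw [map_mul, aeval_X, expand_aeval, expand_aeval, ← eq_div_iff aeval_b_ne, ← hab]
  have expand_b_ne : expand (ZMod p) p b ≠ 0 :=
    (expand_ne_zero hp.out.pos).2 fun hb => aeval_b_ne (by rw [hb, map_zero])
  have degree_eq := congrArg natDegree expand_eq
  rw [natDegree_X_mul expand_b_ne, natDegree_expand, natDegree_expand] at degree_eq
  have : p ∣ 1 :=
    (Nat.dvd_add_right (Dvd.intro_left b.natDegree rfl)).1 (degree_eq ▸ Dvd.intro_left _ rfl)
  exact hp.out.one_lt.ne' (Nat.dvd_one.1 this)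

lemma finrank_adjoin_lt_finrank_adjoin_pow (hK : IsGlobalFunctionField p K) {x : K}
    (hx : Transcendental (ZMod p) x) :
    Module.finrank (IntermediateField.adjoin (ZMod p) {x}) K <
      Module.finrank (IntermediateField.adjoin (ZMod p) {x ^ p}) K := by
  have := hK.finiteDimensional (hx.pow hp.out.pos)
  have mem_adjoin := IntermediateField.mem_adjoin_simple_self (ZMod p) x
  refine IntermediateField.finrank_lt_of_gt (lt_of_le_of_ne ?_ fun eq => ?_)
  · exact IntermediateField.adjoin_simple_le_iff.2 (pow_mem mem_adjoin p)
  · exact notMem_adjoin_pow hx (eq ▸ mem_adjoin)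

theorem exists_isSeparatingElement_pow_eq (hK : IsGlobalFunctionField p K) {s : K}
    (hs : Transcendental (ZMod p) s) :
    ∃ (t : K) (n : ℕ), IsSeparatingElement p t ∧ t ^ p ^ n = s := by
  induction hd : Module.finrank (IntermediateField.adjoin (ZMod p) {s}) K
    using Nat.strong_induction_on generalizing s with
  | _ d ih =>
    by_cases hpow : ∀ x, x ^ p ≠ s
    · exact ⟨s, 0, ⟨hs, hpow⟩, by rw [pow_zero, pow_one]⟩
    · push Not at hpow
      obtain ⟨x, rfl⟩ := hpow
      have hx : Transcendental (ZMod p) x := fun hx => hs (hx.pow p)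
      obtain ⟨t, n, ht, rfl⟩ := ih _ (hd ▸ finrank_adjoin_lt_finrank_adjoin_pow hK hx) hx rfl
      exact ⟨t, n + 1, ht, by rw [pow_succ, pow_mul]⟩

end SeparatingElements

section Main

variable {p : ℕ} [hp : Fact p.Prime] {K : Type*} [Field K] [Algebra (ZMod p) K] [CharP K p]

theorem exists_universal_definition (hK : IsGlobalFunctionField p K) {R : Subalgebra (ZMod p) K}
    [IsFractionRing R K] (hR : R.FG) :
    ∃ (n : ℕ) (F : MvPolynomial (Fin (n + 1)) K),
      (R : Set K) = {x : K | ∀ y : Fin n → K, MvPolynomial.eval (Fin.cons x y) F ≠ 0} := by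
  obtain ⟨s, hsR, hs, isIntegral_s⟩ :=
    exists_transcendental_mem_isIntegral_adjoin hR hK.trdeg_eq_one
  obtain ⟨t, n, ht, rfl⟩ := exists_isSeparatingElement_pow_eq hK hs
  have t_integral : IsIntegral R t :=
    .of_pow (pow_pos hp.out.pos n) (isIntegral_algebraMap (x := (⟨_, hsR⟩ : R)))
  have : IsFractionRing R.toSubring K := ‹IsFractionRing R K›
  have R_integral (r : K) (hr : r ∈ R) : IsIntegral (Algebra.adjoin (ZMod p) {t}) r :=
    isIntegral_trans_adjoin ((isIntegral_adjoin_self t).pow _) (isIntegral_s r hr)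
  exact exists_universal_definition_of_compl hp.out.ne_zero ht.pow_ne
    (isDiophantineSet_compl hK ht (R := R.toSubring) t_integral R_integral)

end Main

end UniversalDefinition

/-- Any finitely generated subring `R` of a global function field `K`
(a finite extension of `𝔽(T)` for a finite field `𝔽`) whose fraction field is `K`
has a universal first-order definition in `K`. -/
theorem fin_gen_subring_of_global_function_field_univ_definable
    (𝔽 : Type*) [Field 𝔽] [Finite 𝔽]
    (K : Type*) [Field K] [Algebra (RatFunc 𝔽) K] [FiniteDimensional (RatFunc 𝔽) K]
    (R : Subring K)
    (hfg : ∃ s : Finset K, Subring.closure (s : Set K) = R)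
    (hfrac : ∀ x : K, ∃ r s : K, r ∈ R ∧ s ∈ R ∧ s ≠ 0 ∧ x = r / s) :
    ∃ (n : ℕ) (F : MvPolynomial (Fin (n + 1)) K),
      (R : Set K) =
        {x : K | ∀ y : Fin n → K, MvPolynomial.eval (Fin.cons x y) F ≠ 0} := by
  obtain ⟨p, _⟩ := CharP.exists 𝔽
  have : Fact p.Prime := ⟨CharP.char_is_prime 𝔽 p⟩
  let : Algebra 𝔽 K := Algebra.compHom K (algebraMap 𝔽 (RatFunc 𝔽))
  have : IsScalarTower 𝔽 (RatFunc 𝔽) K := .of_algebraMap_eq fun _ => rfl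
  have : CharP K p := charP_of_injective_algebraMap (algebraMap 𝔽 K).injective p
  let : Algebra (ZMod p) K := ZMod.algebra K p
  obtain ⟨S, hS⟩ := hfg
  obtain rfl := (UniversalDefinition.toSubring_adjoin_zmod (p := p) (S : Set K)).trans hS
  have : IsFractionRing (Algebra.adjoin (ZMod p) (S : Set K)) K :=
    .of_field _ K fun x => by
      obtain ⟨r, s, hr, hs, -, rfl⟩ := hfrac x
      exact ⟨⟨r, hr⟩, ⟨s, hs⟩, rfl⟩
  exact UniversalDefinition.exists_universal_definition
    (UniversalDefinition.isGlobalFunctionField_of_finite_ratFunc (k := 𝔽) p) ⟨S, rfl⟩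
end

section
/- Let K be a field that is not algebraically closed. Let n, m, p ∈ ℕ, let q, r : {1, …, p} → ℕ, and for each i ∈ {1,…,p}, j ∈ {1,…,q(i)}, k ∈ {1,…,r(i)} let f_{i,j} and g_{i,k} be polynomials in K[X₁, …, Xₙ, Y₁, …, Y_m]. Set B = { x ∈ Kⁿ : there exist y ∈ K^m and i ∈ {1,…,p} such that f_{i,j}(x, y) = 0 for all j ≤ q(i) and g_{i,k}(x, y) ≠ 0 for all k ≤ r(i) }. Then there exists a single polynomial F ∈ K[X₁, …, Xₙ, Y₁, …, Y_{m+1}] such that B = { x ∈ Kⁿ : ∃ y ∈ K^{m+1}, F(x, y) = 0 }. (In other words, every set with an existential definition of rank m over K has a diophantine definition of rank m+1.) -/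
/-!
Let `h` be a polynomial of positive degree `d` without a root in `K`. Its homogenization
`N(a, b) = b ^ d * h (a / b)` vanishes only at the origin, so `N(P, Q) = 0` expresses
`P = 0 ∧ Q = 0` by one equation; products express disjunctions. All the inequations `g_{i,k} ≠ 0`
of the `i`-th system are replaced by the single equation `z * ∏ k, g_{i,k} = 1`, and the same
additional variable `z` serves every `i`, because only one disjunct has to hold.
-/

open MvPolynomial

theorem eval_homogenize_of_eq_zero {R : Type*} [CommSemiring R] (p : Polynomial R) (n : ℕ)
    {v : Fin 2 → R} (hv : v 1 = 0) :
    eval v (p.homogenize n) = p.coeff n * v 0 ^ n := by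
  have eval_term (kl : ℕ × ℕ) : eval v (monomial (fun₀ | 0 => kl.1 | 1 => kl.2) (p.coeff kl.1)) =
      p.coeff kl.1 * (v 0 ^ kl.1 * v 1 ^ kl.2) := by
    simp [eval_monomial, Finsupp.prod_fintype]
  simp only [Polynomial.homogenize, map_sum, eval_term, hv]
  rw [Finset.sum_eq_single (n, 0)]
  · simp
  · rintro ⟨k, l⟩ hkl hne
    have hl : l ≠ 0 := by
      rintro rfl
      exact hne (congrArg (·, 0) (Finset.HasAntidiagonal.mem_antidiagonal.mp hkl))
    simp [hl]
  · simp

theorem exists_mvPolynomial_eval_eq_zero_iff_eq_zero {K : Type*} [Field K] (hK : ¬ IsAlgClosed K) :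
    ∃ N : MvPolynomial (Fin 2) K, ∀ v, eval v N = 0 ↔ v = 0 := by
  obtain ⟨h, h_irr, h_root⟩ : ∃ h : Polynomial K, Irreducible h ∧ ∀ x, h.eval x ≠ 0 := by
    by_contra! H
    exact hK (.of_exists_root K fun p _ hp => H p hp)
  refine ⟨h.homogenize h.natDegree, fun v => ⟨fun hv => ?_, ?_⟩⟩
  · have hv₁ : v 1 = 0 := by
      by_contra hne
      rw [Polynomial.eval_homogenize le_rfl v hne] at hv
      exact mul_ne_zero (h_root _) (pow_ne_zero _ hne) hv
    have hv₀ : v 0 = 0 := by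
      rw [eval_homogenize_of_eq_zero h _ hv₁] at hv
      have h_lead : h.coeff h.natDegree ≠ 0 := Polynomial.leadingCoeff_ne_zero.mpr h_irr.ne_zero
      exact eq_zero_of_pow_eq_zero ((mul_eq_zero.mp hv).resolve_left h_lead)
    ext i
    fin_cases i
    exacts [hv₀, hv₁]
  · rintro rfl
    rw [eval_homogenize_of_eq_zero h _ rfl]
    simp [h_irr.natDegree_pos.ne']

/-- The set `S` is the zero locus of a single polynomial. The zero polynomial and nonzero
constants are allowed, so that the whole space and the empty set are hypersurfaces. -/
def IsHypersurface {σ R : Type*} [CommSemiring R] (S : Set (σ → R)) : Prop :=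
  ∃ F : MvPolynomial σ R, S = {v | eval v F = 0}

namespace IsHypersurface

section CommSemiring

variable {σ R : Type*} [CommSemiring R]

theorem setOf_eval_eq_zero (F : MvPolynomial σ R) : IsHypersurface {v | eval v F = 0} :=
  ⟨F, rfl⟩

theorem univ : IsHypersurface (Set.univ : Set (σ → R)) :=
  ⟨0, by simp⟩

theorem empty [Nontrivial R] : IsHypersurface (∅ : Set (σ → R)) :=
  ⟨1, by simp⟩

theorem union [NoZeroDivisors R] {S T : Set (σ → R)} (hS : IsHypersurface S)
    (hT : IsHypersurface T) : IsHypersurface (S ∪ T) := by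
  obtain ⟨P, rfl⟩ := hS
  obtain ⟨Q, rfl⟩ := hT
  exact ⟨P * Q, by ext v; simp⟩

theorem iUnion [Nontrivial R] [NoZeroDivisors R] {ι : Type*} [Finite ι] {S : ι → Set (σ → R)}
    (hS : ∀ i, IsHypersurface (S i)) : IsHypersurface (⋃ i, S i) := by
  have := Fintype.ofFinite ι
  rw [← Set.iSup_eq_iUnion, ← Finset.sup_univ_eq_iSup]
  exact Finset.sup_induction empty (fun _ h₁ _ h₂ => h₁.union h₂) fun i _ => hS i

end CommSemiring

section Field

variable {σ K : Type*} [Field K]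

theorem inter (hK : ¬ IsAlgClosed K) {S T : Set (σ → K)} (hS : IsHypersurface S)
    (hT : IsHypersurface T) : IsHypersurface (S ∩ T) := by
  obtain ⟨P, rfl⟩ := hS
  obtain ⟨Q, rfl⟩ := hT
  obtain ⟨N, hN⟩ := exists_mvPolynomial_eval_eq_zero_iff_eq_zero hK
  refine ⟨bind₁ ![P, Q] N, ?_⟩
  ext v
  have eval_bind : eval v (bind₁ ![P, Q] N) = eval (fun i => eval v (![P, Q] i)) N :=
    eval₂Hom_bind₁ _ _ _ _
  simp [eval_bind, hN, funext_iff, Fin.forall_fin_two]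

theorem iInter (hK : ¬ IsAlgClosed K) {ι : Type*} [Finite ι] {S : ι → Set (σ → K)}
    (hS : ∀ i, IsHypersurface (S i)) : IsHypersurface (⋂ i, S i) := by
  have := Fintype.ofFinite ι
  rw [← Set.iInf_eq_iInter, ← Finset.inf_univ_eq_iInf]
  exact Finset.inf_induction univ (fun _ h₁ _ h₂ => h₁.inter hK h₂) fun i _ => hS i

end Field

end IsHypersurface

/-- The Rabinowitsch form of the system `f j = 0`, `g k ≠ 0`: the inequations become the single
equation `z * ∏ k, g k = 1`. The map `ρ` sends the variables of the system into a larger set of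
variables, in which `z` is the variable with index `a`. -/
def rabinowitschLocus {σ σ' α β R : Type*} [CommSemiring R] [Fintype β] (ρ : σ → σ') (a : σ')
    (f : α → MvPolynomial σ R) (g : β → MvPolynomial σ R) : Set (σ' → R) :=
  {w | (∀ j, eval (w ∘ ρ) (f j) = 0) ∧ w a * ∏ k, eval (w ∘ ρ) (g k) = 1}

theorem isHypersurface_rabinowitschLocus {σ σ' α β K : Type*} [Field K] [Finite α] [Fintype β]
    (hK : ¬ IsAlgClosed K) (ρ : σ → σ') (a : σ')
    (f : α → MvPolynomial σ K) (g : β → MvPolynomial σ K) :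
    IsHypersurface (rabinowitschLocus ρ a f g) := by
  have h_eq : IsHypersurface (⋂ j, {w | eval w (rename ρ (f j)) = 0}) :=
    .iInter hK fun j => .setOf_eval_eq_zero _
  have h_inv : IsHypersurface {w | eval w (X a * ∏ k, rename ρ (g k) - 1) = 0} :=
    .setOf_eval_eq_zero _
  convert h_eq.inter hK h_inv using 1
  ext w
  simp [rabinowitschLocus, eval_rename, sub_eq_zero]

theorem exists_mul_prod_eq_one_iff {β M : Type*} [Fintype β] [CommGroupWithZero M] (b : β → M) :
    (∃ z, z * ∏ k, b k = 1) ↔ ∀ k, b k ≠ 0 := by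
  rw [← isUnit_iff_exists_inv', isUnit_iff_ne_zero, Finset.prod_ne_zero_iff]
  simp

theorem exists_mem_rabinowitschLocus_iff {σ τ τ' α β K : Type*} [Field K] [Fintype β]
    (e : Option τ ≃ τ') (f : α → MvPolynomial (σ ⊕ τ) K) (g : β → MvPolynomial (σ ⊕ τ) K)
    (x : σ → K) :
    (∃ w, Sum.elim x w ∈
        rabinowitschLocus (Sum.map id (e ∘ some)) (Sum.inr (e none)) f g) ↔
      ∃ y, (∀ j, eval (Sum.elim x y) (f j) = 0) ∧ ∀ k, eval (Sum.elim x y) (g k) ≠ 0 := by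
  have mem_iff (w : τ' → K) :
      Sum.elim x w ∈ rabinowitschLocus (Sum.map id (e ∘ some)) (Sum.inr (e none)) f g ↔
        (∀ j, eval (Sum.elim x (w ∘ e ∘ some)) (f j) = 0) ∧
          w (e none) * ∏ k, eval (Sum.elim x (w ∘ e ∘ some)) (g k) = 1 := by
    simp [rabinowitschLocus, Sum.elim_comp_map]
  simp only [mem_iff, ← exists_mul_prod_eq_one_iff]
  constructor
  · rintro ⟨w, hf, hz⟩
    exact ⟨w ∘ e ∘ some, hf, w (e none), hz⟩
  · rintro ⟨y, hf, z, hz⟩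
    let w : τ' → K := fun t => (e.symm t).elim z y
    have w_none : w (e none) = z := by simp [w]
    have w_some : w ∘ e ∘ some = y := by ext; simp [w]
    exact ⟨w, by rwa [w_some], by rwa [w_none, w_some]⟩

theorem existential_definable_iff_diophantine_rank_succ_general {K : Type*} [Field K]
    (hK : ¬ IsAlgClosed K) {σ τ τ' ι : Type*} [Finite ι] {α β : ι → Type*}
    [∀ i, Finite (α i)] [∀ i, Finite (β i)] (e : Option τ ≃ τ')
    (f : (i : ι) → α i → MvPolynomial (σ ⊕ τ) K) (g : (i : ι) → β i → MvPolynomial (σ ⊕ τ) K) :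
    ∃ F : MvPolynomial (σ ⊕ τ') K,
      {x : σ → K | ∃ (y : τ → K) (i : ι), (∀ j, eval (Sum.elim x y) (f i j) = 0) ∧
          (∀ k, eval (Sum.elim x y) (g i k) ≠ 0)} =
        {x : σ → K | ∃ y : τ' → K, eval (Sum.elim x y) F = 0} := by
  have := fun i => Fintype.ofFinite (β i)
  obtain ⟨F, hF⟩ : IsHypersurface
      (⋃ i, rabinowitschLocus (Sum.map id (e ∘ some)) (Sum.inr (e none)) (f i) (g i)) :=
    .iUnion fun i => isHypersurface_rabinowitschLocus hK _ _ (f i) (g i)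
  have mem_F (x : σ → K) (w : τ' → K) := Set.ext_iff.mp hF (Sum.elim x w)
  simp only [Set.mem_iUnion, Set.mem_ofPred_eq] at mem_F
  refine ⟨F, Set.ext fun x => ?_⟩
  simp only [Set.mem_ofPred_eq, ← mem_F]
  rw [exists_comm, exists_comm (α := τ' → K)]
  simp only [exists_mem_rabinowitschLocus_iff]

/-- Over a field `K` which is not algebraically closed, every set with
an existential definition of rank `m` (a disjunction over `i ∈ {1,…,p}` of systems of
polynomial equations `f_{i,j} = 0` and inequations `g_{i,k} ≠ 0` in variables
`x ∈ Kⁿ, y ∈ K^m`) has a diophantine definition of rank `m + 1`: it is the projection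
of the zero set of a single polynomial `F` in `n + (m+1)` variables. -/
theorem existential_definable_iff_diophantine_rank_succ
    (K : Type*) [Field K]
    (hK : ∃ p : Polynomial K, 0 < p.degree ∧ ∀ x : K, Polynomial.eval x p ≠ 0)
    (n m p : ℕ) (q r : Fin p → ℕ)
    (f : (i : Fin p) → Fin (q i) → MvPolynomial (Fin n ⊕ Fin m) K)
    (g : (i : Fin p) → Fin (r i) → MvPolynomial (Fin n ⊕ Fin m) K) :
    ∃ F : MvPolynomial (Fin n ⊕ Fin (m + 1)) K,
      {x : Fin n → K | ∃ (y : Fin m → K) (i : Fin p),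
          (∀ j : Fin (q i), MvPolynomial.eval (Sum.elim x y) (f i j) = 0) ∧
          (∀ k : Fin (r i), MvPolynomial.eval (Sum.elim x y) (g i k) ≠ 0)} =
        {x : Fin n → K | ∃ y : Fin (m + 1) → K,
          MvPolynomial.eval (Sum.elim x y) F = 0} := by
  obtain ⟨h, h_deg, h_root⟩ := hK
  exact existential_definable_iff_diophantine_rank_succ_general
    (fun _ => (IsAlgClosed.exists_root h h_deg.ne').elim h_root) finSuccEquivLast.symm f g
end

section
/- Let F be a finite field. Then there exists u ∈ F such that the polynomial X² − X − u² is irreducible in F[X]. -/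
open Polynomial

/-!
A monic quadratic polynomial is irreducible as soon as it has no root. In characteristic two every
element is a square, and `x ↦ x ^ 2 - x` identifies `0` and `1`, hence by finiteness misses some
value. In odd characteristic `X ^ 2 - X - u ^ 2` has discriminant `1 + (2 * u) ^ 2`; if
`1 + v ^ 2` were a square for every `v`, then all sums of two squares would be squares by
homogeneity, whereas every element of a finite field is a sum of two squares and some element is
not a square.
-/

section Quadratic

variable {R : Type*} [CommRing R]

theorem irreducible_X_sq_sub_X_sub_C_iff [IsDomain R] {a : R} :
    Irreducible (X ^ 2 - X - C a : R[X]) ↔ ∀ x : R, x ^ 2 - x ≠ a := by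
  have hdeg : (X ^ 2 - X - C a : R[X]).natDegree = 2 := by compute_degree!
  have hmonic : (X ^ 2 - X - C a : R[X]).Monic := by monicity!
  rw [hmonic.irreducible_iff_roots_eq_zero_of_degree_le_three hdeg.ge (by lia),
    Multiset.eq_zero_iff_forall_notMem]
  simp [mem_roots hmonic.ne_zero, sub_eq_zero]

theorem isSquare_one_add_four_mul_sq_sub_self (x : R) : IsSquare (1 + 4 * (x ^ 2 - x)) :=
  ⟨2 * x - 1, by ring⟩

theorem irreducible_X_sq_sub_X_sub_C_of_not_isSquare [IsDomain R] {a : R}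
    (ha : ¬IsSquare (1 + 4 * a)) : Irreducible (X ^ 2 - X - C a : R[X]) :=
  irreducible_X_sq_sub_X_sub_C_iff.2 fun x hx ↦
    ha (hx ▸ isSquare_one_add_four_mul_sq_sub_self x)

end Quadratic

theorem exists_forall_sq_sub_self_ne (R : Type*) [Ring R] [Nontrivial R] [Finite R] :
    ∃ a : R, ∀ x : R, x ^ 2 - x ≠ a := by
  have hinj : ¬Function.Injective fun x : R ↦ x ^ 2 - x := fun h ↦
    zero_ne_one (h (by simp : (0 : R) ^ 2 - 0 = 1 ^ 2 - 1))
  simpa [Finite.injective_iff_surjective, Function.Surjective] using hinj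

theorem isSquare_sq_add_sq_of_forall_isSquare_one_add_sq {K : Type*} [Field K]
    (h : ∀ v : K, IsSquare (1 + v ^ 2)) (a b : K) : IsSquare (a ^ 2 + b ^ 2) := by
  obtain rfl | ha := eq_or_ne a 0
  · simpa using IsSquare.sq b
  · have hfactor : a ^ 2 + b ^ 2 = a ^ 2 * (1 + (b / a) ^ 2) := by field_simp
    exact hfactor ▸ (IsSquare.sq a).mul (h (b / a))

section FiniteField

variable {F : Type*} [Field F] [Finite F]

theorem exists_sq_add_sq_eq (a : F) : ∃ x y : F, x ^ 2 + y ^ 2 = a := by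
  have := Fintype.ofFinite F
  by_cases hF : ringChar F = 2
  · obtain ⟨x, rfl⟩ := FiniteField.isSquare_of_char_two hF a
    exact ⟨x, 0, by ring⟩
  · obtain ⟨x, y, hxy⟩ := FiniteField.exists_root_sum_quadratic
      (degree_X_pow (R := F) 2) (degree_X_pow_sub_C two_pos a)
      (FiniteField.odd_card_of_char_ne_two hF)
    simp only [eval_sub, eval_pow, eval_X, eval_C] at hxy
    exact ⟨x, y, by linear_combination hxy⟩

theorem exists_not_isSquare_one_add_sq (hF : ringChar F ≠ 2) :
    ∃ v : F, ¬IsSquare (1 + v ^ 2) := by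
  by_contra! h
  obtain ⟨a, ha⟩ := FiniteField.exists_nonsquare hF
  obtain ⟨x, y, rfl⟩ := exists_sq_add_sq_eq a
  exact ha (isSquare_sq_add_sq_of_forall_isSquare_one_add_sq h x y)

end FiniteField

/-- For every finite field `F` there exists `u ∈ F` such that the
polynomial `X² − X − u²` is irreducible over `F`. -/
theorem exists_irreducible_X_sq_sub_X_sub_sq (F : Type*) [Field F] [Finite F] :
    ∃ u : F, Irreducible (X ^ 2 - X - C (u ^ 2) : F[X]) := by
  by_cases hF : ringChar F = 2
  · obtain ⟨a, ha⟩ := exists_forall_sq_sub_self_ne F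
    obtain ⟨u, rfl⟩ := (FiniteField.isSquare_of_char_two hF a).exists_sq
    exact ⟨u, irreducible_X_sq_sub_X_sub_C_iff.2 ha⟩
  · obtain ⟨v, hv⟩ := exists_not_isSquare_one_add_sq hF
    have h2 : (2 : F) ≠ 0 := Ring.two_ne_zero hF
    have hdisc : 1 + 4 * (v / 2) ^ 2 = 1 + v ^ 2 := by field_simp; ring
    exact ⟨v / 2, irreducible_X_sq_sub_X_sub_C_of_not_isSquare (hdisc ▸ hv)⟩
end

section
/- Let R be an integral domain whose field of fractions is a number field. Then for every nonzero ideal I of R, the quotient ring R/I is finite. -/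
/-!
Multiplication by a nonzero scalar `a` on a torsion-free module of finite rank has the same index
`[L : aL] = [F : aF]` on finitely generated submodules `F ≤ L` that differ by a finite index, since
multiplication by `a` carries `F ≤ L` onto `aF ≤ aL` and so `[aL : aF] = [L : F]`. Fixing a
finitely generated `F` of full rank in `M`, the index `[L : aL]` is therefore the same for all
finitely generated `L ≥ F`, which forces `M / aM` to be finite even when `M` is not finitely
generated. A nonzero ideal `I` of `R` has the same rank as `R`, so it contains a nonzero scalar
`a`, and `R / I` is a quotient of `R / aR`.
-/

open scoped Pointwise nonZeroDivisors Cardinal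

section AddGroup

variable {G : Type*} [AddGroup G]

theorem relIndex_map_self_eq_of_injective {f : G →+ G} (hf : Function.Injective f)
    {H K : AddSubgroup G} (hHK : H ≤ K) (hH : H.map f ≤ H) (hK : K.map f ≤ K)
    (hindex : H.relIndex K ≠ 0) :
    (K.map f).relIndex K = (H.map f).relIndex H := by
  refine mul_left_cancel₀ hindex ?_
  calc H.relIndex K * (K.map f).relIndex K
      = (H.map f).relIndex (K.map f) * (K.map f).relIndex K := by
        rw [AddSubgroup.relIndex_map_map_of_injective H K hf]
    _ = (H.map f).relIndex K :=
        AddSubgroup.relIndex_mul_relIndex _ _ _ (AddSubgroup.map_mono hHK) hK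
    _ = (H.map f).relIndex H * H.relIndex K :=
        (AddSubgroup.relIndex_mul_relIndex _ _ _ hH hHK).symm
    _ = H.relIndex K * (H.map f).relIndex H := mul_comm _ _

theorem finiteIndex_of_forall_finset_relIndex_le {H : AddSubgroup G} (n : ℕ)
    (h : ∀ S : Finset G, ∃ K : AddSubgroup G,
      (S : Set G) ⊆ K ∧ H.relIndex K ≠ 0 ∧ H.relIndex K ≤ n) :
    H.FiniteIndex := by
  classical
  suffices Finite (G ⧸ H) from AddSubgroup.finiteIndex_of_finite_quotient
  by_contra hinf
  have : Infinite (G ⧸ H) := not_finite_iff_infinite.mp hinf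
  obtain ⟨T, hT⟩ := Infinite.exists_subset_card_eq (G ⧸ H) (n + 1)
  obtain ⟨K, hTK, hK₀, hKn⟩ := h (T.image Quotient.out)
  have hmem (q : T) : q.1.out ∈ K := hTK (Finset.mem_image_of_mem _ q.2)
  let toQuotient (q : T) : K ⧸ H.addSubgroupOf K := (⟨q.1.out, hmem q⟩ : K)
  have hinj : Function.Injective toQuotient := fun p q hpq ↦ by
    have hsub : -p.1.out + q.1.out ∈ H :=
      AddSubgroup.mem_addSubgroupOf.mp (QuotientAddGroup.eq.mp hpq)
    exact Subtype.ext (by simpa using QuotientAddGroup.eq.mpr hsub)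
  have : Finite (K ⧸ H.addSubgroupOf K) := Nat.finite_of_card_ne_zero hK₀
  have hcard : T.card ≤ H.relIndex K := by
    simpa [AddSubgroup.relIndex, AddSubgroup.index] using
      Nat.card_le_card_of_injective toQuotient hinj
  omega

end AddGroup

section Module

variable {A M : Type*} [CommRing A] [AddCommGroup M] [Module A M]

theorem relIndex_smul_self_eq_of_isSMulRegular {a : A} (ha : IsSMulRegular M a)
    {F L : Submodule A M} (hFL : F ≤ L)
    (hindex : F.toAddSubgroup.relIndex L.toAddSubgroup ≠ 0) :
    (a • L).toAddSubgroup.relIndex L.toAddSubgroup =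
      (a • F).toAddSubgroup.relIndex F.toAddSubgroup :=
  relIndex_map_self_eq_of_injective (f := DistribSMul.toAddMonoidHom M a) ha hFL
    (Submodule.smul_le_self_of_tower a F) (Submodule.smul_le_self_of_tower a L) hindex

theorem rank_lt_aleph0_of_injective (F : Type*) {V : Type*} [Field F] [Algebra A F]
    [IsFractionRing A F] [AddCommGroup V] [Module A V] [Module F V] [IsScalarTower A F V]
    [FiniteDimensional F V] {f : M →ₗ[A] V} (hf : Function.Injective f) :
    Module.rank A M < ℵ₀ := by
  have hV : Module.rank A V < ℵ₀ := by
    rw [← IsFractionRing.rank_right_eq A F V]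
    exact Module.rank_lt_aleph0 F V
  exact Cardinal.lift_lt_aleph0.mp
    ((LinearMap.lift_rank_le_of_injective f hf).trans_lt (Cardinal.lift_lt_aleph0.mpr hV))

section Rank

variable [IsDomain A]

theorem isTorsion_quotient_of_rank_le {N : Submodule A M} (hM : Module.rank A M < ℵ₀)
    (hN : Module.rank A M ≤ Module.rank A N) :
    Module.IsTorsion A (M ⧸ N) := by
  rw [← Module.rank_eq_zero_iff_isTorsion]
  have hadd : Module.rank A (M ⧸ N) + Module.rank A N = 0 + Module.rank A N := by
    rw [rank_quotient_add_rank_of_isDomain, zero_add, hN.antisymm N.rank_le]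
  exact Cardinal.eq_of_add_eq_add_right hadd (N.rank_le.trans_lt hM)

theorem exists_fg_isTorsion_quotient (hM : Module.rank A M < ℵ₀) :
    ∃ F : Submodule A M, F.FG ∧ Module.IsTorsion A (M ⧸ F) := by
  obtain ⟨s, hs, hli⟩ := exists_set_linearIndependent A M
  have hfin : s.Finite := Cardinal.lt_aleph0_iff_set_finite.mp (hs ▸ hM)
  exact ⟨.span A s, Submodule.fg_span hfin,
    isTorsion_quotient_of_rank_le hM (by rw [rank_span_set hli, hs])⟩

theorem isTorsion_quotient_ideal {R : Type*} [CommRing R] [IsDomain R] [Algebra A R]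
    (hR : Module.rank A R < ℵ₀) {I : Ideal R} (hI : I ≠ ⊥) :
    Module.IsTorsion A (R ⧸ I) := by
  obtain ⟨x, hxI, hx₀⟩ := Submodule.exists_mem_ne_zero_of_ne_bot hI
  let mulX : R →ₗ[A] I.restrictScalars A :=
    (LinearMap.mulRight A x).codRestrict _ fun r ↦ I.mul_mem_left r hxI
  have hinj : Function.Injective mulX := fun r s h ↦
    mul_right_cancel₀ hx₀ (congrArg Subtype.val h)
  exact isTorsion_quotient_of_rank_le (N := I.restrictScalars A) hR
    (LinearMap.rank_le_of_injective mulX hinj)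

end Rank

section HasFiniteQuotients

variable [Ring.HasFiniteQuotients A]

theorem finite_of_isTorsion [Module.Finite A M] (hM : Module.IsTorsion A M) : Finite M := by
  cases subsingleton_or_nontrivial A
  · exact Module.finite_of_finite A
  obtain ⟨c, hc, hc₀⟩ := Submodule.annihilator_top_inter_nonZeroDivisors hM
  have hann : (⊤ : Submodule A M).annihilator ≠ ⊥ :=
    (Submodule.ne_bot_iff _).mpr ⟨c, hc, nonZeroDivisors.ne_zero hc₀⟩
  have := Ring.HasFiniteQuotients.finiteQuotient hann
  have hquot : Finite (M ⧸ (⊤ : Submodule A M).annihilator • (⊤ : Submodule A M)) :=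
    Submodule.finite_quotient_smul _ Module.Finite.fg_top
  rw [Submodule.annihilator_smul] at hquot
  exact .of_equiv _ (Submodule.quotEquivOfEqBot (⊥ : Submodule A M) rfl).toEquiv

theorem relIndex_ne_zero_of_fg {F L : Submodule A M} (hL : L.FG)
    (htors : ∀ x ∈ L, ∃ c : A⁰, c • x ∈ F) :
    F.toAddSubgroup.relIndex L.toAddSubgroup ≠ 0 := by
  have : Module.Finite A (L.map F.mkQ) := .of_fg (hL.map F.mkQ)
  have himage : Module.IsTorsion A (L.map F.mkQ) := by
    rintro ⟨_, x, hx, rfl⟩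
    obtain ⟨c, hc⟩ := htors x hx
    exact ⟨c, Subtype.ext ((Submodule.Quotient.mk_eq_zero F).mpr hc)⟩
  have : Finite (L.map F.mkQ) := finite_of_isTorsion himage
  have hker : F.mkQ.toAddMonoidHom.ker = F.toAddSubgroup := by ext; simp
  rw [← hker, AddSubgroup.relIndex_ker]
  exact (Nat.card_pos (α := L.map F.mkQ)).ne'

theorem finiteIndex_smul_top_of_isTorsion_quotient {a : A} (ha : a ∈ A⁰)
    (haM : IsSMulRegular M a) {F : Submodule A M} (hF : F.FG)
    (hMF : Module.IsTorsion A (M ⧸ F)) :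
    (a • (⊤ : Submodule A M)).toAddSubgroup.FiniteIndex := by
  refine finiteIndex_of_forall_finset_relIndex_le
    ((a • F).toAddSubgroup.relIndex F.toAddSubgroup) fun S ↦ ?_
  let L : Submodule A M := F ⊔ .span A S
  have hL : L.FG := hF.sup (Submodule.fg_span S.finite_toSet)
  have haL : (a • L).toAddSubgroup.relIndex L.toAddSubgroup ≠ 0 :=
    relIndex_ne_zero_of_fg hL fun x hx ↦
      ⟨⟨a, ha⟩, Submodule.smul_mem_pointwise_smul x a L hx⟩
  have hFL : F.toAddSubgroup.relIndex L.toAddSubgroup ≠ 0 :=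
    relIndex_ne_zero_of_fg hL fun x _ ↦ by
      obtain ⟨c, hc⟩ := @hMF (F.mkQ x)
      exact ⟨c, (Submodule.Quotient.mk_eq_zero F).mp hc⟩
  have hle : (a • L).toAddSubgroup ≤ (a • (⊤ : Submodule A M)).toAddSubgroup :=
    Submodule.map_mono le_top
  refine ⟨L.toAddSubgroup, Submodule.subset_span.trans (le_sup_right (a := F)),
    mt (AddSubgroup.relIndex_eq_zero_of_le_left hle) haL, ?_⟩
  rw [← relIndex_smul_self_eq_of_isSMulRegular haM le_sup_left hFL]
  exact AddSubgroup.relIndex_le_of_le_left hle haL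

end HasFiniteQuotients

end Module

theorem quotient_by_nonzero_ideal_finite_general {A R : Type*} [CommRing A]
    [Ring.HasFiniteQuotients A] [CommRing R] [IsDomain R] [Algebra A R] [FaithfulSMul A R]
    (hR : Module.rank A R < ℵ₀) {I : Ideal R} (hI : I ≠ ⊥) :
    Finite (R ⧸ I) := by
  have : IsDomain A := (FaithfulSMul.algebraMap_injective A R).isDomain
  have hRI : Module.IsTorsion A (R ⧸ I) := isTorsion_quotient_ideal hR hI
  obtain ⟨⟨a, ha⟩, haI⟩ := @hRI 1
  have haR : IsSMulRegular R a := .of_ne_zero (nonZeroDivisors.ne_zero ha)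
  obtain ⟨F, hF, hRF⟩ := exists_fg_isTorsion_quotient hR
  have := finiteIndex_smul_top_of_isTorsion_quotient ha haR hF hRF
  have hle : (a • (⊤ : Submodule A R)).toAddSubgroup ≤ (I.restrictScalars A).toAddSubgroup := by
    rintro _ ⟨r, -, rfl⟩
    have hmem : a • (1 : R) ∈ I := Ideal.Quotient.eq_zero_iff_mem.mp haI
    simpa using I.mul_mem_right r hmem
  have := AddSubgroup.finiteIndex_of_le hle
  exact (I.restrictScalars A).toAddSubgroup.finite_quotient_of_finiteIndex

/-- If `R` is an integral domain whose fraction field is a number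
field `K`, then `R/I` is finite for every nonzero ideal `I` of `R`. -/
theorem quotient_by_nonzero_ideal_finite
    (R K : Type*) [CommRing R] [IsDomain R] [Field K] [NumberField K]
    [Algebra R K] [IsFractionRing R K]
    (I : Ideal R) (hI : I ≠ ⊥) :
    Finite (R ⧸ I) := by
  have : CharZero R := .of_module K
  exact quotient_by_nonzero_ideal_finite_general (rank_lt_aleph0_of_injective ℚ
    (f := (algebraMap R K).toIntAlgHom.toLinearMap) (IsFractionRing.injective R K)) hI
end
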